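/- arXiv:2010.01874 — 7 statements merged into one kernel-verified Lean document; each statement's English description precedes it below -/
import Mathlib

section
/- Consider the diversity-preserving UCB algorithm run on any bandit problem ν = (ν_1,…,ν_K) whose arm distributions all belong to D_{[0,1]} (probability measures on [0,1]), where the diversity-preserving set P is a finite polytope and at least one p ∈ Ext(P) satisfies Δ(p) > 0. Then for all horizons T ≥ 1, the expected regret satisfies R_T(ν) ≤ (24·K·(ln(1+T))² + K + 2)/Δ. -/
/-!
Write `Δ(p) = M - ⟨p, μ⟩`. Since every nonzero gap of an extreme point is at least `Δ`, one has
`Δ · Δ(p_t) ≤ Δ(p_t)²`, so it suffices to bound the expected sum of the squared gaps.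

If every empirical mean is within its confidence radius `sqrt (2 log (t-1) / N_a(t-1))` of the
true mean, then the indices dominate the means, and the maximality of `p_t` gives
`M ≤ ⟨p_t, U(t-1)⟩`. Hence `Δ(p_t)` is at most the `p_t`-average of twice the radii
(`ucbIndex_bounds`, `le_of_extreme`), and by Jensen
`Δ(p_t)² ≤ 8 log T ∑_a p_{t,a} / max (N_a(t-1), 1)` (`sq_gap_le`). In expectation `p_{t,a}` may be
replaced by `1{A_t = a}`, and the resulting sum over `t` is, along each path, at most
`1 + H_{T-1} ≤ 2 + log T` (`sum_pull_div_le`). This yields the term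
`8 K log T (2 + log T) ≤ 24 K log² (1 + T)`.

The first two rounds, in which the radii are uninformative, contribute the constant `2`.
The rounds in which some empirical mean is outside its radius contribute at most
`K ∑_{k ≥ 2} 2 / k³ ≤ K`. For this, Hoeffding's lemma makes
`exp (∑_{s ≤ t} 1{A_s = a} (l (Y_s - μ_a) - l² / 8))` a supermartingale
(`lintegral_expSum_le_one`), and Markov's inequality with a union bound over the value of `N_a(t)`
and over the sign of the deviation gives the probability `2 / t³` (`badSet_prob`). The random
number of pulls needs no optional skipping argument, because `l` is chosen for each value
of `N_a(t)` separately.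
-/

open MeasureTheory Finset

noncomputable section

namespace DivBanditUCB

/-- The inner product `⟨p, q⟩ = ∑ a p_a q_a` on `ℝ^K`. -/
def dot {K : ℕ} (p q : Fin K → ℝ) : ℝ := ∑ a, p a * q a

/-- `N_a(t)`: the number of times arm `a` was pulled during rounds `1, …, t`. -/
def pulls {Ω : Type*} {K : ℕ} (A : ℕ → Ω → Fin K) (a : Fin K) (t : ℕ) (ω : Ω) : ℕ :=
  ∑ s ∈ Finset.Icc 1 t, if A s ω = a then 1 else 0

/-- `μ̂_a(t)`: the empirical mean of the rewards obtained when arm `a` was played,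
with the convention `μ̂_a(t) = 1` when `N_a(t) = 0`. -/
def empMean {Ω : Type*} {K : ℕ} (A : ℕ → Ω → Fin K) (Y : ℕ → Ω → ℝ) (a : Fin K) (t : ℕ)
    (ω : Ω) : ℝ :=
  if pulls A a t ω = 0 then 1
  else (∑ s ∈ Finset.Icc 1 t, if A s ω = a then Y s ω else 0) / (pulls A a t ω : ℝ)

/-- The upper confidence bound `U_a(t) = μ̂_a(t) + sqrt(2 log t / max{N_a(t), 1})`,
with `U_a(0) = 1`. -/
def ucbIndex {Ω : Type*} {K : ℕ} (A : ℕ → Ω → Fin K) (Y : ℕ → Ω → ℝ) (a : Fin K) (t : ℕ)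
    (ω : Ω) : ℝ :=
  if t = 0 then 1
  else empMean A Y a t ω + Real.sqrt (2 * Real.log t / (max (pulls A a t ω) 1 : ℕ))

/-- The σ-algebra generated by the history `A_1, Y_1, …, A_t, Y_t`. -/
def hist {Ω : Type*} {K : ℕ} (A : ℕ → Ω → Fin K) (Y : ℕ → Ω → ℝ) (t : ℕ) :
    MeasurableSpace Ω :=
  ⨆ s ∈ Set.Icc 1 t,
    (MeasurableSpace.comap (A s) inferInstance ⊔ MeasurableSpace.comap (Y s) inferInstance)

/-! ### Histories and measurability -/

lemma hist_le {Ω : Type*} [m0 : MeasurableSpace Ω] {K : ℕ} {A : ℕ → Ω → Fin K} {Y : ℕ → Ω → ℝ}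
    (hA : ∀ t, Measurable (A t)) (hY : ∀ t, Measurable (Y t)) (t : ℕ) : hist A Y t ≤ m0 := by
  refine iSup₂_le fun s _ => sup_le ?_ ?_
  · exact (hA s).comap_le
  · exact (hY s).comap_le

lemma measurable_hist_arm {Ω : Type*} {K : ℕ} {A : ℕ → Ω → Fin K} {Y : ℕ → Ω → ℝ}
    {s t : ℕ} (hs : s ∈ Finset.Icc 1 t) : Measurable[hist A Y t] (A s) := by
  rw [measurable_iff_comap_le]
  have hs' : s ∈ Set.Icc 1 t := by simpa using hs
  exact le_sup_left.trans (le_iSup₂_of_le s hs' le_rfl)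

lemma measurable_hist_reward {Ω : Type*} {K : ℕ} {A : ℕ → Ω → Fin K} {Y : ℕ → Ω → ℝ}
    {s t : ℕ} (hs : s ∈ Finset.Icc 1 t) : Measurable[hist A Y t] (Y s) := by
  rw [measurable_iff_comap_le]
  have hs' : s ∈ Set.Icc 1 t := by simpa using hs
  exact le_sup_right.trans (le_iSup₂_of_le s hs' le_rfl)

lemma measurable_hist_sum {Ω : Type*} {K : ℕ} {A : ℕ → Ω → Fin K} {Y : ℕ → Ω → ℝ}
    (a : Fin K) (t : ℕ) {g : ℝ → ℝ} (hg : Measurable g) :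
    Measurable[hist A Y t] fun ω => ∑ s ∈ Finset.Icc 1 t, if A s ω = a then g (Y s ω) else 0 := by
  refine Finset.measurable_fun_sum _ fun s hs => ?_
  refine Measurable.ite ?_ ?_ measurable_const
  · exact measurable_hist_arm hs (measurableSet_singleton a)
  · exact hg.comp (measurable_hist_reward hs)

lemma measurable_hist_pulls {Ω : Type*} {K : ℕ} {A : ℕ → Ω → Fin K} {Y : ℕ → Ω → ℝ}
    (a : Fin K) (t : ℕ) : Measurable[hist A Y t] (pulls A a t) := by
  unfold pulls
  refine Finset.measurable_fun_sum _ fun s hs => ?_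
  refine Measurable.ite ?_ measurable_const measurable_const
  exact measurable_hist_arm hs (measurableSet_singleton a)

/-! ### The exponential supermartingale -/

/-- If, on the event `E`, the variable `Y` has law `ν` independently of `m`, then the
expectation over `E` of an `m`-measurable weight times a function of `Y` factorizes. -/
lemma setLIntegral_mul_factor {Ω : Type*} {m m0 : MeasurableSpace Ω} (hm : m ≤ m0)
    (P : Measure Ω) [IsFiniteMeasure P] {E : Set Ω}
    {Y : Ω → ℝ} (hY : Measurable[m0] Y)
    (ν : Measure ℝ)
    (h : ∀ s, MeasurableSet s → ∀ B, MeasurableSet[m] B →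
      P (B ∩ (E ∩ Y ⁻¹' s)) = ν s * P (B ∩ E))
    {G : Ω → ENNReal} (hG : Measurable[m] G) {f : ℝ → ENNReal} (hf : Measurable f) :
    ∫⁻ ω in E, G ω * f (Y ω) ∂P = (∫⁻ ω in E, G ω ∂P) * ∫⁻ x, f x ∂ν := by
  have hG0 : Measurable[m0] G := hG.mono hm le_rfl
  have key : ((P.restrict E).withDensity G).map Y = (∫⁻ ω in E, G ω ∂P) • ν := by
    ext s hs
    have htrim : (P.restrict (E ∩ Y ⁻¹' s)).trim hm = ν s • (P.restrict E).trim hm := by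
      refine @Measure.ext _ m _ _ fun B hB => ?_
      rw [Measure.smul_apply, trim_measurableSet_eq hm hB, trim_measurableSet_eq hm hB,
        Measure.restrict_apply (hm _ hB), Measure.restrict_apply (hm _ hB), h s hs B hB,
        smul_eq_mul]
    rw [Measure.map_apply hY hs, withDensity_apply _ (hY hs), Measure.restrict_restrict (hY hs),
      Set.inter_comm, ← lintegral_trim hm hG, htrim, lintegral_smul_measure, lintegral_trim hm hG,
      Measure.smul_apply, smul_eq_mul, smul_eq_mul, mul_comm]
  calc ∫⁻ ω in E, G ω * f (Y ω) ∂P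
      = ∫⁻ ω, f (Y ω) ∂((P.restrict E).withDensity G) := by
        exact (lintegral_withDensity_eq_lintegral_mul _ hG0 (hf.comp hY)).symm
    _ = ∫⁻ x, f x ∂(((P.restrict E).withDensity G).map Y) := (lintegral_map hf hY).symm
    _ = _ := by rw [key, lintegral_smul_measure, smul_eq_mul]

/-- Hoeffding's lemma for a law on `[0, 1]`. -/
lemma lintegral_exp_le_one (ν : Measure ℝ) [IsProbabilityMeasure ν]
    (hν : ν (Set.Icc (0 : ℝ) 1)ᶜ = 0) (l : ℝ) :
    ∫⁻ x, ENNReal.ofReal (Real.exp (l * (x - ∫ y, y ∂ν) - l ^ 2 / 8)) ∂ν ≤ 1 := by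
  have hs := ProbabilityTheory.hasSubgaussianMGF_of_mem_Icc (μ := ν) (X := fun x => x)
    (a := 0) (b := 1) aemeasurable_id (by rw [ae_iff]; exact hν)
  have hint := hs.integrable_exp_mul l
  have hle := hs.mgf_le l
  simp only [Real.exp_sub]
  rw [← ofReal_integral_eq_lintegral_ofReal (hint.div_const _)
    (Filter.Eventually.of_forall fun x => by positivity), integral_div]
  rw [ENNReal.ofReal_le_one, div_le_one (Real.exp_pos _)]
  refine hle.trans (le_of_eq ?_)
  congr 1
  simp
  ring

section
variable {Ω : Type*} [m0 : MeasurableSpace Ω] {K : ℕ} (P : Measure Ω) [IsProbabilityMeasure P]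
  (ν : Fin K → Measure ℝ) {A : ℕ → Ω → Fin K} {Y : ℕ → Ω → ℝ}

/-- On `{A_t = a}`, the reward `Y_t` has law `ν_a` independently of the past. -/
lemma reward_indep (hνprob : ∀ a, IsProbabilityMeasure (ν a))
    (hA : ∀ t, Measurable (A t)) (hY : ∀ t, Measurable (Y t))
    (hreward : ∀ t, 1 ≤ t → ∀ s : Set ℝ, MeasurableSet s →
      (P[({ω | Y t ω ∈ s}).indicator (fun _ => (1 : ℝ)) |
          hist A Y (t - 1) ⊔ MeasurableSpace.comap (A t) inferInstance])
        =ᵐ[P] fun ω => ((ν (A t ω)) s).toReal)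
    (a : Fin K) (t : ℕ) (ht : 1 ≤ t) (s : Set ℝ) (hs : MeasurableSet s)
    (B : Set Ω) (hB : MeasurableSet[hist A Y (t - 1)] B) :
    P (B ∩ ({ω | A t ω = a} ∩ Y t ⁻¹' s)) = ν a s * P (B ∩ {ω | A t ω = a}) := by
  have hm : hist A Y (t - 1) ⊔ MeasurableSpace.comap (A t) inferInstance ≤ m0 :=
    sup_le (hist_le hA hY _) (hA t).comap_le
  set m := hist A Y (t - 1) ⊔ MeasurableSpace.comap (A t) inferInstance with hmdef
  have hE : MeasurableSet[m] {ω | A t ω = a} :=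
    (le_sup_right : _ ≤ m) _ ⟨{a}, measurableSet_singleton a, rfl⟩
  have hBE : MeasurableSet[m] (B ∩ {ω | A t ω = a}) :=
    MeasurableSet.inter ((le_sup_left : _ ≤ m) _ hB) hE
  have hYs : MeasurableSet[m0] {ω | Y t ω ∈ s} := hY t hs
  have h1 := setIntegral_condExp (μ := P) hm
    (f := ({ω | Y t ω ∈ s}).indicator (fun _ => (1 : ℝ)))
    ((integrable_const (1 : ℝ)).indicator hYs) hBE
  have h2 : ∫ ω in B ∩ {ω | A t ω = a},
      (P[({ω | Y t ω ∈ s}).indicator (fun _ => (1 : ℝ)) | m]) ω ∂P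
      = ∫ ω in B ∩ {ω | A t ω = a}, (ν a s).toReal ∂P := by
    refine setIntegral_congr_ae (hm _ hBE) ?_
    filter_upwards [hreward t ht s hs] with ω hω hmem
    rw [hω, hmem.2]
  rw [h2, setIntegral_const, setIntegral_indicator hYs, setIntegral_const] at h1
  simp only [smul_eq_mul, mul_one, Measure.real] at h1
  rw [← ENNReal.toReal_mul, ENNReal.toReal_eq_toReal_iff' (by finiteness) (by finiteness)] at h1
  rw [mul_comm, h1, Set.inter_assoc]
  rfl

/-- `exp (∑_{s ≤ t} 1{A_s = a} (l (Y_s - μ_a) - l² / 8))` has expectation at most `1`. -/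
lemma lintegral_expSum_le_one (hνprob : ∀ a, IsProbabilityMeasure (ν a))
    (hνsupp : ∀ a, (ν a) (Set.Icc (0 : ℝ) 1)ᶜ = 0)
    (hA : ∀ t, Measurable (A t)) (hY : ∀ t, Measurable (Y t))
    (hreward : ∀ t, 1 ≤ t → ∀ s : Set ℝ, MeasurableSet s →
      (P[({ω | Y t ω ∈ s}).indicator (fun _ => (1 : ℝ)) |
          hist A Y (t - 1) ⊔ MeasurableSpace.comap (A t) inferInstance])
        =ᵐ[P] fun ω => ((ν (A t ω)) s).toReal)
    (a : Fin K) (l : ℝ) (t : ℕ) :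
    ∫⁻ ω, ENNReal.ofReal (Real.exp (∑ s ∈ Finset.Icc 1 t,
      if A s ω = a then l * (Y s ω - ∫ y, y ∂(ν a)) - l ^ 2 / 8 else 0)) ∂P ≤ 1 := by
  induction t with
  | zero => simp
  | succ t ih =>
    refine le_trans ?_ ih
    set c := ∫ y, y ∂(ν a) with hc
    set G : Ω → ENNReal := fun ω => ENNReal.ofReal (Real.exp (∑ s ∈ Finset.Icc 1 t,
      if A s ω = a then l * (Y s ω - c) - l ^ 2 / 8 else 0)) with hGdef
    set f : ℝ → ENNReal := fun x => ENNReal.ofReal (Real.exp (l * (x - c) - l ^ 2 / 8)) with hfdef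
    have hf : Measurable f := by fun_prop
    have hG : Measurable[hist A Y t] G :=
      ENNReal.measurable_ofReal.comp (Real.measurable_exp.comp
        (measurable_hist_sum (g := fun x => l * (x - c) - l ^ 2 / 8) a t (by fun_prop)))
    have hE : MeasurableSet {ω | A (t + 1) ω = a} := hA (t + 1) (measurableSet_singleton a)
    rw [← lintegral_add_compl _ hE, ← lintegral_add_compl G hE]
    gcongr ?_ + ?_
    · calc _ = ∫⁻ ω in {ω | A (t + 1) ω = a}, G ω * f (Y (t + 1) ω) ∂P := by
            refine setLIntegral_congr_fun hE fun ω hω => ?_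
            have hω' : A (t + 1) ω = a := hω
            simp only [hGdef, hfdef]
            rw [Finset.sum_Icc_succ_top (by omega), if_pos hω', Real.exp_add,
              ENNReal.ofReal_mul (Real.exp_pos _).le]
        _ = (∫⁻ ω in {ω | A (t + 1) ω = a}, G ω ∂P) * ∫⁻ x, f x ∂(ν a) :=
            setLIntegral_mul_factor (hist_le hA hY t) P (hY (t + 1)) (ν a)
              (fun s hs B hB => reward_indep P ν hνprob hA hY hreward a (t + 1) (by omega) s hs B hB)
              hG hf
        _ ≤ (∫⁻ ω in {ω | A (t + 1) ω = a}, G ω ∂P) * 1 := by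
            gcongr
            exact lintegral_exp_le_one (ν a) (hνsupp a) l
        _ = _ := mul_one _
    · refine le_of_eq (setLIntegral_congr_fun hE.compl fun ω hω => ?_)
      have hω' : A (t + 1) ω ≠ a := hω
      simp only [hGdef]
      rw [Finset.sum_Icc_succ_top (by omega), if_neg hω', add_zero]

end

/-! ### Concentration of the empirical means -/

/-- The event that the empirical mean of arm `a` at time `t` deviates from `c` by at least the
confidence radius `sqrt (2 log t / N_a(t))`, multiplied through by `N_a(t) ≥ 1`. -/
def badSet {Ω : Type*} {K : ℕ} (A : ℕ → Ω → Fin K) (Y : ℕ → Ω → ℝ) (c : ℝ) (a : Fin K) (t : ℕ) :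
    Set Ω :=
  {ω | 1 ≤ pulls A a t ω ∧ (pulls A a t ω : ℝ) * Real.sqrt (2 * Real.log t / pulls A a t ω)
    ≤ |∑ s ∈ Finset.Icc 1 t, if A s ω = a then Y s ω - c else 0|}

lemma pulls_le {Ω : Type*} {K : ℕ} (A : ℕ → Ω → Fin K) (a : Fin K) (t : ℕ) (ω : Ω) :
    pulls A a t ω ≤ t := by
  unfold pulls
  calc _ ≤ ∑ s ∈ Finset.Icc 1 t, 1 := Finset.sum_le_sum fun s _ => by split_ifs <;> simp
    _ = t := by simp

lemma pulls_cast {Ω : Type*} {K : ℕ} (A : ℕ → Ω → Fin K) (a : Fin K) (t : ℕ) (ω : Ω) (c : ℝ) :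
    ∑ s ∈ Finset.Icc 1 t, (if A s ω = a then c else 0) = (pulls A a t ω : ℝ) * c := by
  unfold pulls
  push_cast
  rw [Finset.sum_mul]
  exact Finset.sum_congr rfl fun s _ => by split_ifs <;> simp

lemma measurableSet_badSet {Ω : Type*} [m0 : MeasurableSpace Ω] {K : ℕ} {A : ℕ → Ω → Fin K}
    {Y : ℕ → Ω → ℝ} (hA : ∀ t, Measurable (A t)) (hY : ∀ t, Measurable (Y t)) (c : ℝ)
    (a : Fin K) (t : ℕ) : MeasurableSet (badSet A Y c a t) := by
  have h1 : Measurable (pulls A a t) := (measurable_hist_pulls (Y := Y) a t).mono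
    (hist_le hA hY t) le_rfl
  have h2 : Measurable fun ω => ∑ s ∈ Finset.Icc 1 t, if A s ω = a then Y s ω - c else 0 :=
    (measurable_hist_sum (g := fun x => x - c) a t (by fun_prop)).mono (hist_le hA hY t) le_rfl
  have h3 : Measurable fun ω => (pulls A a t ω : ℝ) := measurable_from_nat.comp h1
  have h4 : Measurable fun ω =>
      (pulls A a t ω : ℝ) * Real.sqrt (2 * Real.log t / pulls A a t ω) := by fun_prop
  exact (measurableSet_le measurable_const h1).inter
    (measurableSet_le h4 ((measurable_norm (α := ℝ)).comp h2))

/-- A union bound over the value `n` of `N_a(t)` and the two signs: on `{N_a(t) = n}` the event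
forces the exponential process with parameter `± 4 sqrt (2 log t / n)` to be at least `t ^ 4`. -/
lemma badSet_prob {Ω : Type*} [m0 : MeasurableSpace Ω] {K : ℕ} (P : Measure Ω)
    [IsProbabilityMeasure P] {A : ℕ → Ω → Fin K} {Y : ℕ → Ω → ℝ}
    (hA : ∀ t, Measurable (A t)) (hY : ∀ t, Measurable (Y t)) (c : ℝ) (a : Fin K)
    (hexp : ∀ l t, ∫⁻ ω, ENNReal.ofReal (Real.exp (∑ s ∈ Finset.Icc 1 t,
      if A s ω = a then l * (Y s ω - c) - l ^ 2 / 8 else 0)) ∂P ≤ 1)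
    (t : ℕ) (ht : 1 ≤ t) : P.real (badSet A Y c a t) ≤ 2 / (t : ℝ) ^ 3 := by
  have ht0 : (0 : ℝ) < t := by exact_mod_cast ht
  have hlog : 0 ≤ Real.log t := Real.log_nonneg (by exact_mod_cast ht)
  set X : ℝ → Ω → ℝ := fun l ω => ∑ s ∈ Finset.Icc 1 t,
      if A s ω = a then l * (Y s ω - c) - l ^ 2 / 8 else 0 with hX
  set E : ℝ → Set Ω := fun l => {ω | ENNReal.ofReal ((t : ℝ) ^ 4) ≤ ENNReal.ofReal (Real.exp (X l ω))}
    with hE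
  have hPE : ∀ l, P.real (E l) ≤ 1 / (t : ℝ) ^ 4 := by
    intro l
    have hmeas : Measurable (X l) :=
      (measurable_hist_sum (g := fun x => l * (x - c) - l ^ 2 / 8) a t (by fun_prop)).mono
        (hist_le hA hY t) le_rfl
    have h1 := (mul_meas_ge_le_lintegral (μ := P)
      (f := fun ω => ENNReal.ofReal (Real.exp (X l ω))) (by fun_prop)
      (ENNReal.ofReal ((t : ℝ) ^ 4))).trans (hexp l t)
    have h2 := ENNReal.toReal_mono ENNReal.one_ne_top h1
    rw [ENNReal.toReal_mul, ENNReal.toReal_ofReal (by positivity), ENNReal.toReal_one] at h2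
    rw [le_div_iff₀ (by positivity), mul_comm]
    exact h2
  have hX' : ∀ l ω, X l ω = l * (∑ s ∈ Finset.Icc 1 t, if A s ω = a then Y s ω - c else 0)
      - (pulls A a t ω : ℝ) * (l ^ 2 / 8) := by
    intro l ω
    rw [← pulls_cast, Finset.mul_sum, ← Finset.sum_sub_distrib]
    exact Finset.sum_congr rfl fun s _ => by split_ifs <;> simp
  have hsub : badSet A Y c a t ⊆ ⋃ n ∈ Finset.Icc 1 t,
      (E (4 * Real.sqrt (2 * Real.log t / n)) ∪ E (-(4 * Real.sqrt (2 * Real.log t / n)))) := by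
    rintro ω ⟨h1, h2⟩
    simp only [Set.mem_iUnion]
    refine ⟨pulls A a t ω, Finset.mem_Icc.2 ⟨h1, pulls_le A a t ω⟩, ?_⟩
    have hn : (0 : ℝ) < pulls A a t ω := by exact_mod_cast h1
    set n : ℝ := (pulls A a t ω : ℝ) with hndef
    set e := Real.sqrt (2 * Real.log t / n) with he
    have he0 : 0 ≤ e := Real.sqrt_nonneg _
    have hee : n * e ^ 2 = 2 * Real.log t := by
      rw [he, Real.sq_sqrt (by positivity)]; field_simp
    have hmem : ∀ l, 4 * Real.log t ≤ X l ω → ω ∈ E l := by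
      intro l hl
      refine ENNReal.ofReal_le_ofReal ?_
      calc (t : ℝ) ^ 4 = Real.exp (4 * Real.log t) := by
            rw [mul_comm, Real.exp_mul, Real.exp_log ht0]; norm_cast
        _ ≤ _ := Real.exp_le_exp.2 hl
    rcases le_abs.1 h2 with h | h
    · left
      refine hmem _ ?_
      rw [hX']
      nlinarith [mul_le_mul_of_nonneg_left h he0]
    · right
      refine hmem _ ?_
      rw [hX']
      nlinarith [mul_le_mul_of_nonneg_left h he0]
  calc P.real (badSet A Y c a t) ≤ _ := measureReal_mono hsub (measure_ne_top _ _)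
    _ ≤ ∑ n ∈ Finset.Icc 1 t, P.real (E (4 * Real.sqrt (2 * Real.log t / n)) ∪
          E (-(4 * Real.sqrt (2 * Real.log t / n)))) := measureReal_biUnion_finset_le _ _
    _ ≤ ∑ n ∈ Finset.Icc 1 t, 2 / (t : ℝ) ^ 4 := by
        refine Finset.sum_le_sum fun n _ => ?_
        refine (measureReal_union_le _ _).trans ?_
        calc _ ≤ 1 / (t : ℝ) ^ 4 + 1 / (t : ℝ) ^ 4 := add_le_add (hPE _) (hPE _)
          _ = _ := by ring
    _ = 2 / (t : ℝ) ^ 3 := by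
        rw [Finset.sum_const, Nat.card_Icc, nsmul_eq_mul]
        simp only [Nat.add_sub_cancel]
        field_simp

lemma sum_two_div_cube_le (T : ℕ) :
    ∑ t ∈ Finset.Icc 1 T, (if 3 ≤ t then 2 / ((t - 1 : ℕ) : ℝ) ^ 3 else 0) ≤ 1 := by
  -- the telescoping comparison is `2 / k ^ 3 ≤ 1 / (k - 1) - 1 / k`
  have h : ∀ T : ℕ, ∑ t ∈ Finset.Icc 1 (T + 2), (if 3 ≤ t then 2 / ((t - 1 : ℕ) : ℝ) ^ 3 else 0)
      ≤ 1 - 1 / ((T : ℝ) + 1) := by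
    intro T
    induction T with
    | zero => simp [Finset.sum_Icc_succ_top]
    | succ T ih =>
      rw [show T + 1 + 2 = (T + 2) + 1 by ring, Finset.sum_Icc_succ_top (by omega),
        if_pos (by omega)]
      have hT : (0 : ℝ) ≤ T := Nat.cast_nonneg T
      have : 2 / ((T + 2 + 1 - 1 : ℕ) : ℝ) ^ 3 ≤ 1 / ((T : ℝ) + 1) - 1 / ((T : ℝ) + 1 + 1) := by
        rw [show T + 2 + 1 - 1 = T + 2 by omega]
        push_cast
        rw [div_sub_div _ _ (by positivity) (by positivity),
          div_le_div_iff₀ (by positivity) (by positivity)]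
        nlinarith [mul_nonneg hT hT, mul_nonneg hT (mul_nonneg hT hT)]
      rw [Nat.cast_succ]
      linarith
  calc _ ≤ ∑ t ∈ Finset.Icc 1 (T + 2), (if 3 ≤ t then 2 / ((t - 1 : ℕ) : ℝ) ^ 3 else 0) := by
        refine Finset.sum_le_sum_of_subset_of_nonneg (Finset.Icc_subset_Icc_right (by omega)) ?_
        intro t _ _
        split_ifs <;> positivity
    _ ≤ _ := (h T).trans (by
        have : 0 ≤ 1 / ((T : ℝ) + 1) := by positivity
        linarith)

/-! ### Pathwise bounds -/

/-- The rounds in which `a` is pulled contribute `1 / max k 1` for `k = 0, 1, …, N_a(T) - 1`. -/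
lemma sum_pull_div_eq {Ω : Type*} {K : ℕ} (A : ℕ → Ω → Fin K) (a : Fin K) (T : ℕ) (ω : Ω) :
    ∑ t ∈ Finset.Icc 1 T, (if A t ω = a then 1 / ((max (pulls A a (t - 1) ω) 1 : ℕ) : ℝ) else 0)
      = ∑ k ∈ Finset.range (pulls A a T ω), 1 / ((max k 1 : ℕ) : ℝ) := by
  induction T with
  | zero => simp [pulls]
  | succ T ih =>
    have hp : pulls A a (T + 1) ω = pulls A a T ω + if A (T + 1) ω = a then 1 else 0 := by
      unfold pulls
      rw [Finset.sum_Icc_succ_top (by omega)]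
    rw [Finset.sum_Icc_succ_top (by omega), ih, hp]
    split_ifs with h
    · rw [Finset.sum_range_succ]; simp
    · simp

lemma sum_pull_div_le {Ω : Type*} {K : ℕ} (A : ℕ → Ω → Fin K) (a : Fin K) (T : ℕ) (hT : 1 ≤ T)
    (ω : Ω) :
    ∑ t ∈ Finset.Icc 1 T, (if A t ω = a then 1 / ((max (pulls A a (t - 1) ω) 1 : ℕ) : ℝ) else 0)
      ≤ 2 + Real.log T := by
  rw [sum_pull_div_eq]
  obtain ⟨n, rfl⟩ : ∃ n, T = n + 1 := ⟨T - 1, by omega⟩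
  calc _ ≤ ∑ k ∈ Finset.range (n + 1), 1 / ((max k 1 : ℕ) : ℝ) :=
        Finset.sum_le_sum_of_subset_of_nonneg
          (Finset.range_subset_range.2 (pulls_le A a (n + 1) ω)) (fun _ _ _ => by positivity)
    _ = (harmonic n : ℝ) + 1 := by
        rw [Finset.sum_range_succ']
        simp [harmonic]
    _ ≤ 1 + Real.log n + 1 := by
        have := harmonic_le_one_add_log n
        gcongr
    _ ≤ _ := by
        have : Real.log n ≤ Real.log (n + 1 : ℕ) := by
          rcases Nat.eq_zero_or_pos n with rfl | hn
          · simp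
          · exact Real.log_le_log (by exact_mod_cast hn) (by push_cast; linarith)
        linarith

/-- Off the bad event, the index exceeds the mean, by at most twice the confidence radius.
For an unpulled arm, this uses `1 ≤ 2 log t`, which holds for `t ≥ 2`. -/
lemma ucbIndex_bounds {Ω : Type*} {K : ℕ} {A : ℕ → Ω → Fin K} {Y : ℕ → Ω → ℝ} {c : ℝ}
    (hc : c ∈ Set.Icc (0 : ℝ) 1) {a : Fin K} {t : ℕ} (ht : 2 ≤ t) {ω : Ω}
    (hω : ω ∉ badSet A Y c a t) :
    c ≤ ucbIndex A Y a t ω ∧ ucbIndex A Y a t ω - c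
      ≤ 2 * Real.sqrt (2 * Real.log t / (max (pulls A a t ω) 1 : ℕ)) := by
  unfold ucbIndex empMean
  rw [if_neg (by omega)]
  split_ifs with h0
  · rw [h0]
    have hlog : (1 : ℝ) / 2 ≤ Real.log t := by
      have h1 := Real.log_two_gt_d9
      have h2 : Real.log 2 ≤ Real.log t := Real.log_le_log (by norm_num) (by exact_mod_cast ht)
      linarith
    have : 1 ≤ Real.sqrt (2 * Real.log t / (max 0 1 : ℕ)) := by
      rw [Real.one_le_sqrt]; norm_num; linarith
    constructor <;> linarith [hc.1, hc.2]
  · have h1 : 1 ≤ pulls A a t ω := by omega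
    rw [max_eq_left h1]
    have hn : (0 : ℝ) < pulls A a t ω := by exact_mod_cast h1
    have hlt : |∑ s ∈ Finset.Icc 1 t, if A s ω = a then Y s ω - c else 0| <
        (pulls A a t ω : ℝ) * Real.sqrt (2 * Real.log t / pulls A a t ω) := by
      by_contra hcon
      exact hω ⟨h1, not_lt.1 hcon⟩
    have hsum : ∑ s ∈ Finset.Icc 1 t, (if A s ω = a then Y s ω - c else 0)
        = (∑ s ∈ Finset.Icc 1 t, if A s ω = a then Y s ω else 0) - (pulls A a t ω : ℝ) * c := by
      rw [← pulls_cast, ← Finset.sum_sub_distrib]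
      exact Finset.sum_congr rfl fun s _ => by split_ifs <;> simp
    rw [hsum, abs_lt] at hlt
    set S := ∑ s ∈ Finset.Icc 1 t, if A s ω = a then Y s ω else 0
    set e := Real.sqrt (2 * Real.log t / pulls A a t ω)
    have hd1 : c - e ≤ S / pulls A a t ω := by
      rw [le_div_iff₀ hn]; nlinarith [hlt.1]
    have hd2 : S / pulls A a t ω ≤ c + e := by
      rw [div_le_iff₀ hn]; nlinarith [hlt.2]
    constructor <;> linarith

lemma le_of_extreme {K : ℕ} {ExtP : Finset (Fin K → ℝ)} {μ : Fin K → ℝ} {M c : ℝ}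
    (hM : IsGreatest {x | ∃ p ∈ convexHull ℝ (ExtP : Set (Fin K → ℝ)), dot p μ = x} M)
    (h : ∀ q ∈ ExtP, dot q μ ≤ c) : M ≤ c := by
  obtain ⟨q, hq, rfl⟩ := hM.1
  have hconv : Convex ℝ {q : Fin K → ℝ | dot q μ ≤ c} := by
    refine convex_halfSpace_le ⟨fun x y => ?_, fun r x => ?_⟩ c
    · simp [dot, add_mul, Finset.sum_add_distrib]
    · simp [dot, Finset.mul_sum, mul_assoc]
  exact convexHull_min (fun q hq => h q hq) hconv hq

lemma dot_mono {K : ℕ} {p u v : Fin K → ℝ} (hp : ∀ a, 0 ≤ p a) (h : ∀ a, u a ≤ v a) :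
    dot p u ≤ dot p v :=
  Finset.sum_le_sum fun a _ => mul_le_mul_of_nonneg_left (h a) (hp a)

/-- The squared gap is bounded, by Jensen's inequality, by the average squared radius. -/
lemma sq_gap_le {K : ℕ} {p μ U n : Fin K → ℝ} {M l : ℝ} (hp : ∀ a, 0 ≤ p a) (hp1 : ∑ a, p a = 1)
    (hl : 0 ≤ l) (hn : ∀ a, 0 ≤ n a) (hM : M ≤ dot p U) (hgap : 0 ≤ M - dot p μ)
    (hU : ∀ a, U a - μ a ≤ 2 * Real.sqrt (2 * l / n a)) :
    (M - dot p μ) ^ 2 ≤ 8 * l * ∑ a, p a * (1 / n a) := by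
  have h1 : M - dot p μ ≤ ∑ a, p a * (2 * Real.sqrt (2 * l / n a)) := by
    calc M - dot p μ ≤ dot p U - dot p μ := by linarith
      _ = ∑ a, p a * (U a - μ a) := by
        simp [dot, mul_sub, Finset.sum_sub_distrib]
      _ ≤ _ := Finset.sum_le_sum fun a _ => mul_le_mul_of_nonneg_left (hU a) (hp a)
  calc (M - dot p μ) ^ 2 ≤ (∑ a, p a * (2 * Real.sqrt (2 * l / n a))) ^ 2 := by gcongr
    _ ≤ ∑ a, p a * (2 * Real.sqrt (2 * l / n a)) ^ 2 :=
      Real.pow_arith_mean_le_arith_mean_pow _ _ _ (fun a _ => hp a) hp1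
        (fun a _ => by positivity) 2
    _ = _ := by
      rw [Finset.mul_sum]
      refine Finset.sum_congr rfl fun a _ => ?_
      have := hn a
      rw [mul_pow, Real.sq_sqrt (by positivity)]
      ring

lemma log_const_bound (K T : ℕ) (hT : 1 ≤ T) :
    8 * Real.log T * (K * (2 + Real.log T)) ≤ 24 * K * (Real.log (1 + T)) ^ 2 := by
  rcases Nat.lt_or_ge T 2 with h | h
  · obtain rfl : T = 1 := by omega
    simp
    positivity
  · have hT2 : (2 : ℝ) ≤ T := by exact_mod_cast h
    have h0 : 0 ≤ Real.log T := Real.log_nonneg (by linarith)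
    have h1 : Real.log T ≤ Real.log (1 + T) := Real.log_le_log (by linarith) (by linarith)
    have h2 : 1 ≤ Real.log (1 + T) := by
      rw [Real.le_log_iff_exp_le (by linarith)]
      linarith [Real.exp_one_lt_d9]
    have hK : (0 : ℝ) ≤ K := Nat.cast_nonneg K
    have : Real.log T * (2 + Real.log T) ≤ 3 * Real.log (1 + T) ^ 2 := by nlinarith
    nlinarith [mul_le_mul_of_nonneg_left this hK]

/-! ### The regret bound -/

/-- Theorem 1, Case 1: the diversity-preserving UCB algorithm, run on any
bandit problem over `D_{[0,1]}` with a finite-polytope diversity-preserving set `Pset`, has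
regret at most `(24 K (ln(1+T))² + K + 2)/Δ` for every horizon `T ≥ 1`. -/
theorem ucb_regret_general_bound
    {Ω : Type*} [MeasurableSpace Ω] {K : ℕ} (hK : 1 ≤ K)
    (P : Measure Ω) [IsProbabilityMeasure P]
    -- the bandit problem: distributions over [0,1] with means μ
    (ν : Fin K → Measure ℝ) (hνprob : ∀ a, IsProbabilityMeasure (ν a))
    (hνsupp : ∀ a, (ν a) (Set.Icc (0 : ℝ) 1)ᶜ = 0)
    (μ : Fin K → ℝ) (hμ : ∀ a, μ a = ∫ x, x ∂(ν a))
    -- the diversity-preserving set: a finite polytope of probability vectors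
    (ExtP : Finset (Fin K → ℝ)) (hExtNe : ExtP.Nonempty)
    (hExtProb : ∀ p ∈ ExtP, (∀ a, 0 ≤ p a) ∧ ∑ a, p a = 1)
    (Pset : Set (Fin K → ℝ)) (hPset : Pset = convexHull ℝ (ExtP : Set (Fin K → ℝ)))
    -- optimal value M and minimal positive gap Δ (at least one p ∈ Ext(Pset) has Δ(p) > 0)
    (M : ℝ) (hM : IsGreatest {x | ∃ p ∈ Pset, dot p μ = x} M)
    (Δ : ℝ) (hΔ : IsLeast {x | ∃ p ∈ ExtP, M - dot p μ = x ∧ 0 < x} Δ)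
    -- the processes generated by the diversity-preserving UCB algorithm
    (p : ℕ → Ω → Fin K → ℝ) (A : ℕ → Ω → Fin K) (Y : ℕ → Ω → ℝ)
    (hA : ∀ t, Measurable (A t)) (hY : ∀ t, Measurable (Y t))
    (hpmeas : ∀ t, 1 ≤ t → Measurable[hist A Y (t - 1)] (p t))
    -- UCB action choice: p_t maximizes ⟨·, U(t-1)⟩ over Ext(Pset)
    (hUCB : ∀ t, 1 ≤ t → ∀ ω, p t ω ∈ ExtP ∧
      ∀ q ∈ ExtP, dot q (fun a => ucbIndex A Y a (t - 1) ω)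
        ≤ dot (p t ω) (fun a => ucbIndex A Y a (t - 1) ω))
    -- given the past, the arm A_t is drawn according to p_t
    (harm : ∀ t, 1 ≤ t → ∀ a : Fin K,
      (P[({ω | A t ω = a}).indicator (fun _ => (1 : ℝ)) | hist A Y (t - 1)])
        =ᵐ[P] fun ω => p t ω a)
    -- given the past and A_t, the reward Y_t is drawn according to ν_{A_t}
    (hreward : ∀ t, 1 ≤ t → ∀ s : Set ℝ, MeasurableSet s →
      (P[({ω | Y t ω ∈ s}).indicator (fun _ => (1 : ℝ)) |
          hist A Y (t - 1) ⊔ MeasurableSpace.comap (A t) inferInstance])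
        =ᵐ[P] fun ω => ((ν (A t ω)) s).toReal)
    (T : ℕ) (hT : 1 ≤ T) :
    T * M - ∫ ω, (∑ t ∈ Finset.Icc 1 T, dot (p t ω) μ) ∂P
      ≤ (24 * K * (Real.log (1 + T)) ^ 2 + K + 2) / Δ := by
  subst hPset
  obtain ⟨⟨p₀, hp₀, hp₀Δ, hΔ0⟩, hΔmin⟩ := hΔ
  have hμI : ∀ a, μ a ∈ Set.Icc (0 : ℝ) 1 := by
    intro a
    have hae : ∀ᵐ x ∂(ν a), x ∈ Set.Icc (0 : ℝ) 1 := by rw [ae_iff]; exact hνsupp a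
    have hint : Integrable (fun x : ℝ => x) (ν a) := Integrable.of_mem_Icc 0 1 aemeasurable_id hae
    rw [hμ a]
    constructor
    · exact integral_nonneg_of_ae (hae.mono fun x hx => hx.1)
    · calc ∫ x, x ∂(ν a) ≤ ∫ _, (1 : ℝ) ∂(ν a) :=
            integral_mono_ae hint (integrable_const _) (hae.mono fun x hx => hx.2)
        _ = 1 := by simp
  have hdot0 : ∀ q ∈ ExtP, 0 ≤ dot q μ := fun q hq =>
    Finset.sum_nonneg fun a _ => mul_nonneg ((hExtProb q hq).1 a) (hμI a).1
  have hdot1 : ∀ q ∈ ExtP, dot q μ ≤ 1 := fun q hq => by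
    calc dot q μ ≤ dot q (fun _ => 1) := dot_mono (hExtProb q hq).1 fun a => (hμI a).2
      _ = 1 := by simp [dot, (hExtProb q hq).2]
  have hM1 : M ≤ 1 := le_of_extreme hM hdot1
  have hΔ1 : Δ ≤ 1 := by linarith [hdot0 p₀ hp₀]
  have hgap0 : ∀ q ∈ ExtP, 0 ≤ M - dot q μ := fun q hq =>
    sub_nonneg.2 (hM.2 ⟨q, subset_convexHull ℝ _ hq, rfl⟩)
  have hgap1 : ∀ q ∈ ExtP, Δ * (M - dot q μ) ≤ 1 := fun q hq => by
    nlinarith [hgap0 q hq, hdot0 q hq]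
  have hgapsq : ∀ q ∈ ExtP, Δ * (M - dot q μ) ≤ (M - dot q μ) ^ 2 := by
    intro q hq
    rcases (hgap0 q hq).eq_or_lt with h | h
    · rw [← h]; simp
    · have : Δ ≤ M - dot q μ := hΔmin ⟨q, hq, rfl, h⟩
      nlinarith
  have hL : 0 ≤ Real.log T := Real.log_nonneg (by exact_mod_cast hT)
  set g : ℕ → Fin K → Ω → ℝ := fun t a ω => 1 / ((max (pulls A a (t - 1) ω) 1 : ℕ) : ℝ) with hg
  set b : ℕ → Fin K → Ω → ℝ := fun t a ω =>
    if 3 ≤ t then (badSet A Y (μ a) a (t - 1)).indicator (fun _ => (1 : ℝ)) ω else 0 with hb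
  have hg0 : ∀ t a ω, 0 ≤ g t a ω := fun t a ω => by positivity
  have hg1 : ∀ t a ω, g t a ω ≤ 1 := fun t a ω => by
    have : (1 : ℝ) ≤ ((max (pulls A a (t - 1) ω) 1 : ℕ) : ℝ) := by
      exact_mod_cast le_max_right _ _
    exact (div_le_one (by linarith)).2 this
  have hb0 : ∀ t a ω, 0 ≤ b t a ω := fun t a ω => by
    simp only [hb]
    split_ifs
    · exact Set.indicator_nonneg (fun _ _ => zero_le_one) _
    · exact le_rfl
  have hp0 : ∀ t, 1 ≤ t → ∀ ω a, 0 ≤ p t ω a := fun t ht ω =>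
    (hExtProb _ (hUCB t ht ω).1).1
  have hp1 : ∀ t, 1 ≤ t → ∀ ω a, p t ω a ≤ 1 := fun t ht ω a => by
    rw [← (hExtProb _ (hUCB t ht ω).1).2]
    exact Finset.single_le_sum (fun i _ => hp0 t ht ω i) (Finset.mem_univ a)
  -- rounds `t ≤ 2` and rounds with a bad event are charged the trivial bound `Δ · Δ(p_t) ≤ 1`
  have hpoint : ∀ t ∈ Finset.Icc 1 T, ∀ ω, Δ * (M - dot (p t ω) μ)
      ≤ 8 * Real.log T * ∑ a, p t ω a * g t a ω + (if t ≤ 2 then 1 else 0) + ∑ a, b t a ω := by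
    intro t ht ω
    obtain ⟨ht1, htT⟩ := Finset.mem_Icc.1 ht
    obtain ⟨hmem, hmax⟩ := hUCB t ht1 ω
    have hS : 0 ≤ ∑ a, p t ω a * g t a ω :=
      Finset.sum_nonneg fun a _ => mul_nonneg (hp0 t ht1 ω a) (hg0 t a ω)
    have hB : 0 ≤ ∑ a, b t a ω := Finset.sum_nonneg fun a _ => hb0 t a ω
    have hLS := mul_nonneg hL hS
    by_cases h2 : t ≤ 2
    · rw [if_pos h2]
      linarith [hgap1 _ hmem]
    · rw [if_neg h2]
      by_cases hbad : ∃ a, ω ∈ badSet A Y (μ a) a (t - 1)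
      · obtain ⟨a, ha⟩ := hbad
        have h1 : (1 : ℝ) ≤ ∑ a, b t a ω := by
          have hba : b t a ω = 1 := by
            simp only [hb]
            rw [if_pos (by omega), Set.indicator_of_mem ha]
          rw [← hba]
          exact Finset.single_le_sum (fun i _ => hb0 t i ω) (Finset.mem_univ a)
        linarith [hgap1 _ hmem]
      · push Not at hbad
        have hbd := fun a => ucbIndex_bounds (hμI a) (show 2 ≤ t - 1 by omega) (hbad a)
        have hMU : M ≤ dot (p t ω) (fun a => ucbIndex A Y a (t - 1) ω) :=
          le_of_extreme hM fun q hq =>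
            (dot_mono (hExtProb q hq).1 fun a => (hbd a).1).trans (hmax q hq)
        have hlog0 : 0 ≤ Real.log (t - 1 : ℕ) :=
          Real.log_nonneg (by exact_mod_cast (show 1 ≤ t - 1 by omega))
        have hlogT : Real.log (t - 1 : ℕ) ≤ Real.log T :=
          Real.log_le_log (by exact_mod_cast (show 0 < t - 1 by omega))
            (by exact_mod_cast (show t - 1 ≤ T by omega))
        have hsq := sq_gap_le (n := fun a => ((max (pulls A a (t - 1) ω) 1 : ℕ) : ℝ))
          (hp0 t ht1 ω) (hExtProb _ hmem).2 hlog0 (fun a => by positivity) hMU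
          (hgap0 _ hmem) (fun a => (hbd a).2)
        have : Real.log (t - 1 : ℕ) * ∑ a, p t ω a * g t a ω
            ≤ Real.log T * ∑ a, p t ω a * g t a ω := mul_le_mul_of_nonneg_right hlogT hS
        linarith [hgapsq _ hmem]
  have hpm : ∀ t, 1 ≤ t → ∀ a, Measurable fun ω => p t ω a := fun t ht a =>
    (measurable_pi_apply a).comp ((hpmeas t ht).mono (hist_le hA hY _) le_rfl)
  have hgm' : ∀ t a, Measurable[hist A Y (t - 1)] (g t a) := fun t a =>
    (measurable_from_nat (f := fun n : ℕ => 1 / ((max n 1 : ℕ) : ℝ))).comp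
      (measurable_hist_pulls a (t - 1))
  have hgm : ∀ t a, Measurable (g t a) := fun t a => (hgm' t a).mono (hist_le hA hY _) le_rfl
  have hEm : ∀ t a, MeasurableSet {ω | A t ω = a} := fun t a => hA t (measurableSet_singleton a)
  have hpgI : ∀ t, 1 ≤ t → ∀ a, Integrable (fun ω => p t ω a * g t a ω) P := fun t ht a =>
    Integrable.of_mem_Icc 0 1 ((hpm t ht a).mul (hgm t a)).aemeasurable
      (Filter.Eventually.of_forall fun ω => ⟨mul_nonneg (hp0 t ht ω a) (hg0 t a ω),
        mul_le_one₀ (hp1 t ht ω a) (hg0 t a ω) (hg1 t a ω)⟩)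
  have hbI : ∀ t a, Integrable (b t a) P := by
    intro t a
    simp only [hb]
    split_ifs
    · exact (integrable_const (1 : ℝ)).indicator (measurableSet_badSet hA hY _ _ _)
    · exact integrable_zero _ _ _
  have hdotI : ∀ t, 1 ≤ t → Integrable (fun ω => dot (p t ω) μ) P := fun t ht =>
    Integrable.of_mem_Icc 0 1
      (Finset.measurable_fun_sum _ fun a _ => (hpm t ht a).mul_const _).aemeasurable
      (Filter.Eventually.of_forall fun ω =>
        ⟨hdot0 _ (hUCB t ht ω).1, hdot1 _ (hUCB t ht ω).1⟩)
  have hAgI : ∀ t a, Integrable (fun ω => if A t ω = a then g t a ω else 0) P := fun t a =>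
    Integrable.of_mem_Icc 0 1
      (Measurable.ite (hEm t a) (hgm t a) measurable_const).aemeasurable
      (Filter.Eventually.of_forall fun ω => by
        split_ifs
        · exact ⟨hg0 t a ω, hg1 t a ω⟩
        · simp)
  -- averaging over the draw of `A_t ∼ p_t`
  have hswap : ∀ t, 1 ≤ t → ∀ a, ∫ ω, p t ω a * g t a ω ∂P
      = ∫ ω, (if A t ω = a then g t a ω else 0) ∂P := by
    intro t ht a
    have hpull := condExp_stronglyMeasurable_mul_of_bound (μ := P) (hist_le hA hY (t - 1))
      (f := g t a) (g := ({ω | A t ω = a}).indicator (fun _ => (1 : ℝ)))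
      (hgm' t a).stronglyMeasurable ((integrable_const (1 : ℝ)).indicator (hEm t a)) 1
      (Filter.Eventually.of_forall fun ω => by
        rw [Real.norm_of_nonneg (hg0 t a ω)]; exact hg1 t a ω)
    calc ∫ ω, p t ω a * g t a ω ∂P
        = ∫ ω, (P[g t a * ({ω | A t ω = a}).indicator (fun _ => (1 : ℝ)) | hist A Y (t - 1)]) ω ∂P := by
          refine integral_congr_ae ?_
          filter_upwards [hpull, harm t ht a] with ω h1 h2
          rw [h1, Pi.mul_apply, h2, mul_comm]
      _ = ∫ ω, (g t a * ({ω | A t ω = a}).indicator (fun _ => (1 : ℝ))) ω ∂P :=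
          integral_condExp (hist_le hA hY (t - 1))
      _ = _ := by
          refine integral_congr_ae (Filter.Eventually.of_forall fun ω => ?_)
          simp [Set.indicator_apply]
  have hbint : ∀ t a, ∫ ω, b t a ω ∂P ≤ if 3 ≤ t then 2 / ((t - 1 : ℕ) : ℝ) ^ 3 else 0 := by
    intro t a
    simp only [hb]
    split_ifs with h3
    · rw [integral_indicator_const _ (measurableSet_badSet hA hY _ _ _), smul_eq_mul, mul_one]
      refine badSet_prob P hA hY (μ a) a (fun l t => ?_) (t - 1) (by omega)
      rw [hμ a]
      exact lintegral_expSum_le_one P ν hνprob hνsupp hA hY hreward a l t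
    · simp
  have hround : ∀ t ∈ Finset.Icc 1 T, Δ * (M - ∫ ω, dot (p t ω) μ ∂P)
      ≤ 8 * Real.log T * ∑ a, ∫ ω, (if A t ω = a then g t a ω else 0) ∂P
        + (if t ≤ 2 then 1 else 0)
        + ∑ _a : Fin K, (if 3 ≤ t then 2 / ((t - 1 : ℕ) : ℝ) ^ 3 else 0) := by
    intro t ht
    have ht1 := (Finset.mem_Icc.1 ht).1
    have hI1 : Integrable (fun ω => 8 * Real.log T * ∑ a, p t ω a * g t a ω) P :=
      (integrable_finsetSum _ fun a _ => hpgI t ht1 a).const_mul _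
    have hI2 : Integrable (fun ω => ∑ a, b t a ω) P := integrable_finsetSum _ fun a _ => hbI t a
    have hI3 : Integrable (fun ω => 8 * Real.log T * ∑ a, p t ω a * g t a ω
        + (if t ≤ 2 then 1 else 0)) P := hI1.add (integrable_const _)
    calc Δ * (M - ∫ ω, dot (p t ω) μ ∂P) = ∫ ω, Δ * (M - dot (p t ω) μ) ∂P := by
          rw [integral_const_mul, integral_sub (integrable_const _) (hdotI t ht1)]
          simp
      _ ≤ ∫ ω, (8 * Real.log T * ∑ a, p t ω a * g t a ω + (if t ≤ 2 then 1 else 0)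
            + ∑ a, b t a ω) ∂P :=
          integral_mono (((integrable_const _).sub (hdotI t ht1)).const_mul _)
            (hI3.add hI2) (hpoint t ht)
      _ = 8 * Real.log T * ∑ a, ∫ ω, (if A t ω = a then g t a ω else 0) ∂P
            + (if t ≤ 2 then 1 else 0) + ∑ a, ∫ ω, b t a ω ∂P := by
          rw [integral_add hI3 hI2,
            integral_add hI1 (integrable_const _), integral_const_mul,
            integral_finsetSum _ fun a _ => hpgI t ht1 a,
            integral_finsetSum _ fun a _ => hbI t a]
          simp only [hswap t ht1]
          simp
      _ ≤ _ := by
          gcongr with a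
          exact hbint t a
  have hsum1 : ∑ t ∈ Finset.Icc 1 T, ∑ a, ∫ ω, (if A t ω = a then g t a ω else 0) ∂P
      ≤ K * (2 + Real.log T) := by
    rw [Finset.sum_comm]
    calc _ ≤ ∑ _a : Fin K, (2 + Real.log T) := by
          refine Finset.sum_le_sum fun a _ => ?_
          rw [← integral_finsetSum _ fun t _ => hAgI t a]
          calc _ ≤ ∫ _, (2 + Real.log T) ∂P :=
                integral_mono (integrable_finsetSum _ fun t _ => hAgI t a) (integrable_const _)
                  fun ω => sum_pull_div_le A a T hT ω
            _ = _ := by simp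
      _ = _ := by rw [Finset.sum_const, Finset.card_fin, nsmul_eq_mul]
  have hsum2 : ∑ t ∈ Finset.Icc 1 T, (if t ≤ 2 then (1 : ℝ) else 0) ≤ 2 := by
    rw [← Finset.sum_filter, Finset.sum_const, nsmul_eq_mul, mul_one]
    have hcard : ((Finset.Icc 1 T).filter (· ≤ 2)).card ≤ (Finset.Icc 1 2).card :=
      Finset.card_le_card fun t ht => by
        simp only [Finset.mem_filter, Finset.mem_Icc] at ht ⊢
        omega
    simpa using (Nat.cast_le (α := ℝ)).2 hcard
  have hsum3 : ∑ t ∈ Finset.Icc 1 T, ∑ _a : Fin K,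
      (if 3 ≤ t then 2 / ((t - 1 : ℕ) : ℝ) ^ 3 else 0) ≤ (K : ℝ) := by
    rw [Finset.sum_comm]
    calc _ ≤ ∑ _a : Fin K, (1 : ℝ) := Finset.sum_le_sum fun a _ => sum_two_div_cube_le T
      _ = K := by simp
  rw [le_div_iff₀ hΔ0]
  calc (T * M - ∫ ω, (∑ t ∈ Finset.Icc 1 T, dot (p t ω) μ) ∂P) * Δ
      = ∑ t ∈ Finset.Icc 1 T, Δ * (M - ∫ ω, dot (p t ω) μ ∂P) := by
        rw [integral_finsetSum _ fun t ht => hdotI t (Finset.mem_Icc.1 ht).1, ← Finset.mul_sum,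
          Finset.sum_sub_distrib]
        simp [mul_comm]
    _ ≤ _ := Finset.sum_le_sum hround
    _ = 8 * Real.log T * ∑ t ∈ Finset.Icc 1 T, ∑ a, ∫ ω, (if A t ω = a then g t a ω else 0) ∂P
        + ∑ t ∈ Finset.Icc 1 T, (if t ≤ 2 then (1 : ℝ) else 0)
        + ∑ t ∈ Finset.Icc 1 T, ∑ _a : Fin K,
          (if 3 ≤ t then 2 / ((t - 1 : ℕ) : ℝ) ^ 3 else 0) := by
        rw [Finset.sum_add_distrib, Finset.sum_add_distrib, ← Finset.mul_sum]
    _ ≤ 8 * Real.log T * (K * (2 + Real.log T)) + 2 + K := by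
        gcongr
    _ ≤ 24 * K * (Real.log (1 + T)) ^ 2 + K + 2 := by
        linarith [log_const_bound K T hT]

end DivBanditUCB
end
end

section
/- Let P be a finite polytope of probability vectors on [K] that puts some probability mass on each arm (for every a ∈ [K] there exists p ∈ Ext(P) with p_a > 0), and let D be a model of probability measures on ℝ with finite first moments satisfying Assumption (ALT). Then for every strategy that is uniformly fast convergent over D given P and every bandit problem ν in D with a unique optimal mixed action p★(ν), the regret satisfies liminf_{T→∞} R_T(ν)/log T ≥ c(Ext(P), ν), where c(Ext(P), ν) ∈ [0, +∞) is the constrained infimum defined below. -/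
/-!
The proof compares the run on `ν` with the run on a confusing alternative `ν'`.

*Information bound.* Disintegrating the law of the history one round at a time
(`Run.lintegral_H_succ`) shows that the law under `ν`, reweighted by the inverse likelihood ratio,
is dominated by the law under `ν'` (`change_of_measure`). With Jensen's inequality this gives, for
every event `B` on the first `T` rounds and every `l`,
`l * ℙ_ν(B) - log (1 + exp l * ℙ_ν'(B)) ≤ ∑ a, E_ν[N_a(T)] * KL(ν_a, ν'_a)`
(`fundamental_ineq`). Take for `B` the event that the cumulative `ν`-gap is below a small multiple
of `T`. By Markov's inequality it has probability close to `1` under `ν`. On `B` the average play is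
close to `p★`, which is suboptimal for `ν'` (`gap_compare`), so `ℙ_ν'(B)` is at most of the order of
the `ν'`-regret divided by `T`. Uniformly fast convergence and `l = (1 - α) log T` then show that
the right-hand side is asymptotically at least `(1 - α) log T` (`information_asymp`).

*Passage to the linear program.* The expected play lies in the polytope at each round, so
`E_ν[N_a(T)] = ∑ p, N_T(p) * p_a` for nonnegative weights `N_T` on `ExtP`, and the regret is
`∑ p, Δ(p) * N_T(p)` (`Run.exists_weights`). If the liminf were below `c`, the ratios
`N_T(p) / log T`, `p ≠ p★`, would stay bounded along infinitely many `T`; their limits along an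
ultrafilter satisfy the constraints of every alternative at finite divergence, at cost less
than `c`. Adding a small `η > 0` to each coordinate also meets the constraints at infinite
divergence, because every arm is charged by some point of `ExtP`. This contradicts the definition
of `c`.
-/

open MeasureTheory Finset
open scoped ENNReal Classical

noncomputable section

namespace DivBanditLB

/-- The inner product `⟨p, q⟩ = ∑ a p_a q_a` on `ℝ^K`. -/
def dot {K : ℕ} (p q : Fin K → ℝ) : ℝ := ∑ a, p a * q a

/-- The mean `μ_a` of arm `a` of the bandit problem `ν`. -/
def armMean {K : ℕ} (ν : Fin K → Measure ℝ) (a : Fin K) : ℝ := ∫ x, x ∂(ν a)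

/-- The set `Opt(ν)` of optimal mixed actions: maximizers of `p ↦ ⟨p, μ⟩` over `𝒫`. -/
def Opt {K : ℕ} (Pset : Set (Fin K → ℝ)) (ν : Fin K → Measure ℝ) : Set (Fin K → ℝ) :=
  {p | p ∈ Pset ∧ ∀ q ∈ Pset, dot q (armMean ν) ≤ dot p (armMean ν)}

/-- The suboptimality gap `Δ(p) = max_{q ∈ 𝒫} ⟨q, μ⟩ − ⟨p, μ⟩`. -/
def gap {K : ℕ} (Pset : Set (Fin K → ℝ)) (ν : Fin K → Measure ℝ) (p : Fin K → ℝ) : ℝ :=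
  sSup {x | ∃ q ∈ Pset, dot q (armMean ν) = x} - dot p (armMean ν)

/-- The Kullback–Leibler divergence `KL(μ, ν) = ∫ ln(dμ/dν) dμ` when `μ ≪ ν` and the
log-likelihood ratio is `μ`-integrable, and `+∞` otherwise. -/
def KL {α : Type*} [MeasurableSpace α] (μ ν : Measure α) : ℝ≥0∞ :=
  if μ ≪ ν ∧ Integrable (llr μ ν) μ then ENNReal.ofReal (∫ x, llr μ ν x ∂μ) else ⊤

/-- The set `Conf(ν)` of confusing alternative problems (relative to the unique optimal
mixed action `p★(ν)`): problems `ν'` in the model for which `p★(ν)` is suboptimal but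
which agree with `ν` on every arm charged by `p★(ν)`. -/
def Conf {K : ℕ} (D : Set (Measure ℝ)) (Pset : Set (Fin K → ℝ)) (ν : Fin K → Measure ℝ)
    (pstar : Fin K → ℝ) : Set (Fin K → Measure ℝ) :=
  {ν' | (∀ a, ν' a ∈ D) ∧ pstar ∉ Opt Pset ν' ∧ ∀ a, pstar a = 0 ∨ ν a = ν' a}

/-- The constrained infimum `c(Ext(𝒫), ν)`: infimum of `Σ_{p ∈ Ext(𝒫)} Δ(p)·n(p)` over
nonnegative `n` subject to, for every `ν' ∈ Conf(ν)`,
`Σ_{p ≠ p★(ν)} n(p) Σ_{a : p★_a(ν) = 0} p_a·KL(ν_a, ν'_a) ≥ 1`. -/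
def cConst {K : ℕ} (D : Set (Measure ℝ)) (ExtP : Finset (Fin K → ℝ))
    (Pset : Set (Fin K → ℝ)) (ν : Fin K → Measure ℝ) (pstar : Fin K → ℝ) : ℝ :=
  sInf {x | ∃ n : (Fin K → ℝ) → ℝ, (∀ p, 0 ≤ n p) ∧
    (∀ ν' ∈ Conf D Pset ν pstar,
      1 ≤ ∑ p ∈ ExtP.erase pstar, ENNReal.ofReal (n p) *
          ∑ a : Fin K, if pstar a = 0 then ENNReal.ofReal (p a) * KL (ν a) (ν' a) else 0) ∧
    x = ∑ p ∈ ExtP, gap Pset ν p * n p}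

/-- Assumption (ALT): for every problem in the model with a unique optimal mixed action,
the set of confusing alternatives is either empty or contains a problem at finite
Kullback–Leibler divergence from it on every arm. -/
def AssumptionALT {K : ℕ} (D : Set (Measure ℝ)) (Pset : Set (Fin K → ℝ)) : Prop :=
  ∀ ν : Fin K → Measure ℝ, (∀ a, ν a ∈ D) →
    ∀ pstar : Fin K → ℝ, Opt Pset ν = {pstar} →
      Conf D Pset ν pstar = ∅ ∨
        ∃ ν'' ∈ Conf D Pset ν pstar, ∀ a, KL (ν a) (ν'' a) < ⊤

/-- The σ-algebra generated by the history `A_1, Y_1, …, A_t, Y_t`. -/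
def hist {Ω : Type*} {K : ℕ} (A : ℕ → Ω → Fin K) (Y : ℕ → Ω → ℝ) (t : ℕ) :
    MeasurableSpace Ω :=
  ⨆ s ∈ Set.Icc 1 t,
    (MeasurableSpace.comap (A s) inferInstance ⊔ MeasurableSpace.comap (Y s) inferInstance)

/-- One run of the strategy `σ` on the bandit problem `ν`, following the
diversity-preserving bandit protocol: at round `t+1`, the mixed action
`σ t (A_1, Y_1, …, A_t, Y_t)` is used to draw the arm `A_{t+1}` (given the past), and the
reward `Y_{t+1}` is drawn according to `ν_{A_{t+1}}` (given the past and `A_{t+1}`). -/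
structure Run (K : ℕ) (σ : (t : ℕ) → (Fin t → Fin K × ℝ) → (Fin K → ℝ))
    (ν : Fin K → Measure ℝ) where
  (Ω : Type)
  [mΩ : MeasurableSpace Ω]
  (P : Measure Ω)
  (isProb : IsProbabilityMeasure P)
  (A : ℕ → Ω → Fin K)
  (Y : ℕ → Ω → ℝ)
  (measA : ∀ t, Measurable (A t))
  (measY : ∀ t, Measurable (Y t))
  (armCond : ∀ (t : ℕ) (a : Fin K),
    (P[({ω | A (t + 1) ω = a}).indicator (fun _ => (1 : ℝ)) | hist A Y t]) =ᵐ[P]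
      fun ω => σ t (fun s => (A (s.1 + 1) ω, Y (s.1 + 1) ω)) a)
  (rewardCond : ∀ (t : ℕ) (s : Set ℝ), MeasurableSet s →
    (P[({ω | Y (t + 1) ω ∈ s}).indicator (fun _ => (1 : ℝ)) |
        hist A Y t ⊔ MeasurableSpace.comap (A (t + 1)) inferInstance]) =ᵐ[P]
      fun ω => ((ν (A (t + 1) ω)) s).toReal)

attribute [instance] Run.mΩ

/-- The mixed action played at round `t ≥ 1` by the strategy in the run `r`. -/
def Run.play {K : ℕ} {σ : (t : ℕ) → (Fin t → Fin K × ℝ) → (Fin K → ℝ)}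
    {ν : Fin K → Measure ℝ} (r : Run K σ ν) (t : ℕ) (ω : r.Ω) : Fin K → ℝ :=
  σ (t - 1) (fun s => (r.A (s.1 + 1) ω, r.Y (s.1 + 1) ω))

/-- The expected regret after `T` rounds of the run `r` with respect to the
diversity-preserving set `𝒫`. -/
def Run.regret {K : ℕ} {σ : (t : ℕ) → (Fin t → Fin K × ℝ) → (Fin K → ℝ)}
    {ν : Fin K → Measure ℝ} (r : Run K σ ν) (Pset : Set (Fin K → ℝ)) (T : ℕ) : ℝ :=
  T * sSup {x | ∃ p ∈ Pset, dot p (armMean ν) = x}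
    - ∫ ω, ∑ t ∈ Finset.Icc 1 T, dot (r.play t ω) (armMean ν) ∂r.P

/-- A family of runs (one per bandit problem in the model `D`) of a single strategy `σ` is
uniformly fast convergent (UFC) if its regret is `o(T^α)` for all `α > 0` on every bandit
problem of the model. -/
def UFC {K : ℕ} (σ : (t : ℕ) → (Fin t → Fin K × ℝ) → (Fin K → ℝ))
    (D : Set (Measure ℝ)) (Pset : Set (Fin K → ℝ))
    (runs : ∀ ν' : Fin K → Measure ℝ, (∀ a, ν' a ∈ D) → Run K σ ν') : Prop :=
  ∀ (ν' : Fin K → Measure ℝ) (hν' : ∀ a, ν' a ∈ D), ∀ α : ℝ, 0 < α →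
    Filter.Tendsto (fun T : ℕ => (runs ν' hν').regret Pset T / (T : ℝ) ^ α)
      Filter.atTop (nhds 0)

/-! ### The law of the history -/

section History

variable {K : ℕ} {σ : (t : ℕ) → (Fin t → Fin K × ℝ) → (Fin K → ℝ)} {ν : Fin K → Measure ℝ}

/-- The history `(A_1, Y_1, …, A_t, Y_t)` of a run, in the encoding read by the strategy. -/
def Run.H (r : Run K σ ν) (t : ℕ) (ω : r.Ω) : Fin t → Fin K × ℝ :=
  fun s => (r.A (s.1 + 1) ω, r.Y (s.1 + 1) ω)

lemma Run.hist_le (r : Run K σ ν) (t : ℕ) : hist r.A r.Y t ≤ r.mΩ := by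
  refine iSup₂_le fun s _ => sup_le ?_ ?_
  · exact (r.measA s).comap_le
  · exact (r.measY s).comap_le

lemma Run.measurable_H_hist (r : Run K σ ν) (t : ℕ) :
    Measurable[hist r.A r.Y t] (r.H t) := by
  refine @measurable_pi_lambda _ _ _ (hist r.A r.Y t) _ _ fun s => ?_
  have hs : s.1 + 1 ∈ Set.Icc 1 t := ⟨by omega, s.2⟩
  have hle : MeasurableSpace.comap (r.A (s.1 + 1)) inferInstance ⊔
      MeasurableSpace.comap (r.Y (s.1 + 1)) inferInstance ≤ hist r.A r.Y t :=
    le_iSup₂_of_le (f := fun s (_ : s ∈ Set.Icc 1 t) =>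
      (MeasurableSpace.comap (r.A s) inferInstance ⊔
        MeasurableSpace.comap (r.Y s) inferInstance)) (s.1 + 1) hs le_rfl
  have hA : Measurable[hist r.A r.Y t] (r.A (s.1 + 1)) :=
    Measurable.of_comap_le (le_trans le_sup_left hle)
  have hY : Measurable[hist r.A r.Y t] (r.Y (s.1 + 1)) :=
    Measurable.of_comap_le (le_trans le_sup_right hle)
  exact hA.prodMk hY

lemma Run.measurable_H (r : Run K σ ν) (t : ℕ) : Measurable (r.H t) :=
  (r.measurable_H_hist t).mono (r.hist_le t) le_rfl

lemma Run.measureReal_joint (r : Run K σ ν) (t : ℕ) (a : Fin K)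
    {B : Set (Fin t → Fin K × ℝ)} (hB : MeasurableSet B) {s : Set ℝ} (hs : MeasurableSet s) :
    r.P.real (r.H t ⁻¹' B ∩ {ω | r.A (t + 1) ω = a} ∩ r.Y (t + 1) ⁻¹' s)
      = (∫ ω in r.H t ⁻¹' B, σ t (r.H t ω) a ∂r.P) * (ν a s).toReal := by
  have := r.isProb
  have hA : MeasurableSet {ω | r.A (t + 1) ω = a} := r.measA (t + 1) (measurableSet_singleton a)
  have hY : MeasurableSet {ω | r.Y (t + 1) ω ∈ s} := r.measY (t + 1) hs
  have hBm : MeasurableSet[hist r.A r.Y t] (r.H t ⁻¹' B) := r.measurable_H_hist t hB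
  have hBm' : MeasurableSet (r.H t ⁻¹' B) := r.measurable_H t hB
  -- the arm is drawn from `σ_t(H_t)` given the past
  have h1 : r.P.real (r.H t ⁻¹' B ∩ {ω | r.A (t + 1) ω = a})
      = ∫ ω in r.H t ⁻¹' B, σ t (r.H t ω) a ∂r.P := by
    have e1 := setIntegral_condExp (μ := r.P) (r.hist_le t)
      (f := ({ω | r.A (t + 1) ω = a}).indicator (fun _ => (1 : ℝ)))
      ((integrable_const 1).indicator hA) hBm
    rw [setIntegral_congr_ae (g := fun ω => σ t (r.H t ω) a) hBm'
      ((r.armCond t a).mono fun ω hω _ => hω)] at e1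
    rw [e1, setIntegral_indicator hA]
    simp
  -- the reward is drawn from `ν_a` given the past and the arm
  have hm : hist r.A r.Y t ⊔ MeasurableSpace.comap (r.A (t + 1)) inferInstance ≤ r.mΩ :=
    sup_le (r.hist_le t) (r.measA (t + 1)).comap_le
  have hCm : MeasurableSet[hist r.A r.Y t ⊔ MeasurableSpace.comap (r.A (t + 1)) inferInstance]
      (r.H t ⁻¹' B ∩ {ω | r.A (t + 1) ω = a}) :=
    MeasurableSet.inter (le_sup_left (α := MeasurableSpace r.Ω) _ hBm)
      (le_sup_right (α := MeasurableSpace r.Ω) _ ⟨{a}, measurableSet_singleton a, rfl⟩)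
  have e2 := setIntegral_condExp (μ := r.P) hm
    (f := ({ω | r.Y (t + 1) ω ∈ s}).indicator (fun _ => (1 : ℝ)))
    ((integrable_const 1).indicator hY) hCm
  rw [setIntegral_congr_ae (g := fun _ => (ν a s).toReal) (hBm'.inter hA)
    ((r.rewardCond t s hs).mono fun ω hω hmem => by
      rw [hω, ← show r.A (t + 1) ω = a from hmem.2]), setIntegral_indicator hY] at e2
  simp only [integral_const, smul_eq_mul, measureReal_restrict_apply_univ, mul_one] at e2
  rw [← h1, e2]
  rfl

/-- On the event that arm `a` is drawn at round `t + 1`, the past and the new reward are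
independent: the reward has law `ν_a`, and the past has density `σ_t(·)_a`. -/
lemma Run.map_joint (r : Run K σ ν) (hν : ∀ a, IsProbabilityMeasure (ν a))
    (hσ : ∀ t, Measurable (σ t)) (hσ0 : ∀ t h a, 0 ≤ σ t h a) (hσ1 : ∀ t h a, σ t h a ≤ 1)
    (t : ℕ) (a : Fin K) :
    (r.P.restrict {ω | r.A (t + 1) ω = a}).map (fun ω => (r.H t ω, r.Y (t + 1) ω))
      = ((r.P.map (r.H t)).withDensity (fun h => ENNReal.ofReal (σ t h a))).prod (ν a) := by
  have := r.isProb
  have := hν a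
  have hσa : Measurable fun h => σ t h a := (measurable_pi_apply a).comp (hσ t)
  have hA : MeasurableSet {ω | r.A (t + 1) ω = a} := r.measA (t + 1) (measurableSet_singleton a)
  have hH := r.measurable_H t
  have : IsProbabilityMeasure (r.P.map (r.H t)) := Measure.isProbabilityMeasure_map hH.aemeasurable
  have hpair : Measurable fun ω => (r.H t ω, r.Y (t + 1) ω) := hH.prodMk (r.measY (t + 1))
  symm
  have : IsFiniteMeasure
      ((r.P.map (r.H t)).withDensity (fun h => ENNReal.ofReal (σ t h a))) := by
    refine isFiniteMeasure_withDensity ?_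
    refine ((lintegral_mono (g := fun _ => 1) fun h => ?_).trans_lt ?_).ne
    · exact ENNReal.ofReal_le_one.2 (hσ1 t h a)
    · simp
  refine Measure.prod_eq fun B s hB hs => ?_
  have hint : Integrable (fun ω => σ t (r.H t ω) a) r.P :=
    Integrable.of_bound (hσa.comp hH).aestronglyMeasurable 1
      (ae_of_all _ fun ω => by
        rw [Real.norm_eq_abs, abs_of_nonneg (hσ0 _ _ _)]; exact hσ1 _ _ _)
  rw [Measure.map_apply hpair (hB.prod hs), Measure.restrict_apply (hpair (hB.prod hs)),
    withDensity_apply _ hB, setLIntegral_map hB hσa.ennreal_ofReal hH,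
    ← ofReal_integral_eq_lintegral_ofReal hint.integrableOn (ae_of_all _ fun ω => hσ0 _ _ _)]
  have := r.measureReal_joint t a hB hs
  rw [← ENNReal.ofReal_toReal (measure_ne_top (ν a) s),
    ← ENNReal.ofReal_mul (setIntegral_nonneg (hH hB) fun ω _ => hσ0 _ _ _), ← this,
    ofReal_measureReal]
  congr 1
  ext ω
  simp only [Set.mem_inter_iff, Set.mem_preimage, Set.mem_prod, Set.mem_ofPred_eq]
  tauto

lemma Run.H_succ (r : Run K σ ν) (t : ℕ) (ω : r.Ω) :
    r.H (t + 1) ω = Fin.snoc (α := fun _ => Fin K × ℝ) (r.H t ω) (r.A (t + 1) ω, r.Y (t + 1) ω) := by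
  funext s
  refine Fin.lastCases ?_ (fun i => ?_) s
  · rw [Fin.snoc_last]; rfl
  · rw [Fin.snoc_castSucc]; rfl

lemma measurable_snoc (t : ℕ) (a : Fin K) :
    Measurable fun z : (Fin t → Fin K × ℝ) × ℝ =>
      (Fin.snoc (α := fun _ => Fin K × ℝ) z.1 (a, z.2) : Fin (t + 1) → Fin K × ℝ) := by
  refine measurable_pi_lambda _ fun s => ?_
  refine Fin.lastCases ?_ (fun i => ?_) s
  · simp only [Fin.snoc_last]
    exact measurable_const.prodMk measurable_snd
  · simp only [Fin.snoc_castSucc]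
    exact (measurable_pi_apply i).comp measurable_fst

/-- One-step disintegration of the law of the history. -/
lemma Run.lintegral_H_succ (r : Run K σ ν) (hν : ∀ a, IsProbabilityMeasure (ν a))
    (hσ : ∀ t, Measurable (σ t)) (hσ0 : ∀ t h a, 0 ≤ σ t h a) (hσ1 : ∀ t h a, σ t h a ≤ 1)
    (t : ℕ) {F : (Fin (t + 1) → Fin K × ℝ) → ℝ≥0∞} (hF : Measurable F) :
    ∫⁻ ω, F (r.H (t + 1) ω) ∂r.P
      = ∫⁻ ω, ∑ a, ENNReal.ofReal (σ t (r.H t ω) a) *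
          ∫⁻ y, F (Fin.snoc (α := fun _ => Fin K × ℝ) (r.H t ω) (a, y)) ∂(ν a) ∂r.P := by
  have := r.isProb
  have hH := r.measurable_H t
  have hpair : Measurable fun ω => (r.H t ω, r.Y (t + 1) ω) := hH.prodMk (r.measY (t + 1))
  have hA : ∀ a, MeasurableSet {ω | r.A (t + 1) ω = a} :=
    fun a => r.measA (t + 1) (measurableSet_singleton a)
  have hFs : ∀ a, Measurable fun z : (Fin t → Fin K × ℝ) × ℝ =>
      F (Fin.snoc (α := fun _ => Fin K × ℝ) z.1 (a, z.2)) := fun a => hF.comp (measurable_snoc t a)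
  have hI : ∀ a, Measurable fun h : Fin t → Fin K × ℝ =>
      ∫⁻ y, F (Fin.snoc (α := fun _ => Fin K × ℝ) h (a, y)) ∂(ν a) := fun a => by
    have := hν a
    exact (hFs a).lintegral_prod_right'
  have hσa : ∀ a, Measurable fun h => σ t h a := fun a => (measurable_pi_apply a).comp (hσ t)
  have hsplit : ∀ ω, F (r.H (t + 1) ω) = ∑ a, ({ω | r.A (t + 1) ω = a}).indicator
      (fun ω => F (Fin.snoc (α := fun _ => Fin K × ℝ) (r.H t ω) (a, r.Y (t + 1) ω))) ω := by
    intro ω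
    rw [Finset.sum_eq_single (r.A (t + 1) ω)]
    · rw [Set.indicator_of_mem (by simp), r.H_succ]
    · intro b _ hb
      exact Set.indicator_of_notMem (by simpa using hb.symm) _
    · simp
  simp_rw [hsplit]
  rw [lintegral_finsetSum, lintegral_finsetSum]
  rotate_left
  · exact fun a _ => ((hσa a).comp hH).ennreal_ofReal.mul ((hI a).comp hH)
  · exact fun a _ => ((hFs a).comp hpair).indicator (hA a)
  refine Finset.sum_congr rfl fun a _ => ?_
  have := hν a
  rw [lintegral_indicator (hA a)]
  have e := lintegral_map (μ := r.P.restrict {ω | r.A (t + 1) ω = a}) (hFs a) hpair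
  rw [r.map_joint hν hσ hσ0 hσ1] at e
  rw [← e, lintegral_prod _ (hFs a).aemeasurable,
    lintegral_withDensity_eq_lintegral_mul _ (hσa a).ennreal_ofReal (hI a),
    lintegral_map ((hσa a).ennreal_ofReal.mul (hI a)) hH]
  rfl

end History

/-! ### Change of measure and the fundamental inequality -/

section ChangeOfMeasure

variable {K : ℕ} {σ : (t : ℕ) → (Fin t → Fin K × ℝ) → (Fin K → ℝ)} {ν ν' : Fin K → Measure ℝ}

lemma lintegral_exp_neg_llr_le {μ ρ : Measure ℝ} [IsProbabilityMeasure μ] [IsProbabilityMeasure ρ]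
    (hac : μ ≪ ρ) {f : ℝ → ℝ≥0∞} (hf : Measurable f) :
    ∫⁻ y, f y * ENNReal.ofReal (Real.exp (-llr μ ρ y)) ∂μ ≤ ∫⁻ y, f y ∂ρ := by
  calc ∫⁻ y, f y * ENNReal.ofReal (Real.exp (-llr μ ρ y)) ∂μ
      ≤ ∫⁻ y, (ρ.rnDeriv μ * f) y ∂μ := by
        refine lintegral_mono_ae ((exp_neg_llr hac).mono fun y hy => ?_)
        simp only at hy
        rw [hy, Pi.mul_apply, mul_comm]
        gcongr
        exact ENNReal.ofReal_toReal_le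
    _ = ∫⁻ y, f y ∂(μ.withDensity (ρ.rnDeriv μ)) :=
        (lintegral_withDensity_eq_lintegral_mul _ (Measure.measurable_rnDeriv _ _) hf).symm
    _ ≤ ∫⁻ y, f y ∂ρ := lintegral_mono' (Measure.withDensity_rnDeriv_le _ _) le_rfl

/-- The log-likelihood ratio of one observation `(arm, reward)`. -/
def obsLlr (ν ν' : Fin K → Measure ℝ) (z : Fin K × ℝ) : ℝ := llr (ν z.1) (ν' z.1) z.2

lemma measurable_obsLlr (ν ν' : Fin K → Measure ℝ) : Measurable (obsLlr ν ν') :=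
  measurable_from_prod_countable_right fun a => measurable_llr (ν a) (ν' a)

/-- The inverse likelihood ratio `exp (-∑ llr)` of a history. -/
def histWeight (ν ν' : Fin K → Measure ℝ) (t : ℕ) (h : Fin t → Fin K × ℝ) : ℝ≥0∞ :=
  ∏ s, ENNReal.ofReal (Real.exp (-obsLlr ν ν' (h s)))

lemma measurable_histWeight (ν ν' : Fin K → Measure ℝ) (t : ℕ) :
    Measurable (histWeight ν ν' t) := by
  unfold histWeight
  refine Finset.measurable_fun_prod _ fun s _ => ?_
  exact (Real.measurable_exp.comp
    ((measurable_obsLlr ν ν').comp (measurable_pi_apply s)).neg).ennreal_ofReal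

/-- Change of measure between two runs of the same strategy: reweighting the law of the history
under `ν` by the inverse likelihood ratio gives a measure dominated by the law under `ν'`.
Only an inequality holds in general since `ν'` need not be absolutely continuous
with respect to `ν`. -/
lemma change_of_measure (r : Run K σ ν) (r' : Run K σ ν')
    (hν : ∀ a, IsProbabilityMeasure (ν a)) (hν' : ∀ a, IsProbabilityMeasure (ν' a))
    (hσ : ∀ t, Measurable (σ t)) (hσ0 : ∀ t h a, 0 ≤ σ t h a) (hσ1 : ∀ t h a, σ t h a ≤ 1)
    (hac : ∀ a, ν a ≪ ν' a) (t : ℕ) :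
    ∀ F : (Fin t → Fin K × ℝ) → ℝ≥0∞, Measurable F →
      ∫⁻ ω, F (r.H t ω) * histWeight ν ν' t (r.H t ω) ∂r.P ≤ ∫⁻ ω, F (r'.H t ω) ∂r'.P := by
  induction t with
  | zero =>
    intro F _
    have := r.isProb
    have := r'.isProb
    have h1 : ∀ ω, F (r.H 0 ω) = F default := fun ω => congrArg F (Subsingleton.elim _ _)
    have h2 : ∀ ω, F (r'.H 0 ω) = F default := fun ω => congrArg F (Subsingleton.elim _ _)
    simp [h1, h2, histWeight]
  | succ t ih =>
    intro F hF
    have hFs : ∀ a, Measurable fun z : (Fin t → Fin K × ℝ) × ℝ =>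
        F (Fin.snoc (α := fun _ => Fin K × ℝ) z.1 (a, z.2)) :=
      fun a => hF.comp (measurable_snoc t a)
    have hG : Measurable fun h : Fin t → Fin K × ℝ => ∑ a, ENNReal.ofReal (σ t h a) *
        ∫⁻ y, F (Fin.snoc (α := fun _ => Fin K × ℝ) h (a, y)) ∂(ν' a) := by
      refine Finset.measurable_fun_sum _ fun a _ => ?_
      have := hν' a
      exact ((measurable_pi_apply a).comp (hσ t)).ennreal_ofReal.mul
        (hFs a).lintegral_prod_right'
    have hstep := ih _ hG
    rw [← r'.lintegral_H_succ hν' hσ hσ0 hσ1 t hF] at hstep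
    refine le_trans ?_ hstep
    rw [r.lintegral_H_succ hν hσ hσ0 hσ1 t (F := fun h => F h * histWeight ν ν' (t + 1) h)
      (hF.mul (measurable_histWeight ν ν' (t + 1)))]
    refine lintegral_mono fun ω => ?_
    rw [Finset.sum_mul]
    refine Finset.sum_le_sum fun a _ => ?_
    rw [mul_assoc]
    gcongr
    have := hν a
    have := hν' a
    have hFa : Measurable fun y : ℝ =>
        F (Fin.snoc (α := fun _ => Fin K × ℝ) (r.H t ω) (a, y)) :=
      (hFs a).comp (measurable_const.prodMk measurable_id)
    have hW : ∀ y, histWeight ν ν' (t + 1) (Fin.snoc (α := fun _ => Fin K × ℝ) (r.H t ω) (a, y))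
        = histWeight ν ν' t (r.H t ω) * ENNReal.ofReal (Real.exp (-llr (ν a) (ν' a) y)) := by
      intro y
      simp only [histWeight, Fin.prod_univ_castSucc, Fin.snoc_castSucc, Fin.snoc_last]
      rfl
    calc ∫⁻ y, F (Fin.snoc (α := fun _ => Fin K × ℝ) (r.H t ω) (a, y)) *
          histWeight ν ν' (t + 1) (Fin.snoc (α := fun _ => Fin K × ℝ) (r.H t ω) (a, y)) ∂(ν a)
        = ∫⁻ y, (F (Fin.snoc (α := fun _ => Fin K × ℝ) (r.H t ω) (a, y)) *
            ENNReal.ofReal (Real.exp (-llr (ν a) (ν' a) y))) *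
              histWeight ν ν' t (r.H t ω) ∂(ν a) := by
          refine lintegral_congr fun y => ?_
          rw [hW]; ring
      _ = (∫⁻ y, F (Fin.snoc (α := fun _ => Fin K × ℝ) (r.H t ω) (a, y)) *
            ENNReal.ofReal (Real.exp (-llr (ν a) (ν' a) y)) ∂(ν a)) *
              histWeight ν ν' t (r.H t ω) := by
          refine lintegral_mul_const _ (hFa.mul ?_)
          exact (Real.measurable_exp.comp (measurable_llr _ _).neg).ennreal_ofReal
      _ ≤ _ := by
          exact mul_le_mul_left (lintegral_exp_neg_llr_le (hac a) hFa) _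

/-- Expectation of a function of the arm and reward of round `t + 1`. -/
lemma Run.integral_obs (r : Run K σ ν) (hν : ∀ a, IsProbabilityMeasure (ν a))
    (hσ : ∀ t, Measurable (σ t)) (hσ0 : ∀ t h a, 0 ≤ σ t h a) (hσ1 : ∀ t h a, σ t h a ≤ 1)
    (t : ℕ) {g : Fin K × ℝ → ℝ} (hg : Measurable g)
    (hint : ∀ a, Integrable (fun y => g (a, y)) (ν a)) :
    Integrable (fun ω => g (r.A (t + 1) ω, r.Y (t + 1) ω)) r.P ∧
      ∫ ω, g (r.A (t + 1) ω, r.Y (t + 1) ω) ∂r.P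
        = ∑ a, (∫ ω, σ t (r.H t ω) a ∂r.P) * ∫ y, g (a, y) ∂(ν a) := by
  have := r.isProb
  have hH := r.measurable_H t
  have hA : ∀ a, MeasurableSet {ω | r.A (t + 1) ω = a} :=
    fun a => r.measA (t + 1) (measurableSet_singleton a)
  have hga : ∀ a, Measurable fun y => g (a, y) :=
    fun a => hg.comp (measurable_const.prodMk measurable_id)
  have hσa : ∀ a, Measurable fun h => σ t h a := fun a => (measurable_pi_apply a).comp (hσ t)
  -- the law of the reward on the event that arm `a` is drawn
  have hlaw : ∀ a, (r.P.restrict {ω | r.A (t + 1) ω = a}).map (r.Y (t + 1))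
      = ENNReal.ofReal (∫ ω, σ t (r.H t ω) a ∂r.P) • ν a := by
    intro a
    have := hν a
    have hintσ : Integrable (fun ω => σ t (r.H t ω) a) r.P :=
      Integrable.of_bound ((hσa a).comp hH).aestronglyMeasurable 1
        (ae_of_all _ fun ω => by
          rw [Real.norm_eq_abs, abs_of_nonneg (hσ0 _ _ _)]; exact hσ1 _ _ _)
    have e := congrArg (Measure.map Prod.snd) (r.map_joint hν hσ hσ0 hσ1 t a)
    rw [Measure.map_map measurable_snd (hH.prodMk (r.measY (t + 1))), Measure.map_snd_prod,
      withDensity_apply _ MeasurableSet.univ, Measure.restrict_univ,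
      lintegral_map (hσa a).ennreal_ofReal hH,
      ← ofReal_integral_eq_lintegral_ofReal hintσ (ae_of_all _ fun ω => hσ0 _ _ _)] at e
    exact e
  have hsplit : (fun ω => g (r.A (t + 1) ω, r.Y (t + 1) ω))
      = fun ω => ∑ a, ({ω | r.A (t + 1) ω = a}).indicator
          (fun ω => g (a, r.Y (t + 1) ω)) ω := by
    funext ω
    rw [Finset.sum_eq_single (r.A (t + 1) ω)]
    · rw [Set.indicator_of_mem (by simp)]
    · intro b _ hb
      exact Set.indicator_of_notMem (by simpa using hb.symm) _
    · simp
  have hI : ∀ a, Integrable (({ω | r.A (t + 1) ω = a}).indicator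
      (fun ω => g (a, r.Y (t + 1) ω))) r.P := by
    intro a
    rw [integrable_indicator_iff (hA a)]
    have h1 : Integrable (fun y => g (a, y))
        ((r.P.restrict {ω | r.A (t + 1) ω = a}).map (r.Y (t + 1))) := by
      rw [hlaw a]
      exact (hint a).smul_measure ENNReal.ofReal_ne_top
    exact h1.comp_measurable (r.measY (t + 1))
  rw [hsplit]
  refine ⟨integrable_finsetSum _ fun a _ => hI a, ?_⟩
  rw [integral_finsetSum _ fun a _ => hI a]
  refine Finset.sum_congr rfl fun a _ => ?_
  rw [integral_indicator (hA a)]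
  have e := integral_map (μ := r.P.restrict {ω | r.A (t + 1) ω = a})
    (r.measY (t + 1)).aemeasurable (hga a).aestronglyMeasurable
  rw [hlaw a, integral_smul_measure, ENNReal.toReal_ofReal
    (integral_nonneg fun ω => hσ0 _ _ _)] at e
  rw [← e, smul_eq_mul]

/-- Expected number of draws of arm `a` during the first `T` rounds. -/
def Run.count (r : Run K σ ν) (T : ℕ) (a : Fin K) : ℝ :=
  ∑ t ∈ Finset.range T, ∫ ω, σ t (r.H t ω) a ∂r.P

/-- The fundamental inequality, in Donsker–Varadhan form: for an event `B` on the history, the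
divergence collected over `T` rounds is at least
`l * ℙ_ν(B) - log (1 + exp l * ℙ_ν'(B))`. -/
lemma fundamental_ineq (r : Run K σ ν) (r' : Run K σ ν')
    (hν : ∀ a, IsProbabilityMeasure (ν a)) (hν' : ∀ a, IsProbabilityMeasure (ν' a))
    (hσ : ∀ t, Measurable (σ t)) (hσ0 : ∀ t h a, 0 ≤ σ t h a) (hσ1 : ∀ t h a, σ t h a ≤ 1)
    (hKL : ∀ a, KL (ν a) (ν' a) ≠ ⊤) (T : ℕ) {B : Set (Fin T → Fin K × ℝ)}
    (hB : MeasurableSet B) (l : ℝ) :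
    l * r.P.real (r.H T ⁻¹' B) - Real.log (1 + Real.exp l * r'.P.real (r'.H T ⁻¹' B))
      ≤ ∑ a, r.count T a * (KL (ν a) (ν' a)).toReal := by
  have := r.isProb
  have := r'.isProb
  have hkl : ∀ a, ν a ≪ ν' a ∧ Integrable (llr (ν a) (ν' a)) (ν a) := by
    intro a
    by_contra hcon
    exact hKL a (by rw [KL, if_neg hcon])
  have hkl2 : ∀ a, ∫ y, llr (ν a) (ν' a) y ∂(ν a) ≤ (KL (ν a) (ν' a)).toReal := by
    intro a
    rw [KL, if_pos (hkl a)]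
    exact ENNReal.toReal_ofReal' .. ▸ le_max_left _ _
  set M : ℝ := 1 + Real.exp l * r'.P.real (r'.H T ⁻¹' B) with hM
  have hMpos : 0 < M := by positivity
  have hobs := fun t => r.integral_obs hν hσ hσ0 hσ1 t (measurable_obsLlr ν ν')
    (fun a => (hkl a).2)
  let S : r.Ω → ℝ := fun ω => ∑ t ∈ Finset.range T,
    obsLlr ν ν' (r.A (t + 1) ω, r.Y (t + 1) ω)
  have hSint : Integrable S r.P := integrable_finsetSum _ fun t _ => (hobs t).1
  have hSval : ∫ ω, S ω ∂r.P ≤ ∑ a, r.count T a * (KL (ν a) (ν' a)).toReal := by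
    have e : ∫ ω, S ω ∂r.P
        = ∑ a, r.count T a * ∫ y, llr (ν a) (ν' a) y ∂(ν a) := by
      simp only [S]
      rw [integral_finsetSum _ fun t _ => (hobs t).1,
        Finset.sum_congr rfl fun t _ => (hobs t).2, Finset.sum_comm]
      refine Finset.sum_congr rfl fun a _ => ?_
      rw [Run.count, Finset.sum_mul]
      rfl
    rw [e]
    refine Finset.sum_le_sum fun a _ => mul_le_mul_of_nonneg_left (hkl2 a) ?_
    exact Finset.sum_nonneg fun t _ => integral_nonneg fun ω => hσ0 _ _ _
  let g : (Fin T → Fin K × ℝ) → ℝ := B.indicator fun _ => l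
  have hgm : Measurable g := measurable_const.indicator hB
  let X : r.Ω → ℝ := fun ω => g (r.H T ω) - S ω
  have hgH : (fun ω => g (r.H T ω)) = (r.H T ⁻¹' B).indicator fun _ => l := by
    funext ω
    simp only [g, Set.indicator, Set.mem_preimage]
  have hHB := r.measurable_H T hB
  have hgint : Integrable (fun ω => g (r.H T ω)) r.P := by
    rw [hgH]
    exact (integrable_const l).indicator hHB
  have hXint : Integrable X r.P := hgint.sub hSint
  have hXval : ∫ ω, X ω ∂r.P = l * r.P.real (r.H T ⁻¹' B) - ∫ ω, S ω ∂r.P := by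
    simp only [X]
    rw [integral_sub hgint hSint, hgH, integral_indicator hHB]
    simp [mul_comm]
  -- `exp X` is the reweighted function `exp g`
  have hexp : ∫⁻ ω, ENNReal.ofReal (Real.exp (X ω)) ∂r.P ≤ ENNReal.ofReal M := by
    have hcm := change_of_measure r r' hν hν' hσ hσ0 hσ1 (fun a => (hkl a).1) T
      (fun h => ENNReal.ofReal (Real.exp (g h))) (Real.measurable_exp.comp hgm).ennreal_ofReal
    have e : ∀ ω, ENNReal.ofReal (Real.exp (g (r.H T ω))) * histWeight ν ν' T (r.H T ω)
        = ENNReal.ofReal (Real.exp (X ω)) := by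
      intro ω
      rw [histWeight, ← ENNReal.ofReal_prod_of_nonneg fun s _ => (Real.exp_pos _).le,
        ← Real.exp_sum, ← ENNReal.ofReal_mul (Real.exp_pos _).le, ← Real.exp_add,
        Finset.sum_neg_distrib, ← sub_eq_add_neg]
      congr 3
      exact Fin.sum_univ_eq_sum_range (fun t => obsLlr ν ν' (r.A (t + 1) ω, r.Y (t + 1) ω)) T
    simp_rw [e] at hcm
    refine hcm.trans ?_
    have hHB' := r'.measurable_H T hB
    calc ∫⁻ ω, ENNReal.ofReal (Real.exp (g (r'.H T ω))) ∂r'.P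
        ≤ ∫⁻ ω, (1 + (r'.H T ⁻¹' B).indicator (fun _ => ENNReal.ofReal (Real.exp l)) ω) ∂r'.P := by
          refine lintegral_mono fun ω => ?_
          by_cases h : r'.H T ω ∈ B
          · simp [g, h]
          · simp [g, h]
      _ = ENNReal.ofReal M := by
          rw [lintegral_add_left measurable_const, lintegral_indicator hHB']
          simp only [lintegral_const, measure_univ, mul_one, Measure.restrict_apply_univ]
          rw [hM, ENNReal.ofReal_add zero_le_one (by positivity),
            ENNReal.ofReal_mul (Real.exp_pos _).le, ofReal_measureReal, ENNReal.ofReal_one]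
  have hXm : AEStronglyMeasurable (fun ω => Real.exp (X ω)) r.P :=
    Real.continuous_exp.comp_aestronglyMeasurable hXint.1
  have hexpint : Integrable (fun ω => Real.exp (X ω)) r.P := by
    refine ⟨hXm, ?_⟩
    rw [hasFiniteIntegral_iff_ofReal (ae_of_all _ fun ω => (Real.exp_pos _).le)]
    exact hexp.trans_lt ENNReal.ofReal_lt_top
  have hexpval : ∫ ω, Real.exp (X ω) ∂r.P ≤ M := by
    rw [integral_eq_lintegral_of_nonneg_ae (ae_of_all _ fun ω => (Real.exp_pos _).le) hXm]
    exact ENNReal.toReal_le_of_le_ofReal hMpos.le hexp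
  -- Jensen's inequality for `exp`, from `1 + x ≤ exp x`
  have hJ : ∫ ω, (X ω - Real.log M + 1) ∂r.P ≤ ∫ ω, Real.exp (X ω) / M ∂r.P := by
    refine integral_mono ((hXint.sub (integrable_const _)).add (integrable_const _))
      (hexpint.div_const M) fun ω => ?_
    have := Real.add_one_le_exp (X ω - Real.log M)
    rwa [Real.exp_sub, Real.exp_log hMpos] at this
  have hJ1 : ∫ ω, (X ω - Real.log M + 1) ∂r.P = ∫ ω, X ω ∂r.P - Real.log M + 1 := by
    rw [integral_add (f := fun ω => X ω - Real.log M) (hXint.sub (integrable_const _))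
      (integrable_const _), integral_sub hXint (integrable_const _)]
    simp
  rw [hJ1, integral_div] at hJ
  have hJ2 : (∫ ω, Real.exp (X ω) ∂r.P) / M ≤ 1 := (div_le_one hMpos).2 hexpval
  linarith

end ChangeOfMeasure

/-! ### Gaps on the polytope -/

section Polytope

variable {K : ℕ} {ExtP : Finset (Fin K → ℝ)} {Pset : Set (Fin K → ℝ)}

lemma dot_le_of_hull (hPset : Pset = convexHull ℝ (ExtP : Set (Fin K → ℝ))) {v : Fin K → ℝ} {c : ℝ}
    (h : ∀ p ∈ ExtP, dot p v ≤ c) : ∀ q ∈ Pset, dot q v ≤ c := by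
  intro q hq
  rw [hPset] at hq
  have hlin : IsLinearMap ℝ fun q : Fin K → ℝ => dot q v := by
    constructor
    · intro x y
      simp [dot, add_mul, Finset.sum_add_distrib]
    · intro b x
      simp [dot, Finset.mul_sum, mul_assoc]
  exact convexHull_min (t := {q | dot q v ≤ c}) (fun p hp => h p hp)
    (convex_halfSpace_le hlin c) hq

lemma gap_nonneg (hPset : Pset = convexHull ℝ (ExtP : Set (Fin K → ℝ))) (ν : Fin K → Measure ℝ)
    {q : Fin K → ℝ} (hq : q ∈ Pset) : 0 ≤ gap Pset ν q := by
  have hb : BddAbove {x | ∃ q ∈ Pset, dot q (armMean ν) = x} := by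
    refine ⟨∑ p ∈ ExtP, |dot p (armMean ν)|, ?_⟩
    rintro _ ⟨q, hq, rfl⟩
    refine dot_le_of_hull hPset (fun p hp => ?_) q hq
    exact (le_abs_self _).trans
      (Finset.single_le_sum (f := fun p => |dot p (armMean ν)|) (fun _ _ => abs_nonneg _) hp)
  exact sub_nonneg.2 (le_csSup hb ⟨q, hq, rfl⟩)

lemma gap_pos (hPset : Pset = convexHull ℝ (ExtP : Set (Fin K → ℝ))) {ν : Fin K → Measure ℝ}
    {q : Fin K → ℝ} (hq : q ∈ Pset) (hopt : q ∉ Opt Pset ν) : 0 < gap Pset ν q := by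
  have : ∃ q' ∈ Pset, dot q (armMean ν) < dot q' (armMean ν) := by
    by_contra! hcon
    exact hopt ⟨hq, hcon⟩
  obtain ⟨q', hq', hlt⟩ := this
  have h0 := gap_nonneg hPset ν hq'
  unfold gap at h0 ⊢
  linarith

lemma gap_opt {ν : Fin K → Measure ℝ} {q : Fin K → ℝ} (hopt : q ∈ Opt Pset ν) :
    gap Pset ν q = 0 := by
  have : IsGreatest {x | ∃ q ∈ Pset, dot q (armMean ν) = x} (dot q (armMean ν)) := by
    refine ⟨⟨q, hopt.1, rfl⟩, ?_⟩
    rintro _ ⟨p, hp, rfl⟩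
    exact hopt.2 p hp
  rw [gap, this.csSup_eq, sub_self]

/-- Since `pstar` is the unique optimal action for `ν`, an action with small `ν`-gap is close to
`pstar`, hence has a `ν'`-gap almost as large as that of `pstar`. -/
lemma gap_compare (hPset : Pset = convexHull ℝ (ExtP : Set (Fin K → ℝ)))
    {ν : Fin K → Measure ℝ} (ν' : Fin K → Measure ℝ) {pstar : Fin K → ℝ}
    (hstar : Opt Pset ν = {pstar}) :
    ∃ L : ℝ, 0 < L ∧ ∀ q ∈ Pset, gap Pset ν' pstar ≤ gap Pset ν' q + L * gap Pset ν q := by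
  have hsub : ∀ p ∈ ExtP, p ∈ Pset := fun p hp => hPset ▸ subset_convexHull ℝ _ hp
  have hstarP : pstar ∈ Pset := by
    have : pstar ∈ Opt Pset ν := by rw [hstar]; rfl
    exact this.1
  have hδ := gap_nonneg hPset ν' hstarP
  set δ := gap Pset ν' pstar with hδdef
  have hterm : ∀ p ∈ ExtP, 0 ≤ δ / gap Pset ν p :=
    fun p hp => div_nonneg hδ (gap_nonneg hPset ν (hsub p hp))
  set L : ℝ := 1 + ∑ p ∈ ExtP, δ / gap Pset ν p with hL
  have hLpos : 0 < L := by
    have := Finset.sum_nonneg hterm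
    linarith
  refine ⟨L, hLpos, fun q hq => ?_⟩
  have hext : ∀ p ∈ ExtP, δ ≤ gap Pset ν' p + L * gap Pset ν p := by
    intro p hp
    have h0 := gap_nonneg hPset ν' (hsub p hp)
    by_cases hps : p = pstar
    · have := mul_nonneg hLpos.le (gap_nonneg hPset ν (hsub p hp))
      rw [hps] at this ⊢
      linarith
    · have hpos : 0 < gap Pset ν p := by
        refine gap_pos hPset (hsub p hp) ?_
        rw [hstar]
        exact hps
      have h1 : δ / gap Pset ν p ≤ L := by
        have := Finset.single_le_sum hterm hp
        linarith
      have h2 := (div_le_iff₀ hpos).1 h1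
      linarith
  -- both sides are affine in the action, so the inequality extends to the convex hull
  have haff : ∀ p, dot p (fun a => armMean ν' a + L * armMean ν a)
      = dot p (armMean ν') + L * dot p (armMean ν) := by
    intro p
    simp only [dot, mul_add, Finset.sum_add_distrib, Finset.mul_sum]
    congr 1
    exact Finset.sum_congr rfl fun a _ => by ring
  have := dot_le_of_hull hPset (v := fun a => armMean ν' a + L * armMean ν a)
    (c := sSup {x | ∃ q ∈ Pset, dot q (armMean ν') = x}
      + L * sSup {x | ∃ q ∈ Pset, dot q (armMean ν) = x} - δ)
    (fun p hp => by
      have := hext p hp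
      rw [haff]
      unfold gap at this
      linarith) q hq
  rw [haff] at this
  unfold gap
  linarith

end Polytope

/-! ### Regret and the information bound -/

section Regret

variable {K : ℕ} {ExtP : Finset (Fin K → ℝ)} {Pset : Set (Fin K → ℝ)}
  {σ : (t : ℕ) → (Fin t → Fin K × ℝ) → (Fin K → ℝ)} {ν ν' : Fin K → Measure ℝ}

lemma Run.integrable_play (r : Run K σ ν)
    (hσ : ∀ t, Measurable (σ t)) (hσ0 : ∀ t h a, 0 ≤ σ t h a) (hσ1 : ∀ t h a, σ t h a ≤ 1)
    (t : ℕ) (a : Fin K) : Integrable (fun ω => σ t (r.H t ω) a) r.P := by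
  have := r.isProb
  exact Integrable.of_bound
    (((measurable_pi_apply a).comp (hσ t)).comp (r.measurable_H t)).aestronglyMeasurable 1
    (ae_of_all _ fun ω => by
      rw [Real.norm_eq_abs, abs_of_nonneg (hσ0 _ _ _)]; exact hσ1 _ _ _)

lemma Run.integrable_gap (r : Run K σ ν)
    (hσ : ∀ t, Measurable (σ t)) (hσ0 : ∀ t h a, 0 ≤ σ t h a) (hσ1 : ∀ t h a, σ t h a ≤ 1)
    (ρ : Fin K → Measure ℝ) (t : ℕ) :
    Integrable (fun ω => gap Pset ρ (σ t (r.H t ω))) r.P := by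
  have := r.isProb
  unfold gap dot
  exact (integrable_const _).sub
    (integrable_finsetSum _ fun a _ => (r.integrable_play hσ hσ0 hσ1 t a).mul_const _)

lemma Run.regret_eq_integral (r : Run K σ ν)
    (hσ : ∀ t, Measurable (σ t)) (hσ0 : ∀ t h a, 0 ≤ σ t h a) (hσ1 : ∀ t h a, σ t h a ≤ 1)
    (T : ℕ) :
    r.regret Pset T = ∫ ω, ∑ t ∈ Finset.range T, gap Pset ν (σ t (r.H t ω)) ∂r.P := by
  have := r.isProb
  have hshift : ∀ ω, ∑ t ∈ Finset.Icc 1 T, dot (r.play t ω) (armMean ν)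
      = ∑ t ∈ Finset.range T, dot (σ t (r.H t ω)) (armMean ν) := by
    intro ω
    induction T with
    | zero => simp
    | succ n ih =>
      rw [Finset.sum_Icc_succ_top (by omega), ih, Finset.sum_range_succ]
      rfl
  have hd : ∀ t, Integrable (fun ω => dot (σ t (r.H t ω)) (armMean ν)) r.P := fun t => by
    unfold dot
    exact integrable_finsetSum _ fun a _ => (r.integrable_play hσ hσ0 hσ1 t a).mul_const _
  unfold Run.regret gap
  simp_rw [hshift, Finset.sum_sub_distrib]
  rw [integral_sub (integrable_const _) (integrable_finsetSum _ fun t _ => hd t)]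
  simp

/-- The expected play over `T` rounds is a nonnegative combination of the points of `ExtP`:
each expected mixed action lies in the (closed, convex) polytope. -/
lemma Run.exists_weights (r : Run K σ ν)
    (hPset : Pset = convexHull ℝ (ExtP : Set (Fin K → ℝ)))
    (hσ : ∀ t, Measurable (σ t)) (hσ0 : ∀ t h a, 0 ≤ σ t h a) (hσ1 : ∀ t h a, σ t h a ≤ 1)
    (hσmem : ∀ t h, σ t h ∈ Pset) (T : ℕ) :
    ∃ N : (Fin K → ℝ) → ℝ, (∀ p ∈ ExtP, 0 ≤ N p) ∧
      (∀ a, r.count T a = ∑ p ∈ ExtP, N p * p a) ∧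
      r.regret Pset T = ∑ p ∈ ExtP, gap Pset ν p * N p := by
  have := r.isProb
  have hint : ∀ t, Integrable (fun ω => σ t (r.H t ω)) r.P :=
    fun t => Integrable.of_eval fun a => r.integrable_play hσ hσ0 hσ1 t a
  have hw : ∀ t, ∃ w : (Fin K → ℝ) → ℝ, (∀ p ∈ ExtP, 0 ≤ w p) ∧ ∑ p ∈ ExtP, w p = 1 ∧
      ∀ a, ∫ ω, σ t (r.H t ω) a ∂r.P = ∑ p ∈ ExtP, w p * p a := by
    intro t
    have hmem : ∫ ω, σ t (r.H t ω) ∂r.P ∈ convexHull ℝ (ExtP : Set (Fin K → ℝ)) :=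
      (convex_convexHull ℝ _).integral_mem
        (ExtP.finite_toSet.isCompact_convexHull (𝕜 := ℝ)).isClosed
        (ae_of_all _ fun ω => hPset ▸ hσmem t _) (hint t)
    obtain ⟨w, hw0, hw1, hw2⟩ := Finset.mem_convexHull'.1 hmem
    refine ⟨w, hw0, hw1, fun a => ?_⟩
    rw [← eval_integral fun a => r.integrable_play hσ hσ0 hσ1 t a, ← hw2]
    simp
  choose w hw0 hw1 hw2 using hw
  have hcount : ∀ a, r.count T a = ∑ p ∈ ExtP, (∑ t ∈ Finset.range T, w t p) * p a := by
    intro a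
    rw [Run.count, Finset.sum_congr rfl fun t _ => hw2 t a, Finset.sum_comm]
    exact Finset.sum_congr rfl fun p _ => by rw [Finset.sum_mul]
  refine ⟨fun p => ∑ t ∈ Finset.range T, w t p,
    fun p hp => Finset.sum_nonneg fun t _ => hw0 t p hp, hcount, ?_⟩
  rw [r.regret_eq_integral hσ hσ0 hσ1,
    integral_finsetSum _ fun t _ => r.integrable_gap hσ hσ0 hσ1 ν t]
  simp_rw [Finset.mul_sum]
  rw [Finset.sum_comm]
  refine Finset.sum_congr rfl fun t _ => ?_
  unfold gap dot
  rw [integral_sub (integrable_const _)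
    (integrable_finsetSum _ fun a _ => (r.integrable_play hσ hσ0 hσ1 t a).mul_const _),
    integral_finsetSum _ fun a _ => (r.integrable_play hσ hσ0 hσ1 t a).mul_const _]
  simp_rw [integral_mul_const, hw2, sub_mul, Finset.sum_sub_distrib]
  congr 1
  · rw [← Finset.mul_sum, hw1]; simp
  · simp_rw [Finset.sum_mul]
    rw [Finset.sum_comm]
    exact Finset.sum_congr rfl fun p _ => Finset.sum_congr rfl fun a _ => by ring

/-- Non-asymptotic information bound. The event to which the fundamental inequality is applied is
that the cumulative `ν`-gap stays below a linear threshold: it is likely under `ν`, and unlikely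
under `ν'` since it forces a linear cumulative `ν'`-gap. -/
lemma information_bound (r : Run K σ ν) (r' : Run K σ ν')
    (hPset : Pset = convexHull ℝ (ExtP : Set (Fin K → ℝ)))
    (hν : ∀ a, IsProbabilityMeasure (ν a)) (hν' : ∀ a, IsProbabilityMeasure (ν' a))
    (hσ : ∀ t, Measurable (σ t)) (hσ0 : ∀ t h a, 0 ≤ σ t h a) (hσ1 : ∀ t h a, σ t h a ≤ 1)
    (hσmem : ∀ t h, σ t h ∈ Pset) {pstar : Fin K → ℝ} (hstar : Opt Pset ν = {pstar})
    (hnot : pstar ∉ Opt Pset ν') (hKL : ∀ a, KL (ν a) (ν' a) ≠ ⊤) :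
    ∃ ε > 0, ∃ κ > 0, ∀ T : ℕ, 0 < T → ∀ l : ℝ, 0 ≤ l →
      l * (1 - r.regret Pset T / (T * ε)) - Real.exp l * (r'.regret Pset T / (T * κ))
        ≤ ∑ a, r.count T a * (KL (ν a) (ν' a)).toReal := by
  have := r.isProb
  have := r'.isProb
  have hstarP : pstar ∈ Pset := by
    have : pstar ∈ Opt Pset ν := by rw [hstar]; rfl
    exact this.1
  have hδ : 0 < gap Pset ν' pstar := gap_pos hPset hstarP hnot
  obtain ⟨L, hL, hcmp⟩ := gap_compare hPset ν' hstar
  set δ := gap Pset ν' pstar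
  refine ⟨δ / (2 * L), by positivity, δ / 2, by positivity, fun T hT l hl => ?_⟩
  have hT' : (0 : ℝ) < T := Nat.cast_pos.2 hT
  set ε := δ / (2 * L) with hε
  have hεpos : 0 < ε := by positivity
  let f : (Fin T → Fin K × ℝ) → ℝ :=
    fun h => ∑ t : Fin T, gap Pset ν (σ t (fun s : Fin t => h ⟨s.1, s.2.trans t.2⟩))
  have hfm : Measurable f := by
    refine Finset.measurable_fun_sum _ fun t _ => ?_
    unfold gap dot
    refine measurable_const.sub (Finset.measurable_fun_sum _ fun a _ => ?_)
    refine Measurable.mul_const ?_ _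
    exact ((measurable_pi_apply a).comp (hσ t)).comp
      (measurable_pi_lambda _ fun s => measurable_pi_apply _)
  have hfr : ∀ ω, f (r.H T ω) = ∑ t ∈ Finset.range T, gap Pset ν (σ t (r.H t ω)) := fun ω =>
    Fin.sum_univ_eq_sum_range (fun t => gap Pset ν (σ t (r.H t ω))) T
  have hfr' : ∀ ω, f (r'.H T ω) = ∑ t ∈ Finset.range T, gap Pset ν (σ t (r'.H t ω)) := fun ω =>
    Fin.sum_univ_eq_sum_range (fun t => gap Pset ν (σ t (r'.H t ω))) T
  let B : Set (Fin T → Fin K × ℝ) := {h | f h < T * ε}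
  have hB : MeasurableSet B := measurableSet_lt hfm measurable_const
  have hmain := fundamental_ineq r r' hν hν' hσ hσ0 hσ1 hKL T hB l
  -- Markov's inequality under `ν`
  have hprob : 1 - r.regret Pset T / (T * ε) ≤ r.P.real (r.H T ⁻¹' B) := by
    have hmk := mul_meas_ge_le_integral_of_nonneg (μ := r.P)
      (f := fun ω => ∑ t ∈ Finset.range T, gap Pset ν (σ t (r.H t ω)))
      (ae_of_all _ fun ω => Finset.sum_nonneg fun t _ => gap_nonneg hPset ν (hσmem _ _))
      (integrable_finsetSum _ fun t _ => r.integrable_gap hσ hσ0 hσ1 ν t) (T * ε)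
    rw [← r.regret_eq_integral hσ hσ0 hσ1] at hmk
    have hc : {ω | T * ε ≤ ∑ t ∈ Finset.range T, gap Pset ν (σ t (r.H t ω))}
        = (r.H T ⁻¹' B)ᶜ := by
      ext ω
      simp [B, hfr]
    rw [hc, probReal_compl_eq_one_sub (r.measurable_H T hB), mul_comm,
      ← le_div_iff₀ (by positivity)] at hmk
    linarith
  -- Markov's inequality under `ν'`
  have hprob' : r'.P.real (r'.H T ⁻¹' B) ≤ r'.regret Pset T / (T * (δ / 2)) := by
    have hmk := mul_meas_ge_le_integral_of_nonneg (μ := r'.P)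
      (f := fun ω => ∑ t ∈ Finset.range T, gap Pset ν' (σ t (r'.H t ω)))
      (ae_of_all _ fun ω => Finset.sum_nonneg fun t _ => gap_nonneg hPset ν' (hσmem _ _))
      (integrable_finsetSum _ fun t _ => r'.integrable_gap hσ hσ0 hσ1 ν' t) (T * (δ / 2))
    rw [← r'.regret_eq_integral hσ hσ0 hσ1, mul_comm, ← le_div_iff₀ (by positivity)] at hmk
    refine le_trans (measureReal_mono ?_) hmk
    intro ω hω
    have hω' : ∑ t ∈ Finset.range T, gap Pset ν (σ t (r'.H t ω)) < T * ε := by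
      rw [← hfr']; exact hω
    have hsum : ∑ t ∈ Finset.range T, δ ≤ ∑ t ∈ Finset.range T,
        (gap Pset ν' (σ t (r'.H t ω)) + L * gap Pset ν (σ t (r'.H t ω))) :=
      Finset.sum_le_sum fun t _ => hcmp _ (hσmem _ _)
    rw [Finset.sum_add_distrib, ← Finset.mul_sum, Finset.sum_const, Finset.card_range,
      nsmul_eq_mul] at hsum
    have hLε : L * (T * ε) = T * (δ / 2) := by
      rw [hε]; field_simp
    have := mul_lt_mul_of_pos_left hω' hL
    change T * (δ / 2) ≤ ∑ t ∈ Finset.range T, gap Pset ν' (σ t (r'.H t ω))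
    linarith
  have h1 := mul_le_mul_of_nonneg_left hprob hl
  have h2 := mul_le_mul_of_nonneg_left hprob' (Real.exp_pos l).le
  have h3 : Real.log (1 + Real.exp l * r'.P.real (r'.H T ⁻¹' B))
      ≤ Real.exp l * r'.P.real (r'.H T ⁻¹' B) := by
    have := Real.log_le_sub_one_of_pos
      (show 0 < 1 + Real.exp l * r'.P.real (r'.H T ⁻¹' B) by positivity)
    linarith
  linarith

open Filter Topology in
/-- Asymptotic information bound: taking `l = (1 - α) log T` in `information_bound`. -/
lemma information_asymp (r : Run K σ ν) (r' : Run K σ ν')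
    (hPset : Pset = convexHull ℝ (ExtP : Set (Fin K → ℝ)))
    (hν : ∀ a, IsProbabilityMeasure (ν a)) (hν' : ∀ a, IsProbabilityMeasure (ν' a))
    (hσ : ∀ t, Measurable (σ t)) (hσ0 : ∀ t h a, 0 ≤ σ t h a) (hσ1 : ∀ t h a, σ t h a ≤ 1)
    (hσmem : ∀ t h, σ t h ∈ Pset) {pstar : Fin K → ℝ} (hstar : Opt Pset ν = {pstar})
    (hnot : pstar ∉ Opt Pset ν') (hKL : ∀ a, KL (ν a) (ν' a) ≠ ⊤)
    (hr : ∀ α : ℝ, 0 < α →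
      Tendsto (fun T : ℕ => r.regret Pset T / (T : ℝ) ^ α) atTop (𝓝 0))
    (hr' : ∀ α : ℝ, 0 < α →
      Tendsto (fun T : ℕ => r'.regret Pset T / (T : ℝ) ^ α) atTop (𝓝 0))
    {α : ℝ} (hα : 0 < α) (hα1 : α < 1) :
    ∃ e : ℕ → ℝ, Tendsto e atTop (𝓝 (1 - α)) ∧
      ∀ᶠ T : ℕ in atTop,
        e T ≤ (∑ a, r.count T a * (KL (ν a) (ν' a)).toReal) / Real.log T := by
  obtain ⟨ε, hε, κ, hκ, hbd⟩ :=
    information_bound r r' hPset hν hν' hσ hσ0 hσ1 hσmem hstar hnot hKL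
  have hlog : Tendsto (fun T : ℕ => Real.log T) atTop atTop :=
    Real.tendsto_log_atTop.comp tendsto_natCast_atTop_atTop
  refine ⟨fun T => (1 - α) * (1 - r.regret Pset T / (T : ℝ) ^ (1 : ℝ) / ε)
    - r'.regret Pset T / (T : ℝ) ^ α / κ / Real.log T, ?_, ?_⟩
  · have h1 := ((((hr 1 one_pos).div_const ε).const_sub 1).const_mul (1 - α)).sub
      (((hr' α hα).div_const κ).div_atTop hlog)
    simpa using h1
  · filter_upwards [eventually_gt_atTop 1] with T hT
    have hT' : (1 : ℝ) < T := by exact_mod_cast hT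
    have hT0 : (0 : ℝ) < T := by linarith
    have hl : 0 < Real.log T := Real.log_pos hT'
    have h := hbd T (by omega) ((1 - α) * Real.log T)
      (mul_nonneg (by linarith) hl.le)
    rw [le_div_iff₀ hl]
    refine le_trans (le_of_eq ?_) h
    have he : Real.exp ((1 - α) * Real.log T) = T / (T : ℝ) ^ α := by
      rw [mul_comm, ← Real.rpow_def_of_pos hT0, Real.rpow_sub hT0, Real.rpow_one]
    have hTα : (0 : ℝ) < (T : ℝ) ^ α := Real.rpow_pos_of_pos hT0 _
    rw [he, Real.rpow_one]
    field_simp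

end Regret

/-! ### The lower bound -/

lemma KL_self (μ : Measure ℝ) [IsProbabilityMeasure μ] : KL μ μ = 0 := by
  have h : llr μ μ =ᵐ[μ] fun _ => 0 := llr_self μ
  have hi : Integrable (llr μ μ) μ := (integrable_congr h).2 (integrable_const 0)
  rw [KL, if_pos ⟨Measure.AbsolutelyContinuous.rfl, hi⟩, integral_congr_ae h]
  simp

/-- Theorem 2, first part: for every uniformly fast convergent strategy
and every bandit problem `ν` in `D` with a unique optimal mixed action `p★(ν)`,
`liminf_{T→∞} R_T(ν)/log T ≥ c(Ext(𝒫), ν)`, where `c(Ext(𝒫), ν) ∈ [0, ∞)` is the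
constrained infimum `cConst`. -/
theorem regret_liminf_lower_bound
    {K : ℕ} (hK : 1 ≤ K)
    -- the model D: probability measures on ℝ with finite first moments
    (D : Set (Measure ℝ)) (hDprob : ∀ ρ ∈ D, IsProbabilityMeasure ρ)
    (hDmom : ∀ ρ ∈ D, Integrable (fun x : ℝ => x) ρ)
    -- the diversity-preserving set: a finite polytope putting mass on each arm
    (ExtP : Finset (Fin K → ℝ)) (hExtNe : ExtP.Nonempty)
    (hExtProb : ∀ p ∈ ExtP, (∀ a, 0 ≤ p a) ∧ ∑ a, p a = 1)
    (Pset : Set (Fin K → ℝ)) (hPset : Pset = convexHull ℝ (ExtP : Set (Fin K → ℝ)))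
    (hmass : ∀ a : Fin K, ∃ p ∈ ExtP, 0 < p a)
    -- Assumption (ALT)
    (hALT : AssumptionALT D Pset)
    -- a strategy: measurable maps from histories to mixed actions in 𝒫
    (σ : (t : ℕ) → (Fin t → Fin K × ℝ) → (Fin K → ℝ))
    (hσmeas : ∀ t, Measurable (σ t)) (hσmem : ∀ t h, σ t h ∈ Pset)
    -- its runs on the problems of the model, assumed uniformly fast convergent
    (runs : ∀ ν' : Fin K → Measure ℝ, (∀ a, ν' a ∈ D) → Run K σ ν')
    (hUFC : UFC σ D Pset runs)
    -- a bandit problem ν in D with a unique optimal mixed action p★(ν)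
    (ν : Fin K → Measure ℝ) (hν : ∀ a, ν a ∈ D)
    (pstar : Fin K → ℝ) (hstar : Opt Pset ν = {pstar}) (hstarExt : pstar ∈ ExtP) :
    0 ≤ cConst D ExtP Pset ν pstar ∧
      ENNReal.ofReal (cConst D ExtP Pset ν pstar)
        ≤ Filter.liminf
            (fun T : ℕ => ENNReal.ofReal ((runs ν hν).regret Pset T / Real.log T))
            Filter.atTop := by
  have hsub : ∀ p ∈ ExtP, p ∈ Pset := fun p hp => hPset ▸ subset_convexHull ℝ _ hp
  have hgap0 : ∀ p ∈ ExtP, 0 ≤ gap Pset ν p := fun p hp => gap_nonneg hPset ν (hsub p hp)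
  have hlb : ∀ x ∈ {x | ∃ n : (Fin K → ℝ) → ℝ, (∀ p, 0 ≤ n p) ∧
      (∀ ν' ∈ Conf D Pset ν pstar,
        1 ≤ ∑ p ∈ ExtP.erase pstar, ENNReal.ofReal (n p) *
          ∑ a : Fin K, if pstar a = 0 then ENNReal.ofReal (p a) * KL (ν a) (ν' a) else 0) ∧
      x = ∑ p ∈ ExtP, gap Pset ν p * n p}, 0 ≤ x := by
    rintro _ ⟨n, hn, -, rfl⟩
    exact Finset.sum_nonneg fun p hp => mul_nonneg (hgap0 p hp) (hn p)
  refine ⟨Real.sInf_nonneg hlb, ?_⟩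
  by_contra! hlt
  obtain ⟨d, hd1, hd2⟩ := exists_between hlt
  have hdtop : d ≠ ⊤ := (hd2.trans ENNReal.ofReal_lt_top).ne
  set r := runs ν hν with hrdef
  set c := cConst D ExtP Pset ν pstar with hc
  have hdc : d.toReal < c := (ENNReal.lt_ofReal_iff_toReal_lt hdtop).1 hd2
  have hfreq := Filter.frequently_lt_of_liminf_lt (by isBoundedDefault) hd1
  -- basic bounds on the strategy
  have hsimplex : ∀ q ∈ Pset, ∀ a, 0 ≤ q a ∧ q a ≤ 1 := by
    intro q hq a
    have hdot : ∀ (b : ℝ) (p : Fin K → ℝ), dot p (Pi.single a b) = p a * b := by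
      intro b p
      rw [dot, Finset.sum_eq_single a]
      · simp
      · intro a' _ hne
        simp [hne]
      · simp
    have h1 := dot_le_of_hull hPset (v := Pi.single a 1) (c := 1) (fun p hp => by
      rw [hdot, mul_one, ← (hExtProb p hp).2]
      exact Finset.single_le_sum (fun a _ => (hExtProb p hp).1 a) (Finset.mem_univ a)) q hq
    have h2 := dot_le_of_hull hPset (v := Pi.single a (-1)) (c := 0) (fun p hp => by
      rw [hdot]
      have := (hExtProb p hp).1 a
      linarith) q hq
    rw [hdot] at h1 h2
    constructor <;> linarith
  have hσ0 : ∀ t h a, 0 ≤ σ t h a := fun t h a => (hsimplex _ (hσmem t h) a).1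
  have hσ1 : ∀ t h a, σ t h a ≤ 1 := fun t h a => (hsimplex _ (hσmem t h) a).2
  have hνp : ∀ a, IsProbabilityMeasure (ν a) := fun a => hDprob _ (hν a)
  have hgapstar : gap Pset ν pstar = 0 := gap_opt (by rw [hstar]; rfl)
  have hgappos : ∀ p ∈ ExtP.erase pstar, 0 < gap Pset ν p := by
    intro p hp
    refine gap_pos hPset (hsub p (Finset.mem_of_mem_erase hp)) ?_
    rw [hstar]
    exact Finset.ne_of_mem_erase hp
  choose N hN0 hN1 hN2 using fun T =>
    r.exists_weights hPset hσmeas hσ0 hσ1 hσmem T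
  have hN2' : ∀ T, r.regret Pset T = ∑ p ∈ ExtP.erase pstar, gap Pset ν p * N T p := by
    intro T
    rw [hN2 T, ← Finset.add_sum_erase _ _ hstarExt, hgapstar, zero_mul, zero_add]
  -- an ultrafilter of times along which the normalised regret stays below `d < c`
  obtain ⟨U, hUS, hUtop⟩ : ∃ U : Ultrafilter ℕ,
      (∀ᶠ T in (U : Filter ℕ), ENNReal.ofReal (r.regret Pset T / Real.log T) < d) ∧
        (U : Filter ℕ) ≤ Filter.atTop := by
    have : (Filter.atTop ⊓ Filter.principal
        {T : ℕ | ENNReal.ofReal (r.regret Pset T / Real.log T) < d}).NeBot :=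
      Filter.frequently_mem_iff_neBot.1 hfreq
    obtain ⟨U, hU⟩ := Ultrafilter.exists_le (Filter.atTop ⊓ Filter.principal
        {T : ℕ | ENNReal.ofReal (r.regret Pset T / Real.log T) < d})
    exact ⟨U, Filter.le_principal_iff.1 (hU.trans inf_le_right), hU.trans inf_le_left⟩
  have hlogpos : ∀ᶠ T : ℕ in (U : Filter ℕ), 0 < Real.log T := by
    refine Filter.Eventually.filter_mono hUtop ?_
    filter_upwards [Filter.eventually_gt_atTop 1] with T hT
    exact Real.log_pos (by exact_mod_cast hT)
  have hreg : ∀ᶠ T : ℕ in (U : Filter ℕ),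
      ∑ p ∈ ExtP.erase pstar, gap Pset ν p * (N T p / Real.log T) ≤ d.toReal := by
    filter_upwards [hUS] with T hT
    have h1 := (ENNReal.ofReal_le_iff_le_toReal hdtop).1 hT.le
    rw [hN2', Finset.sum_div] at h1
    simpa only [mul_div_assoc] using h1
  have hlim : ∀ p ∈ ExtP.erase pstar, ∃ x : ℝ, 0 ≤ x ∧
      Filter.Tendsto (fun T => N T p / Real.log T) U (nhds x) := by
    intro p hp
    have hmem : ∀ᶠ T in (U : Filter ℕ),
        N T p / Real.log T ∈ Set.Icc 0 (d.toReal / gap Pset ν p) := by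
      filter_upwards [hlogpos, hreg] with T hT hR
      refine ⟨div_nonneg (hN0 T p (Finset.mem_of_mem_erase hp)) hT.le, ?_⟩
      rw [le_div_iff₀ (hgappos p hp), mul_comm]
      refine le_trans ?_ hR
      exact Finset.single_le_sum (f := fun p => gap Pset ν p * (N T p / Real.log T))
        (fun q hq => mul_nonneg (hgappos q hq).le
          (div_nonneg (hN0 T q (Finset.mem_of_mem_erase hq)) hT.le)) hp
    obtain ⟨x, hx, hle⟩ := isCompact_Icc.ultrafilter_le_nhds'
      (U.map fun T => N T p / Real.log T) hmem
    exact ⟨x, hx.1, hle⟩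
  choose! n hn0 hnlim using hlim
  have hncost : ∑ p ∈ ExtP.erase pstar, gap Pset ν p * n p ≤ d.toReal :=
    le_of_tendsto (tendsto_finsetSum _ fun p hp => (hnlim p hp).const_mul _) hreg
  -- the limit `n` satisfies the constraints of all alternatives at finite divergence
  have hfin : ∀ ν' ∈ Conf D Pset ν pstar, (∀ a, KL (ν a) (ν' a) ≠ ⊤) →
      1 ≤ ∑ p ∈ ExtP.erase pstar, n p *
        ∑ a, if pstar a = 0 then p a * (KL (ν a) (ν' a)).toReal else 0 := by
    intro ν' hν' hKL
    have hcount : ∀ T, ∑ a, r.count T a * (KL (ν a) (ν' a)).toReal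
        = ∑ p ∈ ExtP.erase pstar, N T p *
          ∑ a, if pstar a = 0 then p a * (KL (ν a) (ν' a)).toReal else 0 := by
      intro T
      have h1 : ∀ a, r.count T a * (KL (ν a) (ν' a)).toReal
          = ∑ p ∈ ExtP, N T p *
            (if pstar a = 0 then p a * (KL (ν a) (ν' a)).toReal else 0) := by
        intro a
        rw [hN1 T a, Finset.sum_mul]
        refine Finset.sum_congr rfl fun p _ => ?_
        split_ifs with h
        · ring
        · have := hνp a
          rw [← (hν'.2.2 a).resolve_left h, KL_self]
          simp
      simp_rw [h1]
      rw [Finset.sum_comm]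
      simp_rw [← Finset.mul_sum]
      rw [← Finset.add_sum_erase _ _ hstarExt]
      have h2 : ∑ a, (if pstar a = 0 then pstar a * (KL (ν a) (ν' a)).toReal else 0) = 0 :=
        Finset.sum_eq_zero fun a _ => by
          split_ifs with h
          · rw [h, zero_mul]
          · rfl
      rw [h2, mul_zero, zero_add]
    have hα : ∀ α : ℝ, 0 < α → α < 1 → 1 - α ≤ ∑ p ∈ ExtP.erase pstar, n p *
        ∑ a, if pstar a = 0 then p a * (KL (ν a) (ν' a)).toReal else 0 := by
      intro α hα0 hα1
      obtain ⟨e, he, hle⟩ := information_asymp r (runs ν' hν'.1) hPset hνp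
        (fun a => hDprob _ (hν'.1 a)) hσmeas hσ0 hσ1 hσmem hstar hν'.2.1 hKL
        (hUFC ν hν) (hUFC ν' hν'.1) hα0 hα1
      refine le_of_tendsto_of_tendsto (he.mono_left hUtop)
        (tendsto_finsetSum _ fun p hp => (hnlim p hp).mul_const _) ?_
      filter_upwards [hle.filter_mono hUtop] with T hT
      rw [hcount, Finset.sum_div] at hT
      refine hT.trans (le_of_eq (Finset.sum_congr rfl fun p _ => ?_))
      ring
    by_contra! hcon
    set x := ∑ p ∈ ExtP.erase pstar, n p *
      ∑ a, if pstar a = 0 then p a * (KL (ν a) (ν' a)).toReal else 0 with hx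
    have hx0 : 0 ≤ x := by
      have := hα (1 / 2) (by norm_num) (by norm_num)
      linarith
    have := hα ((1 - x) / 2) (by linarith) (by linarith)
    linarith
  -- adding `η > 0` to every coordinate also meets the constraints at infinite divergence,
  -- because each arm is charged by some point of `ExtP`
  have hbound : ∀ η : ℝ, 0 < η →
      c ≤ ∑ p ∈ ExtP.erase pstar, gap Pset ν p * n p + η * ∑ p ∈ ExtP, gap Pset ν p := by
    intro η hη
    refine csInf_le ⟨0, hlb⟩ ⟨fun p => (if p ∈ ExtP.erase pstar then n p else 0) + η,
      fun p => ?_, fun ν' hν' => ?_, ?_⟩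
    · beta_reduce
      split_ifs with h
      · have := hn0 p h
        linarith
      · linarith
    · by_cases hKL : ∀ a, KL (ν a) (ν' a) ≠ ⊤
      · have h1 := hfin ν' hν' hKL
        have hk0 : ∀ p ∈ ExtP.erase pstar, ∀ a,
            0 ≤ (if pstar a = 0 then p a * (KL (ν a) (ν' a)).toReal else 0) := by
          intro p hp a
          split_ifs
          · exact mul_nonneg ((hExtProb p (Finset.mem_of_mem_erase hp)).1 a)
              ENNReal.toReal_nonneg
          · exact le_rfl
        have hk : ∀ p ∈ ExtP.erase pstar,
            (∑ a : Fin K, if pstar a = 0 then ENNReal.ofReal (p a) * KL (ν a) (ν' a) else 0)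
              = ENNReal.ofReal
                (∑ a, if pstar a = 0 then p a * (KL (ν a) (ν' a)).toReal else 0) := by
          intro p hp
          rw [ENNReal.ofReal_sum_of_nonneg fun a _ => hk0 p hp a]
          refine Finset.sum_congr rfl fun a _ => ?_
          split_ifs
          · rw [ENNReal.ofReal_mul ((hExtProb p (Finset.mem_of_mem_erase hp)).1 a),
              ENNReal.ofReal_toReal (hKL a)]
          · simp
        calc (1 : ℝ≥0∞) = ENNReal.ofReal 1 := ENNReal.ofReal_one.symm
          _ ≤ ENNReal.ofReal (∑ p ∈ ExtP.erase pstar, n p *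
              ∑ a, if pstar a = 0 then p a * (KL (ν a) (ν' a)).toReal else 0) :=
            ENNReal.ofReal_le_ofReal h1
          _ = ∑ p ∈ ExtP.erase pstar, ENNReal.ofReal (n p *
              ∑ a, if pstar a = 0 then p a * (KL (ν a) (ν' a)).toReal else 0) :=
            ENNReal.ofReal_sum_of_nonneg fun p hp =>
              mul_nonneg (hn0 p hp) (Finset.sum_nonneg fun a _ => hk0 p hp a)
          _ ≤ _ := by
            refine Finset.sum_le_sum fun p hp => ?_
            beta_reduce
            rw [hk p hp, ENNReal.ofReal_mul (hn0 p hp), if_pos hp]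
            exact mul_le_mul_left (ENNReal.ofReal_le_ofReal (by linarith)) _
      · push Not at hKL
        obtain ⟨a, ha⟩ := hKL
        have hsa : pstar a = 0 := by
          by_contra h
          have := hνp a
          rw [← (hν'.2.2 a).resolve_left h, KL_self] at ha
          exact ENNReal.zero_ne_top ha
        obtain ⟨p, hp, hpa⟩ := hmass a
        have hpe : p ∈ ExtP.erase pstar := by
          refine Finset.mem_erase.2 ⟨?_, hp⟩
          rintro rfl
          exact hpa.ne' hsa
        have hinner : (∑ a : Fin K,
            if pstar a = 0 then ENNReal.ofReal (p a) * KL (ν a) (ν' a) else 0) = ⊤ := by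
          refine ENNReal.sum_eq_top.2 ⟨a, Finset.mem_univ a, ?_⟩
          rw [if_pos hsa, ha, ENNReal.mul_top (ENNReal.ofReal_pos.2 hpa).ne']
        refine le_trans le_top (le_of_eq (Eq.symm ?_))
        refine ENNReal.sum_eq_top.2 ⟨p, hpe, ?_⟩
        beta_reduce
        rw [hinner, if_pos hpe, ENNReal.mul_top]
        have := hn0 p hpe
        exact (ENNReal.ofReal_pos.2 (by linarith)).ne'
    · simp_rw [mul_add, Finset.sum_add_distrib]
      rw [← Finset.add_sum_erase (s := ExtP)
        (f := fun p => gap Pset ν p * if p ∈ ExtP.erase pstar then n p else 0) hstarExt,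
        hgapstar, zero_mul, zero_add, Finset.mul_sum]
      congr 1
      · exact Finset.sum_congr rfl fun p hp => by rw [if_pos hp]
      · exact Finset.sum_congr rfl fun p _ => mul_comm _ _
  have hG : 0 ≤ ∑ p ∈ ExtP, gap Pset ν p := Finset.sum_nonneg hgap0
  set G := ∑ p ∈ ExtP, gap Pset ν p
  have hfinal := hbound ((c - d.toReal) / (2 * (G + 1)))
    (div_pos (by linarith) (by linarith))
  have hsmall : (c - d.toReal) / (2 * (G + 1)) * G ≤ (c - d.toReal) / 2 := by
    rw [div_mul_eq_mul_div, div_le_div_iff₀ (by linarith) two_pos]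
    nlinarith
  linarith

end DivBanditLB
end
end

section
/- Let a ∈ (0, ln(2)/2). Define x₀ = sup{x ∈ (0,∞) : ln x > a·x} and n₀ = max{n ∈ {1,2,3,…} : ln n > a·n}. Then x₀ and n₀ are well defined, x₀ − 1 ≤ n₀ ≤ x₀, and 1/a < x₀ < (2/a)·ln(1/a). -/
/-!
Write `S = {x > 0 : a x < log x}` and `L = log (1 / a)`; since `log 2 / 2 < 1 / e`, one has `L > 1`.

* `S` is a strict superlevel set of the concave function `log x - a x`, hence an interval. It contains
  `2`, so if some `x ∈ S` exceeded `n₀ + 1`, then `n₀ + 1 ∈ [2, x]` would lie in `S`, contradicting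
  the maximality of `n₀`. This gives `x₀ - 1 ≤ n₀`.
* The point `L / a` lies in `S`, because `log (L / a) = L + log L > L`; hence `x₀ ≥ L / a > 1 / a`.
* The tangent of `log` at `2 / a` gives `log x ≤ log (2 / a) + a x / 2 - 1`, so every `x ∈ S` satisfies
  `x ≤ (2 / a) (L + log 2 - 1)`, which is smaller than `(2 / a) L` because `log 2 < 1`.
-/

lemma ordConnected_log_gt_linear (a : ℝ) :
    Set.OrdConnected {x : ℝ | 0 < x ∧ a * x < Real.log x} := by
  have hlin : ConvexOn ℝ (Set.Ioi (0 : ℝ)) (fun x => a * x) :=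
    (LinearMap.mulLeft ℝ a).convexOn (convex_Ioi 0)
  have h := (strictConcaveOn_log_Ioi.concaveOn.sub hlin).convex_gt 0
  have hset : {x : ℝ | 0 < x ∧ a * x < Real.log x} =
      {x | x ∈ Set.Ioi 0 ∧ 0 < (Real.log - fun x => a * x) x} := by
    ext x
    simp
  exact hset ▸ h.ordConnected

/-- The bound comes from the tangent line of `log` at `2 / a`. -/
lemma le_of_log_gt_linear {a x : ℝ} (ha : 0 < a) (hx : 0 < x) (h : a * x < Real.log x) :
    x ≤ 2 / a * (Real.log (1 / a) + Real.log 2 - 1) := by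
  have h1 := Real.log_le_sub_one_of_pos (show 0 < a * x / 2 by positivity)
  rw [Real.log_div (by positivity) (by norm_num), Real.log_mul ha.ne' hx.ne'] at h1
  rw [one_div, Real.log_inv, div_mul_eq_mul_div, le_div_iff₀ ha]
  linarith

lemma one_lt_log_one_div {a : ℝ} (ha : 0 < a) (ha2 : a < Real.log 2 / 2) :
    1 < Real.log (1 / a) := by
  rw [Real.lt_log_iff_exp_lt (by positivity), lt_div_iff₀ ha]
  have h1 := Real.log_two_lt_d9
  have h2 := Real.exp_one_lt_d9
  nlinarith [Real.exp_pos 1]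

lemma log_div_mem {a : ℝ} (ha : 0 < a) (hL : 1 < Real.log (1 / a)) :
    0 < Real.log (1 / a) / a ∧
      a * (Real.log (1 / a) / a) < Real.log (Real.log (1 / a) / a) := by
  refine ⟨by positivity, ?_⟩
  have h1 := Real.log_pos hL
  have h2 : Real.log (1 / a) = -Real.log a := by rw [one_div, Real.log_inv]
  have h3 : Real.log (Real.log (1 / a) / a) = Real.log (Real.log (1 / a)) - Real.log a :=
    Real.log_div (by positivity) ha.ne'
  rw [mul_div_cancel₀ _ ha.ne', h3]
  linarith

/-- for `a ∈ (0, ln(2)/2)`, with `x₀ = sup{x > 0 : ln x > a·x}` and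
`n₀ = max{n ≥ 1 : ln n > a·n}`, both are well defined, `x₀ − 1 ≤ n₀ ≤ x₀`, and
`1/a < x₀ < (2/a)·ln(1/a)`. -/
theorem log_gt_linear_sup_bounds
    (a : ℝ) (ha : a ∈ Set.Ioo 0 (Real.log 2 / 2))
    (x₀ : ℝ) (hx₀ : x₀ = sSup {x : ℝ | 0 < x ∧ a * x < Real.log x})
    (n₀ : ℕ) (hn₀ : n₀ = sSup {n : ℕ | 1 ≤ n ∧ a * n < Real.log n}) :
    ({x : ℝ | 0 < x ∧ a * x < Real.log x}).Nonempty ∧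
    BddAbove {x : ℝ | 0 < x ∧ a * x < Real.log x} ∧
    ({n : ℕ | 1 ≤ n ∧ a * n < Real.log n}).Nonempty ∧
    BddAbove {n : ℕ | 1 ≤ n ∧ a * n < Real.log n} ∧
    n₀ ∈ {n : ℕ | 1 ≤ n ∧ a * n < Real.log n} ∧
    x₀ - 1 ≤ (n₀ : ℝ) ∧ (n₀ : ℝ) ≤ x₀ ∧
    1 / a < x₀ ∧ x₀ < 2 / a * Real.log (1 / a) := by
  obtain ⟨ha0, ha2⟩ := ha
  have hL := one_lt_log_one_div ha0 ha2
  set S : Set ℝ := {x : ℝ | 0 < x ∧ a * x < Real.log x} with hS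
  set N : Set ℕ := {n : ℕ | 1 ≤ n ∧ a * n < Real.log n} with hN
  have hNS : ∀ n : ℕ, n ∈ N ↔ (n : ℝ) ∈ S := fun n => by
    simp [hS, hN, Nat.one_le_iff_ne_zero, Nat.pos_iff_ne_zero]
  have h2N : 2 ∈ N := ⟨by norm_num, by push_cast; linarith⟩
  have h2S : (2 : ℝ) ∈ S := by exact_mod_cast (hNS 2).1 h2N
  have hub : ∀ x ∈ S, x ≤ 2 / a * (Real.log (1 / a) + Real.log 2 - 1) :=
    fun x hx => le_of_log_gt_linear ha0 hx.1 hx.2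
  have hSb : BddAbove S := ⟨_, hub⟩
  have hNb : BddAbove N := by
    refine ⟨⌊2 / a * (Real.log (1 / a) + Real.log 2 - 1)⌋₊, fun n hn => ?_⟩
    exact Nat.le_floor (hub n ((hNS n).1 hn))
  have hn₀N : n₀ ∈ N := hn₀ ▸ Nat.sSup_mem ⟨2, h2N⟩ hNb
  have hmax : ∀ n ∈ N, n ≤ n₀ := fun n hn => hn₀ ▸ le_csSup hNb hn
  refine ⟨⟨2, h2S⟩, hSb, ⟨2, h2N⟩, hNb, hn₀N, ?_, ?_, ?_, ?_⟩
  · rw [sub_le_iff_le_add, hx₀]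
    refine csSup_le ⟨2, h2S⟩ fun x hx => ?_
    by_contra! hlt
    have h2 : (2 : ℝ) ≤ n₀ := by exact_mod_cast hmax 2 h2N
    have hmem : ((n₀ + 1 : ℕ) : ℝ) ∈ S :=
      (ordConnected_log_gt_linear a).out h2S hx ⟨by push_cast; linarith, by push_cast; linarith⟩
    have := hmax _ ((hNS _).2 hmem)
    omega
  · exact hx₀ ▸ le_csSup hSb ((hNS n₀).1 hn₀N)
  · calc 1 / a < Real.log (1 / a) / a := by gcongr
      _ ≤ x₀ := hx₀ ▸ le_csSup hSb (log_div_mem ha0 hL)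
  · calc x₀ ≤ 2 / a * (Real.log (1 / a) + Real.log 2 - 1) := hx₀ ▸ csSup_le ⟨2, h2S⟩ hub
      _ < 2 / a * Real.log (1 / a) := by
        have := Real.log_two_lt_d9
        gcongr
        linarith
end

section
/- Let Δ ∈ (0,1] and ℓ ∈ (0,1] and define t₀ = max{t ∈ {2,3,4,…} : (8·ln t)/Δ² > t·ℓ/2}. Then t₀ is well defined and satisfies 16/(Δ²·ℓ) − 1 ≤ t₀ ≤ (32/(Δ²·ℓ))·ln(16/(Δ²·ℓ)). -/
/-!
With `A = 16 / (Δ² ℓ) ≥ 16`, membership of `t ≥ 2` in the set means `t < A log t`.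

* Lower bound: `⌊A⌋ ≥ 16` belongs to the set, since `⌊A⌋ ≤ A` and `log ⌊A⌋ > 1`.
* Upper bound: writing `t = A s`, the condition reads `s < log A + log s`. As
  `log s ≤ s / 2 + log 2 - 1 < s / 2`, it follows that `s < 2 log A`
  (`lt_of_lt_mul_log`). This also bounds the set, so the maximum exists.
-/

theorem lt_of_lt_mul_log {A t : ℝ} (hA : 0 < A) (ht : 0 < t) (h : t < A * Real.log t) :
    t < 2 * A * Real.log A := by
  have hs : 0 < t / A := div_pos ht hA
  have h1 : Real.log (t / A / 2) ≤ t / A / 2 - 1 := Real.log_le_sub_one_of_pos (by positivity)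
  rw [Real.log_div hs.ne' two_ne_zero, Real.log_div ht.ne' hA.ne'] at h1
  have h2 : t / A < Real.log t := by rw [div_lt_iff₀ hA]; linarith
  have h3 := Real.log_two_lt_d9
  have h4 : t / A < 2 * Real.log A := by linarith
  rw [div_lt_iff₀ hA] at h4
  linarith

/-- for `Δ, ℓ ∈ (0,1]`, the quantity
`t₀ = max{t ≥ 2 : (8 ln t)/Δ² > t·ℓ/2}` is well defined and satisfies
`16/(Δ²ℓ) − 1 ≤ t₀ ≤ (32/(Δ²ℓ))·ln(16/(Δ²ℓ))`. -/
theorem t_zero_bounds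
    (Δ ℓ : ℝ) (hΔ : Δ ∈ Set.Ioc (0 : ℝ) 1) (hℓ : ℓ ∈ Set.Ioc (0 : ℝ) 1)
    (t₀ : ℕ) (ht₀ : t₀ = sSup {t : ℕ | 2 ≤ t ∧ t * ℓ / 2 < 8 * Real.log t / Δ ^ 2}) :
    ({t : ℕ | 2 ≤ t ∧ t * ℓ / 2 < 8 * Real.log t / Δ ^ 2}).Nonempty ∧
    BddAbove {t : ℕ | 2 ≤ t ∧ t * ℓ / 2 < 8 * Real.log t / Δ ^ 2} ∧
    t₀ ∈ {t : ℕ | 2 ≤ t ∧ t * ℓ / 2 < 8 * Real.log t / Δ ^ 2} ∧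
    16 / (Δ ^ 2 * ℓ) - 1 ≤ (t₀ : ℝ) ∧
    (t₀ : ℝ) ≤ 32 / (Δ ^ 2 * ℓ) * Real.log (16 / (Δ ^ 2 * ℓ)) := by
  obtain ⟨hΔ0, hΔ1⟩ := hΔ
  obtain ⟨hℓ0, hℓ1⟩ := hℓ
  have hd : 0 < Δ ^ 2 * ℓ := by positivity
  have hd1 : Δ ^ 2 * ℓ ≤ 1 := mul_le_one₀ (pow_le_one₀ hΔ0.le hΔ1) hℓ0.le hℓ1
  have h32 : 32 / (Δ ^ 2 * ℓ) = 2 * (16 / (Δ ^ 2 * ℓ)) := by ring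
  rw [h32]
  set S := {t : ℕ | 2 ≤ t ∧ t * ℓ / 2 < 8 * Real.log t / Δ ^ 2} with hS
  set A := 16 / (Δ ^ 2 * ℓ) with hAdef
  have hA : 16 ≤ A := by
    rw [hAdef, le_div_iff₀ hd]; linarith
  have hmem : ∀ t : ℕ, t ∈ S ↔ 2 ≤ t ∧ (t : ℝ) < A * Real.log t := by
    intro t
    have e : A * Real.log t = (8 * Real.log t / Δ ^ 2) * (2 / ℓ) := by
      rw [hAdef]; field_simp; ring
    have e2 : (t : ℝ) = (t * ℓ / 2) * (2 / ℓ) := by field_simp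
    have h2 : 0 < 2 / ℓ := by positivity
    have key : (t : ℝ) * ℓ / 2 < 8 * Real.log t / Δ ^ 2 ↔ (t : ℝ) < A * Real.log t := by
      rw [← mul_lt_mul_iff_left₀ h2, ← e, ← e2]
    simp [hS, key]
  have hub : ∀ t ∈ S, (t : ℝ) < 2 * A * Real.log A := by
    intro t ht
    obtain ⟨h2, h⟩ := (hmem t).1 ht
    exact lt_of_lt_mul_log (by linarith) (by positivity) h
  have hfloor : ⌊A⌋₊ ∈ S := by
    have h16 : 16 ≤ ⌊A⌋₊ := Nat.le_floor (by exact_mod_cast hA)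
    refine (hmem _).2 ⟨by omega, ?_⟩
    have h16' : (16 : ℝ) ≤ (⌊A⌋₊ : ℝ) := by exact_mod_cast h16
    have hlog : 1 < Real.log (⌊A⌋₊ : ℝ) := by
      rw [Real.lt_log_iff_exp_lt (by linarith)]
      linarith [Real.exp_one_lt_d9]
    have hle : (⌊A⌋₊ : ℝ) ≤ A := Nat.floor_le (by linarith)
    nlinarith
  have hne : S.Nonempty := ⟨_, hfloor⟩
  have hbdd : BddAbove S :=
    ⟨⌊2 * A * Real.log A⌋₊, fun t ht => Nat.le_floor (hub t ht).le⟩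
  have h0 : t₀ ∈ S := ht₀ ▸ Nat.sSup_mem hne hbdd
  refine ⟨hne, hbdd, h0, ?_, (hub _ h0).le⟩
  have hle : ⌊A⌋₊ ≤ t₀ := ht₀ ▸ le_csSup hbdd hfloor
  have hle' : (⌊A⌋₊ : ℝ) ≤ t₀ := by exact_mod_cast hle
  linarith [Nat.lt_floor_add_one A]
end

section
/- Let P be a finite polytope of probability vectors on [K] with extreme-point set Ext(P), let μ ∈ [0,1]^K, and define Δ(p) = max_{q∈P}⟨q,μ⟩ − ⟨p,μ⟩ and Δ = min{Δ(p) : p ∈ Ext(P), Δ(p) > 0} (assumed to exist). Let t ≥ 1, let N_1,…,N_K be nonnegative integers and μ̂ ∈ ℝ^K, and set r_a = sqrt(2·log t / max{N_a,1}) and U_a = μ̂_a + r_a. Assume |μ_a − μ̂_a| ≤ r_a for all a (event E(t)) and r_a < Δ/2 for all a (event E'(t)). Then for every suboptimal p ∈ Ext(P) (i.e. with Δ(p) > 0) and every optimal mixed action p★ ∈ P (with Δ(p★) = 0), one has ⟨U, p⟩ < ⟨U, p★⟩; consequently no suboptimal mixed action maximizes q ↦ ⟨q, U⟩ over Ext(P).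 -/
/-!
On `E(t)` and `E'(t)` one has `μ a ≤ U a < μ a + Δ` for every coordinate `a`. Averaging against
probability vectors, a suboptimal extreme point `p` satisfies
`⟨p, U⟩ < ⟨p, μ⟩ + Δ ≤ M = ⟨p★, μ⟩ ≤ ⟨p★, U⟩`, because its gap is at least `Δ`
(`dot_lt_dot_add` and `dot_le_dot_right`). For the second claim, a maximizer of `⟨·, U⟩` over the
extreme points also maximizes it over their convex hull (`dot_le_of_mem_convexHull`), which contains
an optimal `p★`, so it cannot be suboptimal.
-/

open Finset

noncomputable section

namespace DivBanditUCB

lemma dot_le_dot_right {K : ℕ} {p u v : Fin K → ℝ} (hp : ∀ a, 0 ≤ p a)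
    (huv : ∀ a, u a ≤ v a) : dot p u ≤ dot p v :=
  Finset.sum_le_sum fun a _ => mul_le_mul_of_nonneg_left (huv a) (hp a)

lemma dot_lt_dot_add {K : ℕ} {p u v : Fin K → ℝ} {c : ℝ} (hp : ∀ a, 0 ≤ p a)
    (hsum : ∑ a, p a = 1) (huv : ∀ a, u a < v a + c) : dot p u < dot p v + c := by
  have hc : dot p v + c = ∑ a, p a * (v a + c) := by
    simp only [dot, mul_add, Finset.sum_add_distrib, ← Finset.sum_mul, hsum, one_mul]
  rw [hc]
  -- Strictness needs a coordinate of positive mass, which exists since the total mass is `1`.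
  obtain ⟨a, ha, hpa⟩ : ∃ a ∈ Finset.univ, 0 < p a :=
    Finset.exists_lt_of_sum_lt (f := fun _ => (0 : ℝ)) (by simp [hsum])
  exact Finset.sum_lt_sum (fun b _ => mul_le_mul_of_nonneg_left (huv b).le (hp b))
    ⟨a, ha, mul_lt_mul_of_pos_left (huv a) hpa⟩

/-- A linear functional bounded above on a set is bounded by the same constant on its convex
hull. -/
lemma dot_le_of_mem_convexHull {K : ℕ} {S : Set (Fin K → ℝ)} {v : Fin K → ℝ} {c : ℝ}
    (hS : ∀ q ∈ S, dot q v ≤ c) {x : Fin K → ℝ} (hx : x ∈ convexHull ℝ S) : dot x v ≤ c := by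
  have hlin : IsLinearMap ℝ fun q : Fin K → ℝ => dot q v :=
    { map_add := fun x y => by simp [dot, add_mul, Finset.sum_add_distrib]
      map_smul := fun k x => by simp [dot, mul_assoc, Finset.mul_sum] }
  exact convexHull_min hS (convex_halfSpace_le hlin c) hx

lemma nonneg_of_mem_convexHull {K : ℕ} {S : Set (Fin K → ℝ)}
    (hS : ∀ q ∈ S, ∀ a, 0 ≤ q a) {x : Fin K → ℝ} (hx : x ∈ convexHull ℝ S) (a : Fin K) :
    0 ≤ x a :=
  convexHull_min (t := Set.Ici 0) (fun q hq => Pi.le_def.2 (hS q hq)) (convex_Ici 0) hx a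

/-- on the events `E(t)` (all means within the confidence radii) and
`E'(t)` (all radii `< Δ/2`), every suboptimal extreme point has a strictly smaller UCB
value than every optimal mixed action; consequently no suboptimal mixed action maximizes
`q ↦ ⟨q, U⟩` over `Ext(𝒫)`. -/
theorem no_suboptimal_action_on_good_events
    {K : ℕ} (hK : 1 ≤ K)
    (ExtP : Finset (Fin K → ℝ)) (hExtNe : ExtP.Nonempty)
    (hExtProb : ∀ p ∈ ExtP, (∀ a, 0 ≤ p a) ∧ ∑ a, p a = 1)
    (Pset : Set (Fin K → ℝ)) (hPset : Pset = convexHull ℝ (ExtP : Set (Fin K → ℝ)))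
    (μ : Fin K → ℝ) (hμ : ∀ a, μ a ∈ Set.Icc (0 : ℝ) 1)
    (M : ℝ) (hM : IsGreatest {x | ∃ p ∈ Pset, dot p μ = x} M)
    (Δ : ℝ) (hΔ : IsLeast {x | ∃ p ∈ ExtP, M - dot p μ = x ∧ 0 < x} Δ)
    (t : ℕ) (ht : 1 ≤ t)
    (N : Fin K → ℕ) (μhat r U : Fin K → ℝ)
    (hr : ∀ a, r a = Real.sqrt (2 * Real.log t / (max (N a) 1 : ℕ)))
    (hU : ∀ a, U a = μhat a + r a)
    -- event E(t)
    (hE : ∀ a, |μ a - μhat a| ≤ r a)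
    -- event E'(t)
    (hE' : ∀ a, r a < Δ / 2) :
    (∀ p ∈ ExtP, 0 < M - dot p μ →
      ∀ pstar ∈ Pset, dot pstar μ = M → dot p U < dot pstar U) ∧
    (∀ p ∈ ExtP, (∀ q ∈ ExtP, dot q U ≤ dot p U) → dot p μ = M) := by
  have hlow : ∀ a, μ a ≤ U a := fun a => by
    have := (abs_le.1 (hE a)).2
    rw [hU]
    linarith
  have hup : ∀ a, U a < μ a + Δ := fun a => by
    have := (abs_le.1 (hE a)).1
    have := hE' a
    rw [hU]
    linarith
  have hmain : ∀ p ∈ ExtP, 0 < M - dot p μ →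
      ∀ pstar ∈ Pset, dot pstar μ = M → dot p U < dot pstar U := by
    intro p hp hgap pstar hstar hopt
    have hΔp : Δ ≤ M - dot p μ := hΔ.2 ⟨p, hp, rfl, hgap⟩
    have h1 := dot_lt_dot_add (hExtProb p hp).1 (hExtProb p hp).2 hup
    have h2 := dot_le_dot_right
      (nonneg_of_mem_convexHull (fun q hq => (hExtProb q hq).1) (hPset ▸ hstar)) hlow
    linarith
  refine ⟨hmain, fun p hp hmax => ?_⟩
  obtain ⟨pstar, hstar, hopt⟩ := hM.1
  have hpM : dot p μ ≤ M := hM.2 ⟨p, hPset ▸ subset_convexHull ℝ _ hp, rfl⟩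
  by_contra hne
  have hlt := hmain p hp (sub_pos.2 (lt_of_le_of_ne hpM hne)) pstar hstar hopt
  exact absurd (dot_le_of_mem_convexHull hmax (hPset ▸ hstar)) (not_le.2 hlt)

end DivBanditUCB
end
end

section
/- Let D be a model of probability measures on ℝ with finite first moments and P a finite polytope of probability vectors on [K]. Consider any strategy that is uniformly fast convergent over D given P. Let ν in D have a unique optimal mixed action p★(ν), and let ν' in D be a bandit problem for which p★(ν) is suboptimal (p★(ν) ∉ Opt(ν')). Denote by P_{ν,T} and P_{ν',T} the joint distributions of the actions A_1,…,A_T and rewards Y_1,…,Y_T generated by the strategy in the first T rounds under ν and ν' respectively. Then liminf_{T→∞} KL(P_{ν,T}, P_{ν',T}) / log T ≥ 1. -/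
/-!
The proof is a change of measure between the joint laws `P_T` (under `ν`) and `Q_T` (under `ν'`).

For an event `F` and a real `l`, the Donsker–Varadhan inequality applied to `l · 1_F` gives
`l P_T(F) - log (1 + (exp l - 1) Q_T(F)) ≤ KL(P_T, Q_T)` (`ofReal_le_KL`). It is used with
`l = b log T`, `b < 1`, and an event `F_T` such that `P_T(F_T) → 1` and `Q_T(F_T) = o(T^(α - 1))`
for all `α > 0`; the logarithm then stays bounded, so `KL(P_T, Q_T)` eventually exceeds `c log T`
for every `c < b` (`eventually_mul_log_le`).

The event is `F_T = {X'_T ≥ T δ / 2}`, where `X'_T` is the sum of the gaps, for `ν'`, of the mixed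
actions of the first `T` rounds (`cumGap`) and `δ > 0` is the gap of `p★(ν)` for `ν'`. Since `X'_T`
is nonnegative with mean `R_T(ν')` under `Q_T` (`Run.regret_eq`), Markov's inequality bounds
`Q_T(F_T)`. Since `p★(ν)` is the unique optimum of a linear functional over a polytope, the two
gaps compare as `δ - Δ'(p) ≤ C Δ(p)` (`exists_dot_sub_le`); hence off `F_T` the sum of the gaps
for `ν` is at least `T δ / (2 C)`, and Markov's inequality under `P_T` gives
`P_T(F_Tᶜ) = O(R_T(ν) / T)`.
-/

open MeasureTheory Finset
open scoped ENNReal Classical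

noncomputable section

namespace DivBanditLB

/-- The joint law `P_{ν,T}` of the actions `A_1, …, A_T` and rewards `Y_1, …, Y_T`
generated in the first `T` rounds of the run `r`. -/
def Run.jointLaw {K : ℕ} {σ : (t : ℕ) → (Fin t → Fin K × ℝ) → (Fin K → ℝ)}
    {ν : Fin K → Measure ℝ} (r : Run K σ ν) (T : ℕ) :
    Measure ((Fin T → Fin K) × (Fin T → ℝ)) :=
  r.P.map (fun ω => (fun t => r.A (t.1 + 1) ω, fun t => r.Y (t.1 + 1) ω))

/-! ### A lower bound on the Kullback–Leibler divergence -/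

/-- The Donsker–Varadhan inequality `∫ f dP - log ∫ exp f dQ ≤ KL(P, Q)` for `f = l · 1_F`.
It is Gibbs' inequality for `P` against the exponential tilting of `Q` by `f`. -/
lemma ofReal_le_KL {α : Type*} [MeasurableSpace α] (P Q : Measure α) [IsProbabilityMeasure P]
    [IsProbabilityMeasure Q] {F : Set α} (hF : MeasurableSet F) (l : ℝ) :
    ENNReal.ofReal (l * P.real F - Real.log (1 + (Real.exp l - 1) * Q.real F)) ≤ KL P Q := by
  unfold KL
  split_ifs with h
  swap
  · exact le_top
  obtain ⟨hac, hint⟩ := h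
  apply ENNReal.ofReal_le_ofReal
  set f : α → ℝ := F.indicator (fun _ => l) with hf
  have hexp : (fun x => Real.exp (f x)) =
      fun x => 1 + F.indicator (fun _ => Real.exp l - 1) x := by
    funext x
    by_cases hx : x ∈ F <;> simp [hf, hx]
  have hfP : Integrable f P := (integrable_const l).indicator hF
  have hind : Integrable (F.indicator (fun _ => Real.exp l - 1)) Q :=
    (integrable_const _).indicator hF
  have hfQ : Integrable (fun x => Real.exp (f x)) Q := by
    rw [hexp]
    exact (integrable_const 1).add hind
  have h1 : ∫ x, f x ∂P = l * P.real F := by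
    rw [hf, integral_indicator_const _ hF, smul_eq_mul, mul_comm]
  have h2 : ∫ x, Real.exp (f x) ∂Q = 1 + (Real.exp l - 1) * Q.real F := by
    rw [hexp, integral_add (integrable_const 1) hind, integral_indicator_const _ hF]
    simp [mul_comm]
  have hprob : IsProbabilityMeasure (Q.tilted f) := isProbabilityMeasure_tilted hfQ
  have key := InformationTheory.integral_llr_add_sub_measure_univ_nonneg
    (hac.trans (absolutelyContinuous_tilted hfQ)) (integrable_llr_tilted_right hac hfP hint hfQ)
  rw [integral_llr_tilted_right hac hfP hfQ hint, h1, h2] at key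
  simp only [probReal_univ] at key
  linarith

/-! ### Gaps over the polytope -/

lemma dot_isLinearMap {K : ℕ} (m : Fin K → ℝ) : IsLinearMap ℝ (fun p => dot p m) where
  map_add x y := by simp [dot, add_mul, Finset.sum_add_distrib]
  map_smul c x := by simp [dot, mul_assoc, Finset.mul_sum]

lemma dot_continuous {K : ℕ} (m : Fin K → ℝ) : Continuous (fun p => dot p m) := by
  unfold dot
  fun_prop

/-- If `pstar` is the unique maximizer of `⟨·, m⟩` among the generators of a polytope, then over
the whole polytope any other linear functional exceeds its value at `pstar` by at most a constant
times the suboptimality gap for `m`. Both sides being affine, it suffices to choose the constant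
so that the bound holds at the finitely many generators. -/
lemma exists_dot_sub_le {K : ℕ} (ExtP : Finset (Fin K → ℝ)) (pstar m m' : Fin K → ℝ)
    (h : ∀ p ∈ ExtP, p ≠ pstar → dot p m < dot pstar m) :
    ∃ C : ℝ, 0 < C ∧ ∀ p ∈ convexHull ℝ (ExtP : Set (Fin K → ℝ)),
      dot p m' - dot pstar m' ≤ C * (dot pstar m - dot p m) := by
  set g : (Fin K → ℝ) → ℝ := fun p => |dot p m' - dot pstar m'| / (dot pstar m - dot p m)
    with hg
  have hg0 : ∀ p ∈ ExtP, 0 ≤ g p := by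
    intro p hp
    apply div_nonneg (abs_nonneg _)
    by_cases hpe : p = pstar
    · simp [hpe]
    · linarith [h p hp hpe]
  refine ⟨1 + ∑ p ∈ ExtP, g p, by linarith [Finset.sum_nonneg hg0], ?_⟩
  set C := 1 + ∑ p ∈ ExtP, g p with hC
  have hdot : ∀ p : Fin K → ℝ, dot p (fun a => m' a + C * m a) = dot p m' + C * dot p m := by
    intro p
    simp only [dot, Finset.mul_sum, ← Finset.sum_add_distrib]
    exact Finset.sum_congr rfl fun a _ => by ring
  have hsub : convexHull ℝ (ExtP : Set (Fin K → ℝ)) ⊆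
      {p | dot p (fun a => m' a + C * m a) ≤ dot pstar (fun a => m' a + C * m a)} := by
    refine convexHull_min ?_ (convex_halfSpace_le (dot_isLinearMap _) _)
    intro p hp
    have hp : p ∈ ExtP := hp
    simp only [Set.mem_ofPred_eq, hdot]
    by_cases hpe : p = pstar
    · simp [hpe]
    have hpos : 0 < dot pstar m - dot p m := by linarith [h p hp hpe]
    have hle : g p ≤ C := by linarith [Finset.single_le_sum hg0 hp]
    have h3 : |dot p m' - dot pstar m'| ≤ C * (dot pstar m - dot p m) := by
      rwa [hg, div_le_iff₀ hpos] at hle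
    nlinarith [le_abs_self (dot p m' - dot pstar m')]
  intro p hp
  have := hsub hp
  simp only [Set.mem_ofPred_eq, hdot] at this
  linarith

lemma gap_nonneg_s13 {K : ℕ} {Pset : Set (Fin K → ℝ)} (hc : IsCompact Pset)
    (ν : Fin K → Measure ℝ) {p : Fin K → ℝ} (hp : p ∈ Pset) : 0 ≤ gap Pset ν p :=
  sub_nonneg.2 (le_csSup (hc.image (dot_continuous (armMean ν))).bddAbove ⟨p, hp, rfl⟩)

/-! ### The regret as a functional of the joint law -/

/-- The mixed action of round `t + 1`, as a function of the actions and rewards of the first `T`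
rounds, where `t < T`. -/
def histPlay {K : ℕ} (σ : (t : ℕ) → (Fin t → Fin K × ℝ) → (Fin K → ℝ)) (T : ℕ) (t : Fin T)
    (h : (Fin T → Fin K) × (Fin T → ℝ)) : Fin K → ℝ :=
  σ t.1 (fun s => (h.1 ⟨s.1, s.2.trans t.2⟩, h.2 ⟨s.1, s.2.trans t.2⟩))

/-- The cumulative gap of the mixed actions of the first `T` rounds, as a function of the actions
and rewards of these rounds; its expectation under the joint law is the regret. -/
def cumGap {K : ℕ} (σ : (t : ℕ) → (Fin t → Fin K × ℝ) → (Fin K → ℝ)) (Pset : Set (Fin K → ℝ))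
    (ν : Fin K → Measure ℝ) (T : ℕ) (h : (Fin T → Fin K) × (Fin T → ℝ)) : ℝ :=
  ∑ t : Fin T, gap Pset ν (histPlay σ T t h)

section Law

variable {K : ℕ} {σ : (t : ℕ) → (Fin t → Fin K × ℝ) → (Fin K → ℝ)} {Pset : Set (Fin K → ℝ)}
  {ν : Fin K → Measure ℝ}

lemma histPlay_measurable (hσ : ∀ t, Measurable (σ t)) (T : ℕ) (t : Fin T) :
    Measurable (histPlay σ T t) := by
  unfold histPlay
  apply (hσ _).comp
  fun_prop

lemma cumGap_measurable (hσ : ∀ t, Measurable (σ t)) (T : ℕ) :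
    Measurable (cumGap σ Pset ν T) := by
  unfold cumGap gap
  refine Finset.measurable_sum _ fun t _ => measurable_const.sub ?_
  exact (dot_continuous _).measurable.comp (histPlay_measurable hσ T t)

lemma cumGap_nonneg (hc : IsCompact Pset) (hmem : ∀ t h, σ t h ∈ Pset) (T : ℕ)
    (h : (Fin T → Fin K) × (Fin T → ℝ)) : 0 ≤ cumGap σ Pset ν T h :=
  Finset.sum_nonneg fun _ _ => gap_nonneg_s13 hc ν (hmem _ _)

lemma Run.measurable_history (r : Run K σ ν) (T : ℕ) :
    Measurable (fun ω => ((fun t : Fin T => r.A (t.1 + 1) ω),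
      (fun t : Fin T => r.Y (t.1 + 1) ω))) :=
  (measurable_pi_lambda _ fun _ => r.measA _).prodMk (measurable_pi_lambda _ fun _ => r.measY _)

lemma Run.isProbabilityMeasure_jointLaw (r : Run K σ ν) (T : ℕ) :
    IsProbabilityMeasure (r.jointLaw T) :=
  have := r.isProb
  Measure.isProbabilityMeasure_map (r.measurable_history T).aemeasurable

lemma dot_histPlay_integrable (hc : IsCompact Pset) (hσ : ∀ t, Measurable (σ t))
    (hmem : ∀ t h, σ t h ∈ Pset) (T : ℕ) (t : Fin T) (m : Fin K → ℝ)
    (L : Measure ((Fin T → Fin K) × (Fin T → ℝ))) [IsProbabilityMeasure L] :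
    Integrable (fun h => dot (histPlay σ T t h) m) L := by
  obtain ⟨M, hM⟩ := hc.exists_bound_of_continuousOn (dot_continuous m).continuousOn
  refine Integrable.of_bound
    ((dot_continuous m).measurable.comp (histPlay_measurable hσ T t)).aestronglyMeasurable M ?_
  exact Filter.Eventually.of_forall fun h => hM _ (hmem _ _)

lemma cumGap_integrable (hc : IsCompact Pset) (hσ : ∀ t, Measurable (σ t))
    (hmem : ∀ t h, σ t h ∈ Pset) (T : ℕ) {ν' : Fin K → Measure ℝ}
    (L : Measure ((Fin T → Fin K) × (Fin T → ℝ))) [IsProbabilityMeasure L] :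
    Integrable (cumGap σ Pset ν' T) L := by
  unfold cumGap gap
  exact integrable_finsetSum _ fun t _ =>
    (integrable_const _).sub (dot_histPlay_integrable hc hσ hmem T t _ L)

lemma Run.regret_eq (r : Run K σ ν) (hc : IsCompact Pset) (hσ : ∀ t, Measurable (σ t))
    (hmem : ∀ t h, σ t h ∈ Pset) (T : ℕ) :
    r.regret Pset T = ∫ h, cumGap σ Pset ν T h ∂(r.jointLaw T) := by
  have := r.isProbabilityMeasure_jointLaw T
  have hsum : ∀ ω, ∑ t ∈ Finset.Icc 1 T, dot (r.play t ω) (armMean ν) =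
      ∑ t : Fin T, dot (histPlay σ T t ((fun t : Fin T => r.A (t.1 + 1) ω),
        (fun t : Fin T => r.Y (t.1 + 1) ω))) (armMean ν) := by
    intro ω
    have h1 : Finset.Icc 1 T = Finset.Ico (0 + 1) (T + 1) := by
      ext t
      simp only [Finset.mem_Icc, Finset.mem_Ico]
      omega
    rw [h1, ← Finset.sum_Ico_add' (fun t => dot (r.play t ω) (armMean ν)), ← Finset.range_eq_Ico,
      Finset.sum_range]
    rfl
  have hint := fun t : Fin T => dot_histPlay_integrable hc hσ hmem T t (armMean ν) (r.jointLaw T)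
  have hmap : ∫ ω, ∑ t ∈ Finset.Icc 1 T, dot (r.play t ω) (armMean ν) ∂r.P =
      ∫ h, ∑ t : Fin T, dot (histPlay σ T t h) (armMean ν) ∂(r.jointLaw T) := by
    simp only [hsum]
    unfold Run.jointLaw
    rw [integral_map (r.measurable_history T).aemeasurable]
    exact (Finset.measurable_sum _ fun t _ => (dot_continuous _).measurable.comp
      (histPlay_measurable hσ T t)).aestronglyMeasurable
  unfold Run.regret
  rw [hmap]
  simp only [cumGap, gap, Finset.sum_sub_distrib]
  rw [integral_sub (integrable_const _) (integrable_finsetSum _ fun t _ => hint t)]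
  simp

/-- Markov's inequality for the cumulative gap. -/
lemma Run.measureReal_cumGap_ge (r : Run K σ ν) (hc : IsCompact Pset)
    (hσ : ∀ t, Measurable (σ t)) (hmem : ∀ t h, σ t h ∈ Pset) (T : ℕ) (ε : ℝ) :
    (r.jointLaw T).real {h | ε ≤ cumGap σ Pset ν T h} * ε ≤ r.regret Pset T := by
  have := r.isProbabilityMeasure_jointLaw T
  rw [r.regret_eq hc hσ hmem, mul_comm]
  exact mul_meas_ge_le_integral_of_nonneg
    (Filter.Eventually.of_forall (cumGap_nonneg hc hmem T)) (cumGap_integrable hc hσ hmem T _) ε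

end Law

/-! ### Asymptotics -/

/-- If `1 - P_T(F_T) = O(R_T / T)` and `Q_T(F_T) = O(R'_T / T)` with sub-polynomial `R` and `R'`,
then the lower bound of `ofReal_le_KL` with `l = b log T`, `b < 1`, eventually exceeds `c log T`
for every `c < b`. -/
lemma eventually_mul_log_le {pf qf R R' : ℕ → ℝ} {d e b c : ℝ} (hd : 0 < d) (he : 0 < e)
    (hb : 0 < b) (hb1 : b < 1) (hcb : c < b) (hq0 : ∀ T, 0 ≤ qf T)
    (hq : ∀ T, qf T * (T * d) ≤ R' T) (hp : ∀ T, (1 - pf T) * (T * e) ≤ R T)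
    (hR : ∀ α : ℝ, 0 < α → Filter.Tendsto (fun T : ℕ => R T / (T : ℝ) ^ α) Filter.atTop (nhds 0))
    (hR' : ∀ α : ℝ, 0 < α →
      Filter.Tendsto (fun T : ℕ => R' T / (T : ℝ) ^ α) Filter.atTop (nhds 0)) :
    ∀ᶠ T : ℕ in Filter.atTop, c * Real.log T ≤
      b * Real.log T * pf T - Real.log (1 + (Real.exp (b * Real.log T) - 1) * qf T) := by
  set η : ℝ := (b - c) / (2 * b) with hη
  have hη0 : 0 < η := div_pos (by linarith) (by linarith)
  have hbη : b * η = (b - c) / 2 := by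
    rw [hη]
    field_simp
  have e1 := (hR 1 one_pos).eventually (gt_mem_nhds (mul_pos he hη0))
  have e2 := (hR' (1 - b) (by linarith)).eventually (gt_mem_nhds hd)
  have e3 := (Real.tendsto_log_atTop.comp tendsto_natCast_atTop_atTop).eventually
    (Filter.eventually_ge_atTop (2 * Real.log 2 / (b - c)))
  filter_upwards [e1, e2, e3, Filter.eventually_ge_atTop 2] with T h1 h2 h3 hT
  have hT' : (2 : ℝ) ≤ T := by exact_mod_cast hT
  have hT0 : (0 : ℝ) < T := by linarith
  have hlog : 0 < Real.log T := Real.log_pos (by linarith)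
  have hpf : 1 - η ≤ pf T := by
    rw [Real.rpow_one, div_lt_iff₀ hT0] at h1
    have h4 := (hp T).trans h1.le
    have hTe : 0 < T * e := mul_pos hT0 he
    have : 1 - pf T ≤ η := by
      by_contra! hcon
      nlinarith [mul_lt_mul_of_pos_right hcon hTe]
    linarith
  have hexp : Real.exp (b * Real.log T) = (T : ℝ) ^ b := by
    rw [Real.rpow_def_of_pos hT0, mul_comm]
  have hqf : (T : ℝ) ^ b * qf T ≤ 1 := by
    rw [div_lt_iff₀ (Real.rpow_pos_of_pos hT0 _)] at h2
    have h4 := (hq T).trans h2.le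
    have hsplit : (T : ℝ) = (T : ℝ) ^ b * (T : ℝ) ^ (1 - b) := by
      rw [← Real.rpow_add hT0]
      simp
    have hy : 0 < (T : ℝ) ^ (1 - b) := Real.rpow_pos_of_pos hT0 _
    have h5 : ((T : ℝ) ^ b * qf T) * (d * (T : ℝ) ^ (1 - b)) ≤ 1 * (d * (T : ℝ) ^ (1 - b)) := by
      calc ((T : ℝ) ^ b * qf T) * (d * (T : ℝ) ^ (1 - b))
          = qf T * (((T : ℝ) ^ b * (T : ℝ) ^ (1 - b)) * d) := by ring
        _ = qf T * (T * d) := by rw [← hsplit]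
        _ ≤ _ := by rw [one_mul]; exact h4
    exact le_of_mul_le_mul_right h5 (mul_pos hd hy)
  have hTb : 1 ≤ (T : ℝ) ^ b := Real.one_le_rpow (by linarith) hb.le
  have hl2 : Real.log (1 + (Real.exp (b * Real.log T) - 1) * qf T) ≤ Real.log 2 := by
    rw [hexp]
    apply Real.log_le_log
    · nlinarith [mul_nonneg (sub_nonneg.2 hTb) (hq0 T)]
    · nlinarith [hq0 T]
  have h6 : Real.log 2 ≤ (b - c) / 2 * Real.log T := by
    have h7 : 2 * Real.log 2 / (b - c) ≤ Real.log T := h3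
    rw [div_le_iff₀ (by linarith)] at h7
    linarith
  have h8 : b * Real.log T * (1 - η) ≤ b * Real.log T * pf T :=
    mul_le_mul_of_nonneg_left hpf (mul_pos hb hlog).le
  have h9 : b * Real.log T * (1 - η) = b * Real.log T - (b - c) / 2 * Real.log T := by
    rw [← hbη]
    ring
  linarith

/-! ### The lower bound -/

/-- Lemma 3: for every uniformly fast convergent strategy, if `ν` has a
unique optimal mixed action `p★(ν)` and `p★(ν)` is suboptimal for `ν'`, then
`liminf_{T→∞} KL(P_{ν,T}, P_{ν',T}) / log T ≥ 1`. -/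
theorem kl_joint_laws_liminf_ge_one
    {K : ℕ} (hK : 1 ≤ K)
    -- the model D: probability measures on ℝ with finite first moments
    (D : Set (Measure ℝ)) (hDprob : ∀ ρ ∈ D, IsProbabilityMeasure ρ)
    (hDmom : ∀ ρ ∈ D, Integrable (fun x : ℝ => x) ρ)
    -- the diversity-preserving set: a finite polytope
    (ExtP : Finset (Fin K → ℝ)) (hExtNe : ExtP.Nonempty)
    (hExtProb : ∀ p ∈ ExtP, (∀ a, 0 ≤ p a) ∧ ∑ a, p a = 1)
    (Pset : Set (Fin K → ℝ)) (hPset : Pset = convexHull ℝ (ExtP : Set (Fin K → ℝ)))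
    -- a strategy: measurable maps from histories to mixed actions in 𝒫
    (σ : (t : ℕ) → (Fin t → Fin K × ℝ) → (Fin K → ℝ))
    (hσmeas : ∀ t, Measurable (σ t)) (hσmem : ∀ t h, σ t h ∈ Pset)
    -- its runs on the problems of the model, assumed uniformly fast convergent
    (runs : ∀ ν' : Fin K → Measure ℝ, (∀ a, ν' a ∈ D) → Run K σ ν')
    (hUFC : UFC σ D Pset runs)
    -- a bandit problem ν in D with a unique optimal mixed action p★(ν)
    (ν : Fin K → Measure ℝ) (hν : ∀ a, ν a ∈ D)
    (pstar : Fin K → ℝ) (hstar : Opt Pset ν = {pstar}) (hstarExt : pstar ∈ ExtP)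
    -- a bandit problem ν' in D for which p★(ν) is suboptimal
    (ν' : Fin K → Measure ℝ) (hν' : ∀ a, ν' a ∈ D)
    (hsub : pstar ∉ Opt Pset ν') :
    1 ≤ Filter.liminf
        (fun T : ℕ =>
          KL ((runs ν hν).jointLaw T) ((runs ν' hν').jointLaw T)
            / ENNReal.ofReal (Real.log T))
        Filter.atTop := by
  have hc : IsCompact Pset := by
    rw [hPset]
    exact ExtP.finite_toSet.isCompact_convexHull ℝ
  have hstarP : pstar ∈ Pset := by
    rw [hPset]
    exact subset_convexHull ℝ _ hstarExt
  have hopt : pstar ∈ Opt Pset ν := by simp [hstar]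
  have hgapν : ∀ p, gap Pset ν p = dot pstar (armMean ν) - dot p (armMean ν) := by
    intro p
    have : IsGreatest {x | ∃ q ∈ Pset, dot q (armMean ν) = x} (dot pstar (armMean ν)) :=
      ⟨⟨pstar, hstarP, rfl⟩, by rintro x ⟨q, hq, rfl⟩; exact hopt.2 q hq⟩
    rw [gap, this.csSup_eq]
  have huniq : ∀ p ∈ ExtP, p ≠ pstar → dot p (armMean ν) < dot pstar (armMean ν) := by
    intro p hp hne
    have hpP : p ∈ Pset := by
      rw [hPset]
      exact subset_convexHull ℝ _ hp
    by_contra! hcon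
    apply hne
    have : p ∈ Opt Pset ν := ⟨hpP, fun q hq => (hopt.2 q hq).trans hcon⟩
    simpa [hstar] using this
  obtain ⟨C, hC0, hC⟩ := exists_dot_sub_le ExtP pstar (armMean ν) (armMean ν') huniq
  set δ := gap Pset ν' pstar with hδ
  have hδ0 : 0 < δ := by
    have : ∃ q ∈ Pset, dot pstar (armMean ν') < dot q (armMean ν') := by
      by_contra! hcon
      exact hsub ⟨hstarP, hcon⟩
    obtain ⟨q, hq, hlt⟩ := this
    have h0 := gap_nonneg_s13 hc ν' hq
    simp only [hδ, gap] at h0 ⊢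
    linarith
  have hcomp : ∀ p ∈ Pset, δ - gap Pset ν' p ≤ C * gap Pset ν p := by
    intro p hp
    rw [hgapν]
    have := hC p (hPset ▸ hp)
    simp only [hδ, gap]
    linarith
  -- The cumulative gaps for the two problems cannot both be small.
  have hcum : ∀ T h, T * δ - cumGap σ Pset ν' T h ≤ C * cumGap σ Pset ν T h := by
    intro T h
    have := Finset.sum_le_sum fun (t : Fin T) (_ : t ∈ Finset.univ) =>
      hcomp (histPlay σ T t h) (hσmem _ _)
    simpa [cumGap, Finset.mul_sum] using this
  set r := runs ν hν
  set r' := runs ν' hν'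
  set F : (T : ℕ) → Set ((Fin T → Fin K) × (Fin T → ℝ)) :=
    fun T => {h | T * (δ / 2) ≤ cumGap σ Pset ν' T h} with hF
  have hFm : ∀ T, MeasurableSet (F T) := fun T =>
    measurableSet_le measurable_const (cumGap_measurable hσmeas T)
  have hq : ∀ T : ℕ, (r'.jointLaw T).real (F T) * (T * (δ / 2)) ≤ r'.regret Pset T := fun T =>
    r'.measureReal_cumGap_ge hc hσmeas hσmem T _
  have hp : ∀ T : ℕ, (1 - (r.jointLaw T).real (F T)) * (T * (δ / (2 * C))) ≤ r.regret Pset T := by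
    intro T
    have := r.isProbabilityMeasure_jointLaw T
    rw [← probReal_compl_eq_one_sub (hFm T)]
    refine le_trans ?_ (r.measureReal_cumGap_ge hc hσmeas hσmem T (T * (δ / (2 * C))))
    refine mul_le_mul_of_nonneg_right (measureReal_mono ?_) (by positivity)
    intro h hh
    simp only [hF, Set.mem_compl_iff, Set.mem_ofPred_eq, not_le] at hh ⊢
    have h1 := hcum T h
    have h2 : T * (δ / (2 * C)) = (T * (δ / 2)) / C := by
      field_simp
    rw [h2, div_le_iff₀ hC0]
    linarith
  refine le_of_forall_lt_imp_le_of_dense fun x hx => ?_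
  have hxtop : x ≠ ⊤ := (hx.trans ENNReal.one_lt_top).ne
  set c := x.toReal with hcx
  have hc1 : c < 1 := by
    simpa using (ENNReal.toReal_lt_toReal hxtop ENNReal.one_ne_top).2 hx
  have hc0 : 0 ≤ c := ENNReal.toReal_nonneg
  refine Filter.le_liminf_of_le (by isBoundedDefault) ?_
  have hev := eventually_mul_log_le (b := (1 + c) / 2) (c := c)
    (pf := fun T => (r.jointLaw T).real (F T)) (qf := fun T => (r'.jointLaw T).real (F T))
    (d := δ / 2) (e := δ / (2 * C)) (by positivity) (by positivity) (by linarith) (by linarith)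
    (by linarith) (fun _ => measureReal_nonneg) hq hp (hUFC ν hν) (hUFC ν' hν')
  filter_upwards [hev, Filter.eventually_ge_atTop 2] with T hT hT2
  have hlog : 0 < Real.log T := Real.log_pos (by exact_mod_cast hT2)
  have := r.isProbabilityMeasure_jointLaw T
  have := r'.isProbabilityMeasure_jointLaw T
  rw [ENNReal.le_div_iff_mul_le (Or.inl (by simpa using hlog)) (Or.inl ENNReal.ofReal_ne_top),
    ← ENNReal.ofReal_toReal hxtop, ← ENNReal.ofReal_mul hc0]
  exact (ENNReal.ofReal_le_ofReal hT).trans (ofReal_le_KL _ _ (hFm T) _)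

end DivBanditLB
end
end

section
/- Let D be a convex set of probability measures on ℝ with finite first moments, let P be a finite polytope of probability vectors on [K], and let ν = (ν_1,…,ν_K) be a bandit problem in D with a unique optimal mixed action p★(ν). Then Assumption (ALT) holds for ν: if Conf(ν) is non-empty, there exists ν'' ∈ Conf(ν) such that KL(ν_a, ν''_a) < +∞ for every a ∈ [K]. In fact, for any ν' ∈ Conf(ν), the problem ν'' = (1−λ)·ν' + λ·ν (componentwise mixture) belongs to Conf(ν) for all sufficiently small λ ∈ (0,1) and satisfies KL(ν_a, ν''_a) ≤ ln(1/λ) for all a. -/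
/-!
If `ν' ∈ Conf(ν)`, some `q ∈ 𝒫` beats `p★` strictly under the means of `ν'`. Means are affine
in the mixture weight, so `q` still beats `p★` under `(1 - λ)ν' + λν` for small `λ`; arms on
which `ν` and `ν'` agree are left unchanged by mixing.

For the divergence (`KL_mix_le`), `λ ν_a ≤ ν''_a` as measures, hence `dν_a/dν''_a ≤ 1/λ` almost
everywhere. This bounds `klFun (dν_a/dν''_a)`, which gives integrability of the log-likelihood
ratio, and bounds that ratio itself by `ln (1/λ)`.
-/

open MeasureTheory Finset
open scoped ENNReal Classical

noncomputable section

namespace DivBanditLB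

/-- A probability measure `μ` has Radon-Nikodym density at most `1/l` with respect to any
finite measure dominating `l • μ`. -/
lemma rnDeriv_le_of_smul_le {α : Type*} [MeasurableSpace α] {μ ρ : Measure α}
    [IsProbabilityMeasure μ] [IsFiniteMeasure ρ] {l : ℝ} (hl : 0 < l)
    (hle : ENNReal.ofReal l • μ ≤ ρ) :
    ∀ᵐ x ∂ρ, (μ.rnDeriv ρ x).toReal ≤ 1 / l := by
  have h1 := Measure.rnDeriv_le_one_of_le hle
  have h2 := Measure.rnDeriv_smul_left_of_ne_top' (ν := μ) (μ := ρ)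
    (r := ENNReal.ofReal l) ENNReal.ofReal_ne_top
  filter_upwards [h1, h2] with x hx1 hx2
  rw [hx2] at hx1
  have h := ENNReal.toReal_mono ENNReal.one_ne_top hx1
  simp only [Pi.smul_apply, smul_eq_mul, ENNReal.toReal_mul, ENNReal.toReal_ofReal hl.le,
    ENNReal.toReal_one] at h
  rw [le_div_iff₀ hl]
  linarith

/-- Domination `l • μ ≤ ρ` forces `KL(μ, ρ) ≤ ln (1/l)`. -/
lemma KL_le_of_smul_le {α : Type*} [MeasurableSpace α] {μ ρ : Measure α}
    [IsProbabilityMeasure μ] [IsFiniteMeasure ρ] {l : ℝ} (hl : 0 < l)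
    (hle : ENNReal.ofReal l • μ ≤ ρ) :
    KL μ ρ ≤ ENNReal.ofReal (Real.log (1 / l)) := by
  have hac : μ ≪ ρ :=
    (Measure.absolutelyContinuous_smul (by simpa using hl)).trans
      (Measure.absolutelyContinuous_of_le hle)
  have hb := rnDeriv_le_of_smul_le hl hle
  have hint : Integrable (llr μ ρ) μ := by
    rw [← InformationTheory.integrable_klFun_rnDeriv_iff hac]
    -- `klFun` is continuous, hence bounded on the compact range `[0, 1/l]` of the density.
    obtain ⟨C, hC⟩ := (isCompact_Icc (a := (0 : ℝ)) (b := 1 / l)).exists_bound_of_continuousOn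
      InformationTheory.continuous_klFun.continuousOn
    refine Integrable.of_bound (C := C)
      (Measurable.aestronglyMeasurable (by fun_prop)) ?_
    filter_upwards [hb] with x hx
    exact hC _ ⟨ENNReal.toReal_nonneg, hx⟩
  rw [KL, if_pos ⟨hac, hint⟩]
  apply ENNReal.ofReal_le_ofReal
  have hle' : ∀ᵐ x ∂μ, llr μ ρ x ≤ Real.log (1 / l) := by
    filter_upwards [hac.ae_le hb, Measure.rnDeriv_pos hac,
      hac.ae_le (Measure.rnDeriv_lt_top μ ρ)] with x hx hpos htop
    exact Real.log_le_log (ENNReal.toReal_pos hpos.ne' htop.ne) hx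
  calc ∫ x, llr μ ρ x ∂μ ≤ ∫ _, Real.log (1 / l) ∂μ :=
        integral_mono_ae hint (integrable_const _) hle'
    _ = Real.log (1 / l) := by simp

lemma KL_mix_le {α : Type*} [MeasurableSpace α] {μ μ' : Measure α}
    [IsProbabilityMeasure μ] [IsProbabilityMeasure μ'] {l : ℝ} (hl : 0 < l) :
    KL μ (ENNReal.ofReal (1 - l) • μ' + ENNReal.ofReal l • μ)
      ≤ ENNReal.ofReal (Real.log (1 / l)) := by
  have := μ'.smul_finite (c := ENNReal.ofReal (1 - l)) ENNReal.ofReal_ne_top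
  have := μ.smul_finite (c := ENNReal.ofReal l) ENNReal.ofReal_ne_top
  exact KL_le_of_smul_le hl (Measure.le_add_left le_rfl)

lemma mix_self {α : Type*} [MeasurableSpace α] (μ : Measure α) {l : ℝ} (hl : 0 ≤ l)
    (hl1 : l ≤ 1) : ENNReal.ofReal (1 - l) • μ + ENNReal.ofReal l • μ = μ := by
  rw [← add_smul, ← ENNReal.ofReal_add (by linarith) hl]
  simp

lemma dot_armMean_mix {K : ℕ} {ν ν' : Fin K → Measure ℝ}
    (hν : ∀ a, Integrable (fun x : ℝ => x) (ν a))
    (hν' : ∀ a, Integrable (fun x : ℝ => x) (ν' a)) (p : Fin K → ℝ) {l : ℝ} (hl : 0 ≤ l)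
    (hl1 : l ≤ 1) :
    dot p (armMean (fun a => ENNReal.ofReal (1 - l) • ν' a + ENNReal.ofReal l • ν a))
      = (1 - l) * dot p (armMean ν') + l * dot p (armMean ν) := by
  simp only [dot, Finset.mul_sum, ← Finset.sum_add_distrib]
  refine Finset.sum_congr rfl fun a _ => ?_
  have h : armMean (fun a => ENNReal.ofReal (1 - l) • ν' a + ENNReal.ofReal l • ν a) a
      = (1 - l) * armMean ν' a + l * armMean ν a := by
    simp only [armMean]
    rw [integral_add_measure ((hν' a).smul_measure ENNReal.ofReal_ne_top)
      ((hν a).smul_measure ENNReal.ofReal_ne_top), integral_smul_measure, integral_smul_measure,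
      ENNReal.toReal_ofReal hl, ENNReal.toReal_ofReal (by linarith)]
    simp
  rw [h]
  ring

/-- if the model `D` is convex, then Assumption (ALT) holds: whenever
`Conf(ν)` is non-empty it contains a problem at finite KL divergence from `ν` on every
arm; in fact for any `ν' ∈ Conf(ν)` the mixture `ν'' = (1−λ)ν' + λν` belongs to `Conf(ν)`
for all small enough `λ ∈ (0,1)` and satisfies `KL(ν_a, ν''_a) ≤ ln(1/λ)` for all `a`. -/
theorem assumptionALT_of_convex
    {K : ℕ} (hK : 1 ≤ K)
    -- the model D: probability measures on ℝ with finite first moments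
    (D : Set (Measure ℝ)) (hDprob : ∀ ρ ∈ D, IsProbabilityMeasure ρ)
    (hDmom : ∀ ρ ∈ D, Integrable (fun x : ℝ => x) ρ)
    -- the diversity-preserving set: a finite polytope putting mass on each arm
    (ExtP : Finset (Fin K → ℝ)) (hExtNe : ExtP.Nonempty)
    (hExtProb : ∀ p ∈ ExtP, (∀ a, 0 ≤ p a) ∧ ∑ a, p a = 1)
    (Pset : Set (Fin K → ℝ)) (hPset : Pset = convexHull ℝ (ExtP : Set (Fin K → ℝ)))
    (hmass : ∀ a : Fin K, ∃ p ∈ ExtP, 0 < p a)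
    -- a bandit problem ν in D with a unique optimal mixed action p★(ν)
    (ν : Fin K → Measure ℝ) (hν : ∀ a, ν a ∈ D)
    (pstar : Fin K → ℝ) (hstar : Opt Pset ν = {pstar}) (hstarExt : pstar ∈ ExtP)
    -- D is convex: componentwise mixtures of problems in D remain in D
    (hconv : ∀ ρ ∈ D, ∀ ρ' ∈ D, ∀ lam : ℝ, lam ∈ Set.Icc (0 : ℝ) 1 →
      ENNReal.ofReal (1 - lam) • ρ + ENNReal.ofReal lam • ρ' ∈ D) :
    ((Conf D Pset ν pstar).Nonempty →
      ∃ ν'' ∈ Conf D Pset ν pstar, ∀ a, KL (ν a) (ν'' a) < ⊤) ∧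
    (∀ ν' ∈ Conf D Pset ν pstar, ∃ lam₀ ∈ Set.Ioo (0 : ℝ) 1,
      ∀ lam ∈ Set.Ioo (0 : ℝ) lam₀,
        (fun a => ENNReal.ofReal (1 - lam) • ν' a + ENNReal.ofReal lam • ν a)
            ∈ Conf D Pset ν pstar ∧
          ∀ a, KL (ν a) (ENNReal.ofReal (1 - lam) • ν' a + ENNReal.ofReal lam • ν a)
            ≤ ENNReal.ofReal (Real.log (1 / lam))) := by
  have key : ∀ ν' ∈ Conf D Pset ν pstar, ∃ lam₀ ∈ Set.Ioo (0 : ℝ) 1,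
      ∀ lam ∈ Set.Ioo (0 : ℝ) lam₀,
        (fun a => ENNReal.ofReal (1 - lam) • ν' a + ENNReal.ofReal lam • ν a)
            ∈ Conf D Pset ν pstar ∧
          ∀ a, KL (ν a) (ENNReal.ofReal (1 - lam) • ν' a + ENNReal.ofReal lam • ν a)
            ≤ ENNReal.ofReal (Real.log (1 / lam)) := by
    rintro ν' ⟨hD', hnot, hag⟩
    have hmem : pstar ∈ Pset := by
      have h : pstar ∈ Opt Pset ν := by rw [hstar]; rfl
      exact h.1
    obtain ⟨q, hq, hlt⟩ : ∃ q ∈ Pset, dot pstar (armMean ν') < dot q (armMean ν') := by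
      by_contra! h
      exact hnot ⟨hmem, h⟩
    -- `A > 0` and `B` are the advantages of `q` over `p★` under `ν'` and `ν`; the advantage
    -- under the mixture is `(1 - λ) A + λ B ≥ A - λ (A + |B|)`.
    set A := dot q (armMean ν') - dot pstar (armMean ν') with hA
    set B := dot q (armMean ν) - dot pstar (armMean ν) with hB
    have hApos : 0 < A := by linarith
    have hden : 0 < A + |B| + 1 := by positivity
    refine ⟨A / (A + |B| + 1), ⟨by positivity, ?_⟩, ?_⟩
    · rw [div_lt_one hden]
      linarith [abs_nonneg B]
    rintro l ⟨hl0, hl⟩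
    have hl1 : l ≤ 1 := by
      refine hl.le.trans ?_
      rw [div_le_one hden]
      linarith [abs_nonneg B]
    rw [lt_div_iff₀ hden] at hl
    refine ⟨⟨fun a => hconv _ (hD' a) _ (hν a) l ⟨hl0.le, hl1⟩, fun hopt => ?_, fun a => ?_⟩,
      fun a => ?_⟩
    · have h := hopt.2 q hq
      rw [dot_armMean_mix (fun a => hDmom _ (hν a)) (fun a => hDmom _ (hD' a)) _ hl0.le hl1,
        dot_armMean_mix (fun a => hDmom _ (hν a)) (fun a => hDmom _ (hD' a)) _ hl0.le hl1] at h
      have h' : (1 - l) * A + l * B ≤ 0 := by rw [hA, hB]; linarith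
      nlinarith [mul_le_mul_of_nonneg_left (neg_abs_le B) hl0.le]
    · refine (hag a).imp id fun h => ?_
      simp only [← h]
      exact (mix_self _ hl0.le hl1).symm
    · have := hDprob _ (hν a)
      have := hDprob _ (hD' a)
      exact KL_mix_le hl0
  refine ⟨?_, key⟩
  rintro ⟨ν', hν'⟩
  obtain ⟨l₀, hl₀, h⟩ := key ν' hν'
  obtain ⟨hc, hk⟩ := h (l₀ / 2) ⟨half_pos hl₀.1, half_lt_self hl₀.1⟩
  exact ⟨_, hc, fun a => (hk a).trans_lt ENNReal.ofReal_lt_top⟩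

end DivBanditLB
end
end
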